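/- arXiv:math/0205040 — 6 statements merged into one kernel-verified Lean document; each statement's English description precedes it below -/
import Mathlib

section
/- The four elements P₁, P₂, P₃, P₄ form a basis of the third term of the lower central series of B(4,3): the subgroup of B(4,3) generated by {P₁, P₂, P₃, P₄} equals γ₃(B(4,3)), and γ₃(B(4,3)) has exactly 3⁴ = 81 elements. -/
/-- The free Burnside group `B(4,3)` of exponent 3 on four generators:
the free group on four generators modulo the normal closure of all cubes. -/
abbrev B43 : Type :=
  FreeGroup (Fin 4) ⧸ Subgroup.normalClosure {w : FreeGroup (Fin 4) | ∃ v, w = v ^ 3}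

/-- The images `x₁, x₂, x₃, x₄` of the free generators in `B(4,3)`. -/
def x (i : Fin 4) : B43 := QuotientGroup.mk (FreeGroup.of i)

/-- The elements `P_i` of `B(4,3)`:
`P_i = x₁x₂⁻¹x₃x₄⁻¹x₁⁻¹x₂x₃⁻¹x₄ · x_i · x₄x₃⁻¹x₂x₁⁻¹x₄⁻¹x₃x₂⁻¹x₁ · x_i⁻¹`. -/
def P (i : Fin 4) : B43 :=
  x 0 * (x 1)⁻¹ * x 2 * (x 3)⁻¹ * (x 0)⁻¹ * x 1 * (x 2)⁻¹ * x 3 * x i *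
    (x 3 * (x 2)⁻¹ * x 1 * (x 0)⁻¹ * (x 3)⁻¹ * x 2 * (x 1)⁻¹ * x 0) * (x i)⁻¹


section Exp3
variable {G : Type*} [Group G]

open scoped commutatorElement

/-- In exponent 3, elements commute with their conjugates. -/
theorem exp3_conj_comm (h : ∀ g : G, g ^ 3 = 1) (a b : G) :
    a * (b * a * b⁻¹) = (b * a * b⁻¹) * a := by
  have key : ∀ c : G, a * (c * a * c⁻¹) * (c⁻¹ * a * c) = 1 := by
    intro c
    have h1 := h (a * c)
    have h2 : c⁻¹ * c⁻¹ = c := by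
      have := h c
      rw [← mul_right_inj (c * c)]
      simpa [pow_succ, mul_assoc] using this.symm
    calc a * (c * a * c⁻¹) * (c⁻¹ * a * c) = a * c * a * (c⁻¹ * c⁻¹) * a * c := by group
      _ = (a * c) ^ 3 := by rw [h2]; simp only [pow_succ, pow_zero, one_mul, mul_assoc]
      _ = 1 := h1
  have k1 := key b
  have k2 := key b⁻¹
  rw [inv_inv] at k2
  generalize b * a * b⁻¹ = p at *
  generalize b⁻¹ * a * b = q at *
  have e1 : q * (a * p) = 1 := by
    rw [mul_eq_one_iff_eq_inv] at k1
    rw [k1]; simp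
  have e2 : q * (p * a) = 1 := by
    have : a = (q * p)⁻¹ := by rw [mul_assoc] at k2; exact eq_inv_of_mul_eq_one_left k2
    rw [this]; group
  exact mul_left_cancel (e1.trans e2.symm)

theorem exp3_engel (h : ∀ g : G, g ^ 3 = 1) (m y : G) : ⁅⁅m, y⁆, y⁆ = 1 := by
  rw [commutatorElement_eq_one_iff_mul_comm, commutatorElement_def]
  have := exp3_conj_comm h y m
  calc m * y * m⁻¹ * y⁻¹ * y = (m * y * m⁻¹) * y * y⁻¹ := by group
    _ = (y * (m * y * m⁻¹)) * y⁻¹ := by rw [this]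
    _ = y * (m * y * m⁻¹ * y⁻¹) := by group

theorem ring_anti {R : Type*} [Ring R] (Y Z : R) (hY : Y * Y = 0) (hZ : Z * Z = 0)
    (h : (Y + Z - Y * Z) * (Y + Z - Y * Z) = 0) : Z * Y + Y * Z = 0 := by
  have e : (Y + Z - Y * Z) * (Y + Z - Y * Z)
      = Y * Y + Z * Z + Y * Z + Z * Y - (Y * Y) * Z - Z * Y * Z - Y * Z * Y - Y * (Z * Z)
        + Y * Z * Y * Z := by noncomm_ring
  rw [e, hY, hZ] at h
  have h1 : Y * Z + Z * Y - Z * Y * Z - Y * Z * Y + Y * Z * Y * Z = 0 := by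
    simpa using h
  have h2 : Y * Z * Y * Z = 0 := by
    have : Y * (Y * Z + Z * Y - Z * Y * Z - Y * Z * Y + Y * Z * Y * Z) * Z = 0 := by
      rw [h1]; simp
    have e2 : Y * (Y * Z + Z * Y - Z * Y * Z - Y * Z * Y + Y * Z * Y * Z) * Z
      = (Y * Y) * Z * Z + Y * Z * Y * Z - Y * Z * Y * (Z * Z) - (Y * Y) * Z * Y * Z
        + (Y * Y) * Z * Y * Z * Z := by noncomm_ring
    rw [e2, hY, hZ] at this
    simpa using this
  have h3 : Z * Y * Z = 0 := by
    have : (Y * Z + Z * Y - Z * Y * Z - Y * Z * Y + Y * Z * Y * Z) * Z = 0 := by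
      rw [h1]; simp
    have e2 : (Y * Z + Z * Y - Z * Y * Z - Y * Z * Y + Y * Z * Y * Z) * Z
      = Y * (Z * Z) + Z * Y * Z - Z * Y * (Z * Z) - Y * Z * Y * Z + Y * Z * Y * (Z * Z) := by
      noncomm_ring
    rw [e2, hZ, h2] at this
    simpa using this
  have h4 : Y * Z * Y = 0 := by
    have : Y * (Y * Z + Z * Y - Z * Y * Z - Y * Z * Y + Y * Z * Y * Z) = 0 := by
      rw [h1]; simp
    have e2 : Y * (Y * Z + Z * Y - Z * Y * Z - Y * Z * Y + Y * Z * Y * Z)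
      = (Y * Y) * Z + Y * Z * Y - Y * Z * Y * Z - (Y * Y) * Z * Y + (Y * Y) * Z * Y * Z := by
      noncomm_ring
    rw [e2, hY, h2] at this
    simpa using this
  rw [h2, h3, h4] at h1
  rw [add_comm]
  simpa using h1

/-- The conjugation action on an abelian normal subgroup, as additive endomorphisms. -/
def conjEnd (A : Subgroup G) [A.Normal] (y : G) : Additive A →+ Additive A :=
  (MulAut.conjNormal y : MulAut A).toMonoidHom.toAdditive

theorem exp3_normalClosure_comm (h : ∀ g : G, g ^ 3 = 1) (x : G) :
    ∀ a ∈ Subgroup.normalClosure ({x} : Set G), ∀ b ∈ Subgroup.normalClosure ({x} : Set G),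
      a * b = b * a := by
  have hc : Subgroup.normalClosure ({x} : Set G) ≤
      Subgroup.centralizer (Group.conjugatesOfSet ({x} : Set G)) := by
    unfold Subgroup.normalClosure
    rw [Subgroup.closure_le]
    intro a ha
    rw [SetLike.mem_coe, Subgroup.mem_centralizer_iff]
    intro b hb
    simp only [Group.mem_conjugatesOfSet_iff, Set.mem_singleton_iff, exists_eq_left,
      isConj_iff] at ha hb
    obtain ⟨c, rfl⟩ := ha
    obtain ⟨d, rfl⟩ := hb
    have := exp3_conj_comm h (d * x * d⁻¹) (c * d⁻¹)
    have e : c * d⁻¹ * (d * x * d⁻¹) * (c * d⁻¹)⁻¹ = c * x * c⁻¹ := by group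
    rwa [e] at this
  intro a ha b hb
  have h2 : Subgroup.normalClosure ({x} : Set G) ≤ Subgroup.centralizer {a} := by
    have := hc ha
    rw [Subgroup.mem_centralizer_iff] at this
    unfold Subgroup.normalClosure
    rw [Subgroup.closure_le]
    intro b hb
    rw [SetLike.mem_coe, Subgroup.mem_centralizer_iff]
    rintro _ rfl
    exact (this b hb).symm
  exact Subgroup.mem_centralizer_iff.1 (h2 hb) a rfl

theorem exp3_swap (h : ∀ g : G, g ^ 3 = 1) (x y z : G) : ⁅⁅x, y⁆, z⁆ * ⁅⁅x, z⁆, y⁆ = 1 := by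
  let A := Subgroup.normalClosure ({x} : Set G)
  let _ : CommGroup A :=
    { (inferInstance : Group A) with
      mul_comm := fun a b => Subtype.ext (exp3_normalClosure_comm h x a a.2 b b.2) }
  let ρ : G → AddMonoid.End (Additive A) := fun y => conjEnd A y
  have hρ : ∀ y z, ρ (y * z) = ρ y * ρ z := by
    intro y z
    apply AddMonoidHom.ext; intro m
    apply Additive.toMul.injective; apply Subtype.ext
    change y * z * (m.toMul : G) * (y * z)⁻¹ = y * (z * (m.toMul : G) * z⁻¹) * y⁻¹
    group
  have hval : ∀ (y : G) (m : Additive A),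
      (((1 - ρ y) m).toMul : G) = ⁅(m.toMul : G), y⁆ := by
    intro y m
    have : (1 - ρ y) m = m - ρ y m := rfl
    rw [this]
    have e2 : ((ρ y m).toMul : G) = y * (m.toMul : G) * y⁻¹ := rfl
    rw [toMul_sub, div_eq_mul_inv, Subgroup.coe_mul, Subgroup.coe_inv, e2, commutatorElement_def]
    group
  have hsq : ∀ y, (1 - ρ y) * (1 - ρ y) = 0 := by
    intro y
    ext m
    have : (((1 - ρ y) ((1 - ρ y) m)).toMul : G) = 1 := by
      rw [hval, hval, exp3_engel h]
    exact this
  have key := ring_anti (1 - ρ y) (1 - ρ z) (hsq y) (hsq z) (by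
    have : (1 - ρ y) + (1 - ρ z) - (1 - ρ y) * (1 - ρ z) = 1 - ρ (y * z) := by
      rw [hρ, sub_mul, mul_sub, mul_sub]; simp only [one_mul, mul_one]; abel
    rw [this]; exact hsq _)
  let m : Additive A := Additive.ofMul ⟨x, Subgroup.subset_normalClosure rfl⟩
  have k2 : (1 - ρ z) ((1 - ρ y) m) + (1 - ρ y) ((1 - ρ z) m) = 0 := DFunLike.congr_fun key m
  have k3 : ((((1 - ρ z) ((1 - ρ y) m)).toMul : G)) * (((1 - ρ y) ((1 - ρ z) m)).toMul : G) = 1 :=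
    congrArg (fun q : Additive A => (q.toMul : G)) k2
  rw [hval, hval, hval, hval] at k3
  exact k3

theorem exp3_inv (h : ∀ g : G, g ^ 3 = 1) (u z : G) : ⁅u⁻¹, z⁆ = ⁅u, z⁆⁻¹ := by
  have e : ⁅⁅z, u⁆, u⁆ = 1 := exp3_engel h z u
  rw [commutatorElement_eq_one_iff_mul_comm] at e
  have e2 : ⁅u, z⁆ = ⁅z, u⁆⁻¹ := (commutatorElement_inv z u).symm
  have e3 : ⁅u⁻¹, z⁆ = u⁻¹ * ⁅z, u⁆ * u := by rw [commutatorElement_def, commutatorElement_def]; group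
  rw [e2, inv_inv, e3, mul_assoc, e, inv_mul_cancel_left]

theorem exp3_s12 (h : ∀ g : G, g ^ 3 = 1) (a b c : G) : ⁅⁅b, a⁆, c⁆ = ⁅⁅a, b⁆, c⁆⁻¹ := by
  rw [← commutatorElement_inv a b, exp3_inv h]

theorem exp3_s23 (h : ∀ g : G, g ^ 3 = 1) (a b c : G) : ⁅⁅a, c⁆, b⁆ = ⁅⁅a, b⁆, c⁆⁻¹ :=
  eq_inv_of_mul_eq_one_right (exp3_swap h a b c)

theorem exp3_cyc (h : ∀ g : G, g ^ 3 = 1) (a b c : G) : ⁅⁅a, b⁆, c⁆ = ⁅⁅b, c⁆, a⁆ := by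
  rw [exp3_s23 h b a c, exp3_s12 h a b c, inv_inv]

theorem exp3_class (h : ∀ g : G, g ^ 3 = 1) (x y z t : G) : ⁅⁅⁅x, y⁆, z⁆, t⁆ = 1 := by
  have e1 : ⁅⁅⁅x, y⁆, z⁆, t⁆ = ⁅⁅⁅z, t⁆, x⁆, y⁆ := by
    rw [exp3_cyc h x y z, exp3_cyc h y z x, exp3_s23 h ⁅z, x⁆ t y, exp3_s23 h z t x, exp3_inv h,
      inv_inv]
  have e2 : ⁅⁅⁅x, y⁆, z⁆, t⁆ = ⁅⁅z, t⁆, ⁅x, y⁆⁆ := exp3_cyc h _ _ _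
  have e3 : ⁅⁅⁅z, t⁆, x⁆, y⁆ = ⁅⁅x, y⁆, ⁅z, t⁆⁆ := exp3_cyc h _ _ _
  have e4 : ⁅⁅x, y⁆, ⁅z, t⁆⁆ = ⁅⁅z, t⁆, ⁅x, y⁆⁆⁻¹ := (commutatorElement_inv _ _).symm
  rw [e4, ← e2] at e3
  rw [e3] at e1
  generalize ⁅⁅⁅x, y⁆, z⁆, t⁆ = F at e1
  have := h F
  have hF : F * F = 1 := by
    nth_rewrite 1 [e1]; simp
  rwa [pow_succ, pow_two, hF, one_mul] at this

/-- A normal subgroup containing all weight three commutators in a generating set contains `γ₃`. -/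
theorem gamma3_le_of_gens (S : Set G) (hS : Subgroup.closure S = ⊤) (K : Subgroup G) [K.Normal]
    (hK : ∀ a ∈ S, ∀ b ∈ S, ∀ c ∈ S, ⁅⁅a, b⁆, c⁆ ∈ K) :
    ⁅⁅(⊤ : Subgroup G), (⊤ : Subgroup G)⁆, (⊤ : Subgroup G)⁆ ≤ K := by
  let π := QuotientGroup.mk' K
  have hπ : ∀ g, π g = 1 ↔ g ∈ K := fun g => QuotientGroup.eq_one_iff g
  have s1 : ∀ a ∈ S, ∀ b ∈ S, ∀ c, ⁅⁅a, b⁆, c⁆ ∈ K := by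
    intro a ha b hb c
    have hc : c ∈ Subgroup.closure S := hS ▸ Subgroup.mem_top c
    have : Subgroup.closure S ≤ (Subgroup.centralizer {π ⁅a, b⁆}).comap π := by
      rw [Subgroup.closure_le]
      intro c hc
      rw [SetLike.mem_coe, Subgroup.mem_comap, Subgroup.mem_centralizer_iff]
      rintro _ rfl
      rw [← commutatorElement_eq_one_iff_mul_comm, ← map_commutatorElement, hπ]
      exact hK a ha b hb c hc
    have := this hc
    rw [Subgroup.mem_comap, Subgroup.mem_centralizer_iff] at this
    rw [← hπ, map_commutatorElement, commutatorElement_eq_one_iff_mul_comm]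
    exact this _ rfl
  -- second step: work modulo the preimage of the centre
  let Z := (Subgroup.center (G ⧸ K)).comap π
  have hZ : ∀ g, g ∈ Z ↔ ∀ c, ⁅g, c⁆ ∈ K := by
    intro g
    rw [Subgroup.mem_comap, Subgroup.mem_center_iff]
    constructor
    · intro hg c
      rw [← hπ, map_commutatorElement, commutatorElement_eq_one_iff_mul_comm]
      exact (hg _).symm
    · intro hg q
      obtain ⟨c, rfl⟩ := QuotientGroup.mk'_surjective K q
      have := hg c
      rw [← hπ, map_commutatorElement, commutatorElement_eq_one_iff_mul_comm] at this
      exact this.symm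
  have : Z.Normal := Subgroup.Normal.comap inferInstance π
  let σ := QuotientGroup.mk' Z
  have hσ : ∀ g, σ g = 1 ↔ g ∈ Z := fun g => QuotientGroup.eq_one_iff g
  have s2 : ∀ a ∈ S, ∀ b, ⁅a, b⁆ ∈ Z := by
    intro a ha b
    have hb : b ∈ Subgroup.closure S := hS ▸ Subgroup.mem_top b
    have : Subgroup.closure S ≤ (Subgroup.centralizer {σ a}).comap σ := by
      rw [Subgroup.closure_le]
      intro c hc
      rw [SetLike.mem_coe, Subgroup.mem_comap, Subgroup.mem_centralizer_iff]
      rintro _ rfl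
      rw [← commutatorElement_eq_one_iff_mul_comm, ← map_commutatorElement, hσ, hZ]
      exact s1 a ha c hc
    have := this hb
    rw [Subgroup.mem_comap, Subgroup.mem_centralizer_iff] at this
    rw [← hσ, map_commutatorElement, commutatorElement_eq_one_iff_mul_comm]
    exact this _ rfl
  have s3 : ∀ a b : G, ⁅a, b⁆ ∈ Z := by
    intro a b
    have ha : a ∈ Subgroup.closure S := hS ▸ Subgroup.mem_top a
    have : Subgroup.closure S ≤ (Subgroup.centralizer {σ b}).comap σ := by
      rw [Subgroup.closure_le]
      intro c hc
      rw [SetLike.mem_coe, Subgroup.mem_comap, Subgroup.mem_centralizer_iff]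
      rintro _ rfl
      have := s2 c hc b
      rw [← hσ, map_commutatorElement, commutatorElement_eq_one_iff_mul_comm] at this
      exact this.symm
    have := this ha
    rw [Subgroup.mem_comap, Subgroup.mem_centralizer_iff] at this
    rw [← hσ, map_commutatorElement, commutatorElement_eq_one_iff_mul_comm]
    exact (this _ rfl).symm
  have s4 : ⁅(⊤ : Subgroup G), (⊤ : Subgroup G)⁆ ≤ Z :=
    Subgroup.commutator_le.2 fun a _ b _ => s3 a b
  exact Subgroup.commutator_le.2 fun g hg c _ => (hZ g).1 (s4 hg) c

end Exp3

/-- A concrete model of `B(3,3)`. -/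
@[ext] structure BM where
  a : ZMod 3
  b : ZMod 3
  c : ZMod 3
  d : ZMod 3
  e : ZMod 3
  f : ZMod 3
  t : ZMod 3

namespace BM

instance : DecidableEq BM := fun _ _ => decidable_of_iff _ BM.ext_iff.symm

instance : Mul BM := ⟨fun p q =>
  ⟨p.a + q.a, p.b + q.b, p.c + q.c, p.d + q.d + p.b * q.a, p.e + q.e + p.c * q.a,
    p.f + q.f + p.c * q.b,
    p.t + q.t + p.f * q.a - p.e * q.b + p.d * q.c - p.c * q.a * q.b + p.b * q.a * (p.c + q.c)⟩⟩

instance : One BM := ⟨⟨0, 0, 0, 0, 0, 0, 0⟩⟩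

instance : Inv BM := ⟨fun p => p * p⟩

theorem mul_def (p q : BM) : p * q = ⟨p.a + q.a, p.b + q.b, p.c + q.c, p.d + q.d + p.b * q.a,
    p.e + q.e + p.c * q.a, p.f + q.f + p.c * q.b,
    p.t + q.t + p.f * q.a - p.e * q.b + p.d * q.c - p.c * q.a * q.b
      + p.b * q.a * (p.c + q.c)⟩ := rfl

theorem one_def : (1 : BM) = ⟨0, 0, 0, 0, 0, 0, 0⟩ := rfl

theorem inv_def (p : BM) : p⁻¹ = p * p := rfl

theorem three : (3 : ZMod 3) = 0 := rfl

instance : Group BM := Group.ofLeftAxioms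
  (by intro p q r; simp only [mul_def]; ext <;> simp only
      iterate 6 ring
      linear_combination (q.b * p.c * r.a) * three)
  (by intro p; simp only [mul_def, one_def]; ext <;> simp)
  (by
    intro p; simp only [inv_def, mul_def, one_def]
    ext <;> simp only <;> ring_nf <;> reduce_mod_char)

theorem cube (p : BM) : p ^ 3 = 1 := by
  have : p⁻¹ * p = 1 := inv_mul_cancel p
  rw [pow_succ, pow_two]
  exact this

end BM

section Main
open scoped commutatorElement

theorem B43_cube (g : B43) : g ^ 3 = 1 := by
  obtain ⟨w, rfl⟩ := QuotientGroup.mk_surjective g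
  rw [← QuotientGroup.mk_pow, QuotientGroup.eq_one_iff]
  exact Subgroup.subset_normalClosure ⟨w, rfl⟩

theorem B43_gen : Subgroup.closure (Set.range x) = ⊤ := by
  have h1 : Set.range x = QuotientGroup.mk' (Subgroup.normalClosure
      {w : FreeGroup (Fin 4) | ∃ v, w = v ^ 3}) '' Set.range FreeGroup.of := by
    rw [← Set.range_comp]; rfl
  rw [h1, ← MonoidHom.map_closure, FreeGroup.closure_range_of, ← MonoidHom.range_eq_map,
    MonoidHom.range_eq_top]
  exact QuotientGroup.mk'_surjective _

/-- Homomorphisms from `B(4,3)` to the model. -/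
def toBM (v : Fin 4 → BM) : B43 →* BM :=
  QuotientGroup.lift _ (FreeGroup.lift v) (by
    intro g hg
    have : Subgroup.normalClosure {w : FreeGroup (Fin 4) | ∃ v, w = v ^ 3}
        ≤ (FreeGroup.lift v).ker := by
      apply Subgroup.normalClosure_le_normal
      rintro _ ⟨w, rfl⟩
      simp [MonoidHom.mem_ker, BM.cube]
    exact this hg)

theorem toBM_x (v : Fin 4 → BM) (i : Fin 4) : toBM v (x i) = v i := by
  simp [toBM, x]

def X1 : BM := ⟨1, 0, 0, 0, 0, 0, 0⟩
def X2 : BM := ⟨0, 1, 0, 0, 0, 0, 0⟩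
def X3 : BM := ⟨0, 0, 1, 0, 0, 0, 0⟩

/-- The four coordinate assignments, killing one generator each. -/
def vv : Fin 4 → Fin 4 → BM :=
  ![![1, X1, X2, X3], ![X1, 1, X2, X3], ![X1, X2, 1, X3], ![X1, X2, X3, 1]]

/-- The word `P_i` evaluated in the model. -/
def PM (v : Fin 4 → BM) (i : Fin 4) : BM :=
  v 0 * (v 1)⁻¹ * v 2 * (v 3)⁻¹ * (v 0)⁻¹ * v 1 * (v 2)⁻¹ * v 3 * v i *
    (v 3 * (v 2)⁻¹ * v 1 * (v 0)⁻¹ * (v 3)⁻¹ * v 2 * (v 1)⁻¹ * v 0) * (v i)⁻¹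

theorem toBM_P (v : Fin 4 → BM) (i : Fin 4) : toBM v (P i) = PM v i := by
  simp only [P, PM, map_mul, map_inv, toBM_x]

theorem gamma3_def (a b c : B43) :
    ⁅⁅a, b⁆, c⁆ ∈ Subgroup.lowerCentralSeries (⊤ : Subgroup B43) 2 := by
  have h1 : ⁅a, b⁆ ∈ Subgroup.lowerCentralSeries (⊤ : Subgroup B43) 1 :=
    Subgroup.commutator_mem_commutator (Subgroup.mem_top a) (Subgroup.mem_top b)
  exact Subgroup.commutator_mem_commutator h1 (Subgroup.mem_top c)

theorem gamma3_eq : Subgroup.lowerCentralSeries (⊤ : Subgroup B43) 2 =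
    ⁅⁅(⊤ : Subgroup B43), (⊤ : Subgroup B43)⁆, (⊤ : Subgroup B43)⁆ := rfl

theorem comm_word {H : Type*} [CommGroup H] (a b c d : H) :
    (a * b⁻¹ * c * d⁻¹) * (a⁻¹ * b * c⁻¹ * d) = 1 := by
  have : a⁻¹ * b * c⁻¹ * d = (a * b⁻¹ * c * d⁻¹)⁻¹ := by
    simp only [mul_inv, inv_inv]
  rw [this, mul_inv_cancel]

theorem P_mem (i : Fin 4) : P i ∈ Subgroup.lowerCentralSeries (⊤ : Subgroup B43) 2 := by
  rw [gamma3_eq]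
  set w : B43 := x 0 * (x 1)⁻¹ * x 2 * (x 3)⁻¹ with hw
  set v : B43 := (x 0)⁻¹ * x 1 * (x 2)⁻¹ * x 3 with hv
  have hA : w * v ∈ ⁅(⊤ : Subgroup B43), (⊤ : Subgroup B43)⁆ := by
    rw [← commutator_def, ← Abelianization.ker_of, MonoidHom.mem_ker, hw, hv]
    simp only [map_mul, map_inv]
    exact comm_word _ _ _ _
  have h1 : ⁅w * v, v⁆ ∈ ⁅⁅(⊤ : Subgroup B43), (⊤ : Subgroup B43)⁆, (⊤ : Subgroup B43)⁆ :=
    Subgroup.commutator_mem_commutator hA (Subgroup.mem_top _)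
  have hB : (w⁻¹ * v⁻¹)⁻¹ ∈ ⁅(⊤ : Subgroup B43), (⊤ : Subgroup B43)⁆ := by
    have e : (w⁻¹ * v⁻¹)⁻¹ = ⁅v, w⁆ * (w * v) := by rw [commutatorElement_def]; group
    rw [e]
    exact mul_mem (Subgroup.commutator_mem_commutator (Subgroup.mem_top _) (Subgroup.mem_top _)) hA
  have h2 : ⁅(w⁻¹ * v⁻¹)⁻¹, x i⁆ ∈
      ⁅⁅(⊤ : Subgroup B43), (⊤ : Subgroup B43)⁆, (⊤ : Subgroup B43)⁆ :=
    Subgroup.commutator_mem_commutator hB (Subgroup.mem_top _)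
  have e : P i = ⁅w * v, v⁆ * ⁅(w⁻¹ * v⁻¹)⁻¹, x i⁆ := by
    have e1 : P i = w * v * x i * (w⁻¹ * v⁻¹) * (x i)⁻¹ := by
      simp only [P, hw, hv, mul_inv_rev, inv_inv, mul_assoc]
    rw [e1, commutatorElement_def, commutatorElement_def]; group
  rw [e]
  exact mul_mem h1 h2

/-- Four central elements of order dividing three. -/
theorem closure_four {G : Type*} [Group G] (h : ∀ g : G, g ^ 3 = 1) (t : Fin 4 → Subgroup.center G)
    (g : G) (hg : g ∈ Subgroup.closure (Set.range fun i => (t i : G))) :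
    ∃ a : Fin 4 → Fin 3, g = ((t 0 ^ (a 0 : ℕ) * t 1 ^ (a 1 : ℕ) * (t 2 ^ (a 2 : ℕ) *
      t 3 ^ (a 3 : ℕ)) : Subgroup.center G) : G) := by
  let _ : CommGroup (Subgroup.center G) :=
    { (inferInstance : Group (Subgroup.center G)) with
      mul_comm := fun a b => Subtype.ext (Subgroup.mem_center_iff.1 b.2 a) }
  have h' : ∀ z : Subgroup.center G, z ^ 3 = 1 := fun z => Subtype.ext (by simpa using h z)
  have main : ∃ a b c d : ℕ, g = ((t 0 ^ a * t 1 ^ b * (t 2 ^ c * t 3 ^ d) :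
      Subgroup.center G) : G) := by
    induction hg using Subgroup.closure_induction with
    | mem y hy =>
      obtain ⟨i, rfl⟩ := hy
      fin_cases i
      · exact ⟨1, 0, 0, 0, by simp⟩
      · exact ⟨0, 1, 0, 0, by simp⟩
      · exact ⟨0, 0, 1, 0, by simp⟩
      · exact ⟨0, 0, 0, 1, by simp⟩
    | one => exact ⟨0, 0, 0, 0, by simp⟩
    | mul p q _ _ hp hq =>
      obtain ⟨a, b, c, d, rfl⟩ := hp
      obtain ⟨a', b', c', d', rfl⟩ := hq
      refine ⟨a + a', b + b', c + c', d + d', ?_⟩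
      rw [← Subgroup.coe_mul]
      congr 1
      rw [pow_add, pow_add, pow_add, pow_add, mul_mul_mul_comm (t 0 ^ a) (t 0 ^ a'),
        mul_mul_mul_comm (t 2 ^ c) (t 2 ^ c'), mul_mul_mul_comm (t 0 ^ a * t 1 ^ b)]
    | inv p _ hp =>
      obtain ⟨a, b, c, d, rfl⟩ := hp
      refine ⟨a * 2, b * 2, c * 2, d * 2, ?_⟩
      rw [← Subgroup.coe_inv]
      congr 1
      have : ∀ z : Subgroup.center G, z⁻¹ = z ^ 2 := fun z => by
        rw [inv_eq_iff_mul_eq_one, ← pow_succ']; exact h' z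
      rw [this]
      simp only [mul_pow, pow_mul]
  obtain ⟨a, b, c, d, rfl⟩ := main
  refine ⟨![⟨a % 3, Nat.mod_lt _ (by norm_num)⟩, ⟨b % 3, Nat.mod_lt _ (by norm_num)⟩,
    ⟨c % 3, Nat.mod_lt _ (by norm_num)⟩, ⟨d % 3, Nat.mod_lt _ (by norm_num)⟩], ?_⟩
  congr 1
  simp only [Matrix.cons_val]
  rw [← pow_eq_pow_mod a (h' _), ← pow_eq_pow_mod b (h' _), ← pow_eq_pow_mod c (h' _),
    ← pow_eq_pow_mod d (h' _)]

theorem tri_central (a b c : B43) : ⁅⁅a, b⁆, c⁆ ∈ Subgroup.center B43 := by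
  rw [Subgroup.mem_center_iff]
  intro g
  have := exp3_class B43_cube a b c g
  rw [commutatorElement_eq_one_iff_mul_comm] at this
  exact this.symm

/-- The four basic triple commutators. -/
def tri : Fin 4 → Subgroup.center B43 :=
  ![⟨⁅⁅x 1, x 2⁆, x 3⁆, tri_central _ _ _⟩, ⟨⁅⁅x 0, x 2⁆, x 3⁆, tri_central _ _ _⟩,
    ⟨⁅⁅x 0, x 1⁆, x 3⁆, tri_central _ _ _⟩, ⟨⁅⁅x 0, x 1⁆, x 2⁆, tri_central _ _ _⟩]

theorem comb_lemma (p : Fin 4 → Fin 4 → Fin 4 → Prop)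
    (hs : ∀ i j k, p i j k → p j i k) (hc : ∀ i j k, p i j k → p j k i) (r : ∀ i j, p i j j)
    (g0 : p 1 2 3) (g1 : p 0 2 3) (g2 : p 0 1 3) (g3 : p 0 1 2) (i j k : Fin 4) : p i j k := by
  have sorted : ∀ i j k : Fin 4, i < j → j < k → p i j k := by
    intro i j k hij hjk
    have : (i = 1 ∧ j = 2 ∧ k = 3) ∨ (i = 0 ∧ j = 2 ∧ k = 3) ∨ (i = 0 ∧ j = 1 ∧ k = 3) ∨
        (i = 0 ∧ j = 1 ∧ k = 2) := by omega
    rcases this with ⟨rfl, rfl, rfl⟩ | ⟨rfl, rfl, rfl⟩ | ⟨rfl, rfl, rfl⟩ | ⟨rfl, rfl, rfl⟩ <;>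
      assumption
  rcases lt_trichotomy i j with h1 | rfl | h1
  · rcases lt_trichotomy j k with h2 | rfl | h2
    · exact sorted _ _ _ h1 h2
    · exact r _ _
    · rcases lt_trichotomy i k with h3 | rfl | h3
      · exact hc _ _ _ (hs _ _ _ (sorted _ _ _ h3 h2))
      · exact hs _ _ _ (r _ _)
      · exact hc _ _ _ (sorted _ _ _ h3 h1)
  · exact hc _ _ _ (r k i)
  · rcases lt_trichotomy j k with h2 | rfl | h2
    · rcases lt_trichotomy i k with h3 | rfl | h3
      · exact hs _ _ _ (sorted _ _ _ h1 h3)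
      · exact hs _ _ _ (r _ _)
      · exact hc _ _ _ (hc _ _ _ (sorted _ _ _ h2 h3))
    · exact r _ _
    · exact hs _ _ _ (hc _ _ _ (sorted _ _ _ h2 h1))

theorem tri_mem (i j k : Fin 4) :
    ⁅⁅x i, x j⁆, x k⁆ ∈ Subgroup.closure (Set.range fun i => (tri i : B43)) := by
  set K := Subgroup.closure (Set.range fun i => (tri i : B43)) with hK
  have g0 : ⁅⁅x 1, x 2⁆, x 3⁆ ∈ K := Subgroup.subset_closure ⟨0, rfl⟩
  have g1 : ⁅⁅x 0, x 2⁆, x 3⁆ ∈ K := Subgroup.subset_closure ⟨1, rfl⟩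
  have g2 : ⁅⁅x 0, x 1⁆, x 3⁆ ∈ K := Subgroup.subset_closure ⟨2, rfl⟩
  have g3 : ⁅⁅x 0, x 1⁆, x 2⁆ ∈ K := Subgroup.subset_closure ⟨3, rfl⟩
  have hs : ∀ i j k, ⁅⁅x i, x j⁆, x k⁆ ∈ K → ⁅⁅x j, x i⁆, x k⁆ ∈ K := by
    intro i j k h
    rw [exp3_s12 B43_cube (x i)]
    exact inv_mem h
  have hc : ∀ i j k, ⁅⁅x i, x j⁆, x k⁆ ∈ K → ⁅⁅x j, x k⁆, x i⁆ ∈ K := by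
    intro i j k h
    rwa [← exp3_cyc B43_cube (x i)]
  have r2 : ∀ i j, ⁅⁅x i, x j⁆, x j⁆ ∈ K := by
    intro i j
    rw [exp3_engel B43_cube]
    exact one_mem K
  exact comb_lemma (fun i j k => ⁅⁅x i, x j⁆, x k⁆ ∈ K) hs hc r2 g0 g1 g2 g3 i j k

theorem gamma3_le :
    Subgroup.lowerCentralSeries (⊤ : Subgroup B43) 2 ≤
      Subgroup.closure (Set.range fun i => (tri i : B43)) := by
  have hle : Subgroup.closure (Set.range fun i => (tri i : B43)) ≤ Subgroup.center B43 := by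
    rw [Subgroup.closure_le]
    rintro _ ⟨i, rfl⟩
    exact (tri i).2
  have : (Subgroup.closure (Set.range fun i => (tri i : B43))).Normal := by
    refine ⟨fun n hn g => ?_⟩
    rw [Subgroup.mem_center_iff.1 (hle hn) g, mul_inv_cancel_right]
    exact hn
  rw [gamma3_eq]
  apply gamma3_le_of_gens (Set.range x) B43_gen
  rintro _ ⟨i, rfl⟩ _ ⟨j, rfl⟩ _ ⟨k, rfl⟩
  exact tri_mem i j k

theorem gamma3_card_le :
    Finite (Subgroup.lowerCentralSeries (⊤ : Subgroup B43) 2) ∧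
    Nat.card (Subgroup.lowerCentralSeries (⊤ : Subgroup B43) 2) ≤ 81 := by
  have key : ∀ g : Subgroup.lowerCentralSeries (⊤ : Subgroup B43) 2, ∃ a : Fin 4 → Fin 3,
      (g : B43) = _ := fun g => closure_four B43_cube tri g (gamma3_le g.2)
  choose F hF using key
  have hinj : Function.Injective F := by
    intro p q hpq
    apply Subtype.ext
    rw [hF p, hF q, hpq]
  refine ⟨Finite.of_injective F hinj, ?_⟩
  refine (Nat.card_le_card_of_injective F hinj).trans ?_
  simp

/-- Central elements of the model. -/
def TT (n : ZMod 3) : BM := ⟨0, 0, 0, 0, 0, 0, n⟩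

theorem TT_mul (m n : ZMod 3) : TT m * TT n = TT (m + n) := by
  simp [TT, BM.mul_def]

theorem TT_pow (m : ZMod 3) (k : ℕ) : TT m ^ k = TT (k * m) := by
  induction k with
  | zero => simp [TT, BM.one_def]
  | succ k ih => rw [pow_succ, ih, TT_mul]; congr 1; push_cast; ring

/-- The matrix of the `P i` in the four coordinates. -/
def mm : Fin 4 → Fin 4 → ZMod 3 :=
  ![![1, 2, 2, 2], ![0, 2, 1, 1], ![0, 0, 1, 2], ![0, 0, 0, 2]]

theorem PM_eq (j i : Fin 4) : PM (vv j) i = TT (mm j i) := by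
  revert i j
  decide

theorem mm_inj : ∀ a b c d a' b' c' d' : Fin 3,
    (∀ j : Fin 4, ((a : ℕ) : ZMod 3) * mm j 0 + ((b : ℕ) : ZMod 3) * mm j 1 +
      ((c : ℕ) : ZMod 3) * mm j 2 + ((d : ℕ) : ZMod 3) * mm j 3
      = ((a' : ℕ) : ZMod 3) * mm j 0 + ((b' : ℕ) : ZMod 3) * mm j 1 +
      ((c' : ℕ) : ZMod 3) * mm j 2 + ((d' : ℕ) : ZMod 3) * mm j 3) →
    a = a' ∧ b = b' ∧ c = c' ∧ d = d' := by
  have inj : ∀ a b : Fin 3, ((a : ℕ) : ZMod 3) = ((b : ℕ) : ZMod 3) → a = b := by decide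
  intro a b c d a' b' c' d' h
  have c2 : ∀ u v : ZMod 3, u * 2 = v * 2 → u = v := by decide
  have h3 := h 3
  have h2 := h 2
  have h1 := h 1
  have h0 := h 0
  simp only [mm, Matrix.cons_val, mul_zero, zero_add, mul_one] at h0 h1 h2 h3
  have hd := c2 _ _ h3
  rw [hd] at h0 h1 h2
  have hc := add_right_cancel h2
  rw [hc] at h0 h1
  have hb := c2 _ _ (add_right_cancel (add_right_cancel h1))
  rw [hb] at h0
  have ha := add_right_cancel (add_right_cancel (add_right_cancel h0))
  exact ⟨inj _ _ ha, inj _ _ hb, inj _ _ hc, inj _ _ hd⟩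

theorem closureP_card (hfin : Finite (Subgroup.closure ({P 0, P 1, P 2, P 3} : Set B43))) :
    81 ≤ Nat.card (Subgroup.closure ({P 0, P 1, P 2, P 3} : Set B43)) := by
  let K := Subgroup.closure ({P 0, P 1, P 2, P 3} : Set B43)
  have m0 : P 0 ∈ K := Subgroup.subset_closure (by simp)
  have m1 : P 1 ∈ K := Subgroup.subset_closure (by simp)
  have m2 : P 2 ∈ K := Subgroup.subset_closure (by simp)
  have m3 : P 3 ∈ K := Subgroup.subset_closure (by simp)
  let F : Fin 3 × Fin 3 × Fin 3 × Fin 3 → K := fun a =>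
    ⟨P 0 ^ (a.1 : ℕ) * P 1 ^ (a.2.1 : ℕ) * P 2 ^ (a.2.2.1 : ℕ) * P 3 ^ (a.2.2.2 : ℕ),
      mul_mem (mul_mem (mul_mem (pow_mem m0 _) (pow_mem m1 _)) (pow_mem m2 _)) (pow_mem m3 _)⟩
  have hF : Function.Injective F := by
    rintro ⟨a, b, c, d⟩ ⟨a', b', c', d'⟩ h
    have h1 := congrArg (Subtype.val) h
    have := mm_inj a b c d a' b' c' d' (fun j => by
      have h2 := congrArg (toBM (vv j)) h1
      simp only [F, map_mul, map_pow, toBM_P, PM_eq, TT_pow, TT_mul] at h2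
      exact congrArg BM.t h2)
    obtain ⟨rfl, rfl, rfl, rfl⟩ := this
    rfl
  have := Nat.card_le_card_of_injective F hF
  simpa using this

end Main

/-- `P₁, P₂, P₃, P₄` form a basis of the third term `γ₃(B(4,3)) = [[G,G],G]` of the
lower central series (Mathlib: `lowerCentralSeries B43 2`, since `γ₁` has index `0`):
they generate it, and it has exactly `3⁴ = 81` elements. -/
theorem P_basis_gamma3 :
    Subgroup.closure ({P 0, P 1, P 2, P 3} : Set B43) = Subgroup.lowerCentralSeries (⊤ : Subgroup B43) 2 ∧
    Nat.card (Subgroup.lowerCentralSeries (⊤ : Subgroup B43) 2) = 81 := by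
  obtain ⟨hfin, hcard⟩ := gamma3_card_le
  have hle : Subgroup.closure ({P 0, P 1, P 2, P 3} : Set B43) ≤
      Subgroup.lowerCentralSeries (⊤ : Subgroup B43) 2 := by
    rw [Subgroup.closure_le]
    rintro _ (rfl | rfl | rfl | rfl) <;> exact P_mem _
  have hfin' : Finite (Subgroup.closure ({P 0, P 1, P 2, P 3} : Set B43)) :=
    Finite.of_injective _ (Subgroup.inclusion_injective hle)
  have h81 := closureP_card hfin'
  have heq := Subgroup.eq_of_le_of_card_ge hle (hcard.trans h81)
  refine ⟨heq, le_antisymm hcard ?_⟩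
  rw [← heq]
  exact h81
end

section
/- In B(4,3) the following identities hold: P₁ = e₁⁻¹, P₂ = e₁e₂, P₃ = e₁e₂⁻¹e₃⁻¹, and P₄ = e₁e₂⁻¹e₃e₄. -/
open scoped commutatorElement

/-- The elements `e₁ = [[x₂,x₃],x₄]`, `e₂ = [[x₁,x₃],x₄]`, `e₃ = [[x₁,x₂],x₄]`,
`e₄ = [[x₁,x₂],x₃]` of `B(4,3)`, where `⁅a, b⁆ = a * b * a⁻¹ * b⁻¹`. -/
def e : Fin 4 → B43
  | 0 => ⁅⁅x 1, x 2⁆, x 3⁆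
  | 1 => ⁅⁅x 0, x 2⁆, x 3⁆
  | 2 => ⁅⁅x 0, x 1⁆, x 3⁆
  | 3 => ⁅⁅x 0, x 1⁆, x 2⁆


section Exp3
variable {G : Type*} [Group G]

theorem inv_sq (cube : ∀ g : G, g ^ 3 = 1) (g : G) : g⁻¹ = g * g :=
  inv_eq_of_mul_eq_one_left (by rw [← pow_two, ← pow_succ, cube])

theorem aba (cube : ∀ g : G, g ^ 3 = 1) (a b : G) : a * b * a = b⁻¹ * a⁻¹ * b⁻¹ := by
  have h := cube (a * b)
  rw [pow_three] at h
  calc a * b * a = (a * b * (a * b * (a * b))) * (b⁻¹ * a⁻¹ * b⁻¹) := by group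
    _ = _ := by rw [h, one_mul]

/-- An element commutes with its conjugates. -/
theorem comm_conj (cube : ∀ g : G, g ^ 3 = 1) (a b : G) :
    Commute a (b * a * b⁻¹) := by
  have h1 := aba cube a b
  have h2 := aba cube a b⁻¹
  have h3 : b⁻¹ * b⁻¹ = b := by rw [← inv_sq cube, inv_inv]
  show a * (b * a * b⁻¹) = b * a * b⁻¹ * a
  calc a * (b * a * b⁻¹) = a * b * a * b⁻¹ := by group
    _ = b⁻¹ * a⁻¹ * (b⁻¹ * b⁻¹) := by rw [h1]; group
    _ = b⁻¹ * a⁻¹ * b := by rw [h3]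
    _ = (b * b) * a⁻¹ * b := by rw [← inv_sq cube]
    _ = b * (a * b⁻¹ * a) := by rw [h2]; group
    _ = _ := by group

theorem comm_conj2 (cube : ∀ g : G, g ^ 3 = 1) (a b c : G) :
    Commute (c * a * c⁻¹) (b * a * b⁻¹) := by
  have h := comm_conj cube (c * a * c⁻¹) (b * c⁻¹)
  have h2 : b * c⁻¹ * (c * a * c⁻¹) * (b * c⁻¹)⁻¹ = b * a * b⁻¹ := by group
  rwa [h2] at h

theorem conj_triple (cube : ∀ g : G, g ^ 3 = 1) (a b : G) :
    b⁻¹ * a * b = a⁻¹ * (b * a * b⁻¹)⁻¹ := by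
  have h1 := aba cube a b
  have h3 : b * b = b⁻¹ := by rw [← inv_sq cube]
  have h4 : a * (b * a * b⁻¹) = b⁻¹ * a⁻¹ * b := by
    have h3' : b⁻¹ * b⁻¹ = b := by rw [← inv_sq cube, inv_inv]
    calc a * (b * a * b⁻¹) = a * b * a * b⁻¹ := by group
      _ = b⁻¹ * a⁻¹ * (b⁻¹ * b⁻¹) := by rw [h1]; group
      _ = b⁻¹ * a⁻¹ * b := by rw [h3']
  have h5 := (comm_conj cube a b).eq
  rw [← mul_inv_rev, ← h5, h4]; group

theorem comm_self_left (cube : ∀ g : G, g ^ 3 = 1) (a b : G) : Commute a ⁅a, b⁆ := by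
  have h := (Commute.refl a).mul_right (comm_conj cube a b).inv_right
  have h2 : ⁅a, b⁆ = a * (b * a * b⁻¹)⁻¹ := by rw [commutatorElement_def]; group
  rw [h2]; exact h

theorem comm_self_right (cube : ∀ g : G, g ^ 3 = 1) (a b : G) : Commute b ⁅a, b⁆ := by
  have h := (comm_self_left cube b a).inv_right
  rwa [commutatorElement_inv] at h

theorem comm_inv_left (cube : ∀ g : G, g ^ 3 = 1) (a b : G) : ⁅a⁻¹, b⁆ = ⁅a, b⁆⁻¹ := by
  have h := (comm_conj cube a b).inv_left.eq
  simp only [commutatorElement_def] at *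
  calc _ = a⁻¹ * (b * a * b⁻¹) := by group
    _ = _ := by rw [h]; group

theorem comm_inv_right (cube : ∀ g : G, g ^ 3 = 1) (a b : G) : ⁅a, b⁻¹⁆ = ⁅a, b⁆⁻¹ := by
  rw [← commutatorElement_inv, comm_inv_left cube, commutatorElement_inv, commutatorElement_inv]

theorem swap_rule (cube : ∀ g : G, g ^ 3 = 1) (a b : G) : a * b = b * (a * ⁅a, b⁆) := by
  have h : ⁅a, b⁆ = ⁅a⁻¹, b⁻¹⁆ := by rw [comm_inv_left cube, comm_inv_right cube, inv_inv]
  rw [h, commutatorElement_def]; group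

/-- The triple commutator is antisymmetric in the last two arguments. -/
theorem triple_swap (cube : ∀ g : G, g ^ 3 = 1) (a b c : G) :
    ⁅⁅a, c⁆, b⁆ = ⁅⁅a, b⁆, c⁆⁻¹ := by
  -- conjugates of `a`
  obtain ⟨p, hp⟩ : ∃ p, p = b * a * b⁻¹ := ⟨_, rfl⟩
  obtain ⟨q, hq⟩ : ∃ q, q = c * a * c⁻¹ := ⟨_, rfl⟩
  obtain ⟨r, hr⟩ : ∃ r, r = b * c * a * (b * c)⁻¹ := ⟨_, rfl⟩
  obtain ⟨s, hs⟩ : ∃ s, s = c * b * a * (c * b)⁻¹ := ⟨_, rfl⟩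
  have cap : Commute a p := hp ▸ comm_conj cube a b
  have caq : Commute a q := hq ▸ comm_conj cube a c
  have car : Commute a r := hr ▸ comm_conj cube a (b * c)
  have cpq : Commute p q := by rw [hp, hq]; exact comm_conj2 cube a c b
  have cpr : Commute p r := by rw [hp, hr]; exact comm_conj2 cube a (b * c) b
  have cqr : Commute q r := by rw [hq, hr]; exact comm_conj2 cube a (b * c) c
  -- the conjugate by `b⁻¹ c⁻¹`
  have t1 : c⁻¹ * a * c = a⁻¹ * q⁻¹ := by rw [hq]; exact conj_triple cube a c
  have t2 : b⁻¹ * a * b = a⁻¹ * p⁻¹ := by rw [hp]; exact conj_triple cube a b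
  have t3 : b⁻¹ * q * b = q⁻¹ * r⁻¹ := by
    rw [conj_triple cube q b, hq, hr]; group
  have t4 : b⁻¹ * (c⁻¹ * a * c) * b = p * a * (r * q) := by
    rw [t1]
    calc b⁻¹ * (a⁻¹ * q⁻¹) * b = (b⁻¹ * a * b)⁻¹ * (b⁻¹ * q * b)⁻¹ := by group
      _ = _ := by rw [t2, t3]; group
  have t5 : s = a⁻¹ * (p * a * (r * q))⁻¹ := by
    have h := conj_triple cube a (b⁻¹ * c⁻¹)
    rw [← t4, hs]
    calc _ = (b⁻¹ * c⁻¹)⁻¹ * a * (b⁻¹ * c⁻¹) := by group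
      _ = _ := by rw [h]; group
  have u1 : ⁅⁅a, c⁆, b⁆ = a * q⁻¹ * (r * p⁻¹) := by
    rw [hq, hr, hp]; simp only [commutatorElement_def]; group
  have u2 : ⁅⁅a, b⁆, c⁆ = a * p⁻¹ * (s * q⁻¹) := by
    rw [hq, hs, hp]; simp only [commutatorElement_def]; group
  rw [eq_inv_iff_mul_eq_one, u1, u2, t5]
  have i := inv_sq cube
  have cb : ∀ g z : G, g * (g * (g * z)) = z := fun g z => by
    rw [← mul_assoc g g z, ← i, mul_inv_cancel_left]
  have cb1 : ∀ g : G, g * (g * g) = 1 := fun g => by rw [← pow_three, cube]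
  simp only [i, mul_assoc, cb, cb1, mul_one, one_mul, cap.eq.symm, cap.symm.left_comm,
    caq.eq.symm, caq.symm.left_comm, car.eq.symm, car.symm.left_comm, cpq.eq.symm,
    cpq.symm.left_comm, cpr.eq.symm, cpr.symm.left_comm, cqr.eq.symm, cqr.symm.left_comm]

theorem triple_swap12 (cube : ∀ g : G, g ^ 3 = 1) (a b c : G) :
    ⁅⁅b, a⁆, c⁆ = ⁅⁅a, b⁆, c⁆⁻¹ := by
  rw [← commutatorElement_inv a b, comm_inv_left cube]

theorem triple_cyc (cube : ∀ g : G, g ^ 3 = 1) (a b c : G) :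
    ⁅⁅b, c⁆, a⁆ = ⁅⁅a, b⁆, c⁆ := by
  rw [triple_swap cube b a c, triple_swap12 cube a b c, inv_inv]

/-- Commutators commute with commutators. -/
theorem comm_comm (cube : ∀ g : G, g ^ 3 = 1) (a b c d : G) : ⁅⁅a, b⁆, ⁅c, d⁆⁆ = 1 := by
  have h1 : ∀ a b c d : G, ⁅⁅c, d⁆, ⁅a, b⁆⁆ = ⁅⁅⁅a, b⁆, c⁆, d⁆ := fun a b c d =>
    triple_cyc cube ⁅a, b⁆ c d
  have s12 : ∀ a b c d : G, ⁅⁅⁅b, a⁆, c⁆, d⁆ = ⁅⁅⁅a, b⁆, c⁆, d⁆⁻¹ := fun a b c d => by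
    rw [triple_swap12 cube a b c, comm_inv_left cube]
  have s23 : ∀ a b c d : G, ⁅⁅⁅a, c⁆, b⁆, d⁆ = ⁅⁅⁅a, b⁆, c⁆, d⁆⁻¹ := fun a b c d => by
    rw [triple_swap cube a b c, comm_inv_left cube]
  have s34 : ∀ a b c d : G, ⁅⁅⁅a, b⁆, d⁆, c⁆ = ⁅⁅⁅a, b⁆, c⁆, d⁆⁻¹ := fun a b c d =>
    triple_swap cube _ _ _
  have h2 : ⁅⁅⁅c, d⁆, a⁆, b⁆ = ⁅⁅⁅a, b⁆, c⁆, d⁆ := by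
    rw [s23 c a d b, s12 a c d b, s34 a c b d, s23 a b c d]; simp
  have h3 : ⁅⁅a, b⁆, ⁅c, d⁆⁆ = ⁅⁅a, b⁆, ⁅c, d⁆⁆⁻¹ := by
    conv_rhs => rw [commutatorElement_inv, h1 a b c d]
    rw [h1 c d a b, h2]
  have h4 := cube ⁅⁅a, b⁆, ⁅c, d⁆⁆
  rw [inv_sq cube] at h3
  rw [pow_three, ← h3, ← inv_sq cube] at h4
  exact inv_eq_one.mp h4

theorem quad (cube : ∀ g : G, g ^ 3 = 1) (a b c g : G) :
    ⁅⁅a, b⁆, c⁆ * g = g * ⁅⁅a, b⁆, c⁆ := by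
  rw [← commutatorElement_eq_one_iff_mul_comm, ← triple_cyc cube ⁅a, b⁆ c g, comm_comm cube]

end Exp3

section Collect
variable {G : Type*} [Group G]

theorem assoc_rule {p q r : G} (h : p * q = r) (z : G) : p * (q * z) = r * z := by
  rw [← mul_assoc, h]

theorem cube_rule {p : G} (h : p ^ 3 = 1) (z : G) : p * (p * (p * z)) = z := by
  rw [← mul_assoc p p z, ← mul_assoc, ← pow_three, h, one_mul]

set_option linter.unusedSimpArgs false in
set_option maxHeartbeats 4000000 in
/-- Collection to normal form in `B(4,3)`. -/
theorem collect (cube : ∀ g : G, g ^ 3 = 1) (x1 x2 x3 x4 c12 c13 c14 c23 c24 c34 e1 e2 e3 e4 : G)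
    (h12 : x2 * x1 = x1 * (x2 * (c12 * c12)))
    (h13 : x3 * x1 = x1 * (x3 * (c13 * c13)))
    (h14 : x4 * x1 = x1 * (x4 * (c14 * c14)))
    (h23 : x3 * x2 = x2 * (x3 * (c23 * c23)))
    (h24 : x4 * x2 = x2 * (x4 * (c24 * c24)))
    (h34 : x4 * x3 = x3 * (x4 * (c34 * c34)))
    (k121 : c12 * x1 = x1 * c12)
    (k122 : c12 * x2 = x2 * c12)
    (k123 : c12 * x3 = x3 * (c12 * e4))
    (k124 : c12 * x4 = x4 * (c12 * e3))
    (k131 : c13 * x1 = x1 * c13)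
    (k132 : c13 * x2 = x2 * (c13 * (e4 * e4)))
    (k133 : c13 * x3 = x3 * c13)
    (k134 : c13 * x4 = x4 * (c13 * e2))
    (k141 : c14 * x1 = x1 * c14)
    (k142 : c14 * x2 = x2 * (c14 * (e3 * e3)))
    (k143 : c14 * x3 = x3 * (c14 * (e2 * e2)))
    (k144 : c14 * x4 = x4 * c14)
    (k231 : c23 * x1 = x1 * (c23 * e4))
    (k232 : c23 * x2 = x2 * c23)
    (k233 : c23 * x3 = x3 * c23)
    (k234 : c23 * x4 = x4 * (c23 * e1))
    (k241 : c24 * x1 = x1 * (c24 * e3))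
    (k242 : c24 * x2 = x2 * c24)
    (k243 : c24 * x3 = x3 * (c24 * (e1 * e1)))
    (k244 : c24 * x4 = x4 * c24)
    (k341 : c34 * x1 = x1 * (c34 * e2))
    (k342 : c34 * x2 = x2 * (c34 * e1))
    (k343 : c34 * x3 = x3 * c34)
    (k344 : c34 * x4 = x4 * c34)
    (d1213 : c13 * c12 = c12 * c13)
    (d1214 : c14 * c12 = c12 * c14)
    (d1223 : c23 * c12 = c12 * c23)
    (d1224 : c24 * c12 = c12 * c24)
    (d1234 : c34 * c12 = c12 * c34)
    (d1314 : c14 * c13 = c13 * c14)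
    (d1323 : c23 * c13 = c13 * c23)
    (d1324 : c24 * c13 = c13 * c24)
    (d1334 : c34 * c13 = c13 * c34)
    (d1423 : c23 * c14 = c14 * c23)
    (d1424 : c24 * c14 = c14 * c24)
    (d1434 : c34 * c14 = c14 * c34)
    (d2324 : c24 * c23 = c23 * c24)
    (d2334 : c34 * c23 = c23 * c34)
    (d2434 : c34 * c24 = c24 * c34)
    (z1 : ∀ g, e1 * g = g * e1)
    (z2 : ∀ g, e2 * g = g * e2)
    (z3 : ∀ g, e3 * g = g * e3)
    (z4 : ∀ g, e4 * g = g * e4)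
    :
    x1 * x2⁻¹ * x3 * x4⁻¹ * x1⁻¹ * x2 * x3⁻¹ * x4 * x1 *
      (x4 * x3⁻¹ * x2 * x1⁻¹ * x4⁻¹ * x3 * x2⁻¹ * x1) * x1⁻¹ = e1⁻¹ ∧
    x1 * x2⁻¹ * x3 * x4⁻¹ * x1⁻¹ * x2 * x3⁻¹ * x4 * x2 *
      (x4 * x3⁻¹ * x2 * x1⁻¹ * x4⁻¹ * x3 * x2⁻¹ * x1) * x2⁻¹ = e1 * e2 ∧
    x1 * x2⁻¹ * x3 * x4⁻¹ * x1⁻¹ * x2 * x3⁻¹ * x4 * x3 *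
      (x4 * x3⁻¹ * x2 * x1⁻¹ * x4⁻¹ * x3 * x2⁻¹ * x1) * x3⁻¹ = e1 * e2⁻¹ * e3⁻¹ ∧
    x1 * x2⁻¹ * x3 * x4⁻¹ * x1⁻¹ * x2 * x3⁻¹ * x4 * x4 *
      (x4 * x3⁻¹ * x2 * x1⁻¹ * x4⁻¹ * x3 * x2⁻¹ * x1) * x4⁻¹ = e1 * e2⁻¹ * e3 * e4 := by
  have inv : ∀ g : G, g⁻¹ = g * g := fun g => inv_eq_of_mul_eq_one_left (by rw [← pow_two, ← pow_succ, cube])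
  have cb : ∀ g z : G, g * (g * (g * z)) = z := fun g z => cube_rule (cube g) z
  have cb1 : ∀ g : G, g * (g * g) = 1 := fun g => by rw [← pow_three, cube]
  refine ⟨?_, ?_, ?_, ?_⟩ <;> simp only [inv, mul_assoc, cb, cb1, mul_one, one_mul,
    h12,
    assoc_rule h12,
    h13,
    assoc_rule h13,
    h14,
    assoc_rule h14,
    h23,
    assoc_rule h23,
    h24,
    assoc_rule h24,
    h34,
    assoc_rule h34,
    k121,
    assoc_rule k121,
    k122,
    assoc_rule k122,
    k123,
    assoc_rule k123,
    k124,
    assoc_rule k124,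
    k131,
    assoc_rule k131,
    k132,
    assoc_rule k132,
    k133,
    assoc_rule k133,
    k134,
    assoc_rule k134,
    k141,
    assoc_rule k141,
    k142,
    assoc_rule k142,
    k143,
    assoc_rule k143,
    k144,
    assoc_rule k144,
    k231,
    assoc_rule k231,
    k232,
    assoc_rule k232,
    k233,
    assoc_rule k233,
    k234,
    assoc_rule k234,
    k241,
    assoc_rule k241,
    k242,
    assoc_rule k242,
    k243,
    assoc_rule k243,
    k244,
    assoc_rule k244,
    k341,
    assoc_rule k341,
    k342,
    assoc_rule k342,
    k343,
    assoc_rule k343,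
    k344,
    assoc_rule k344,
    d1213,
    assoc_rule d1213,
    d1214,
    assoc_rule d1214,
    d1223,
    assoc_rule d1223,
    d1224,
    assoc_rule d1224,
    d1234,
    assoc_rule d1234,
    d1314,
    assoc_rule d1314,
    d1323,
    assoc_rule d1323,
    d1324,
    assoc_rule d1324,
    d1334,
    assoc_rule d1334,
    d1423,
    assoc_rule d1423,
    d1424,
    assoc_rule d1424,
    d1434,
    assoc_rule d1434,
    d2324,
    assoc_rule d2324,
    d2334,
    assoc_rule d2334,
    d2434,
    assoc_rule d2434,
    z1 x1,
    assoc_rule (z1 x1),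
    z1 x2,
    assoc_rule (z1 x2),
    z1 x3,
    assoc_rule (z1 x3),
    z1 x4,
    assoc_rule (z1 x4),
    z1 c12,
    assoc_rule (z1 c12),
    z1 c13,
    assoc_rule (z1 c13),
    z1 c14,
    assoc_rule (z1 c14),
    z1 c23,
    assoc_rule (z1 c23),
    z1 c24,
    assoc_rule (z1 c24),
    z1 c34,
    assoc_rule (z1 c34),
    z2 x1,
    assoc_rule (z2 x1),
    z2 x2,
    assoc_rule (z2 x2),
    z2 x3,
    assoc_rule (z2 x3),
    z2 x4,
    assoc_rule (z2 x4),
    z2 c12,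
    assoc_rule (z2 c12),
    z2 c13,
    assoc_rule (z2 c13),
    z2 c14,
    assoc_rule (z2 c14),
    z2 c23,
    assoc_rule (z2 c23),
    z2 c24,
    assoc_rule (z2 c24),
    z2 c34,
    assoc_rule (z2 c34),
    z2 e1,
    assoc_rule (z2 e1),
    z3 x1,
    assoc_rule (z3 x1),
    z3 x2,
    assoc_rule (z3 x2),
    z3 x3,
    assoc_rule (z3 x3),
    z3 x4,
    assoc_rule (z3 x4),
    z3 c12,
    assoc_rule (z3 c12),
    z3 c13,
    assoc_rule (z3 c13),
    z3 c14,
    assoc_rule (z3 c14),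
    z3 c23,
    assoc_rule (z3 c23),
    z3 c24,
    assoc_rule (z3 c24),
    z3 c34,
    assoc_rule (z3 c34),
    z3 e1,
    assoc_rule (z3 e1),
    z3 e2,
    assoc_rule (z3 e2),
    z4 x1,
    assoc_rule (z4 x1),
    z4 x2,
    assoc_rule (z4 x2),
    z4 x3,
    assoc_rule (z4 x3),
    z4 x4,
    assoc_rule (z4 x4),
    z4 c12,
    assoc_rule (z4 c12),
    z4 c13,
    assoc_rule (z4 c13),
    z4 c14,
    assoc_rule (z4 c14),
    z4 c23,
    assoc_rule (z4 c23),
    z4 c24,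
    assoc_rule (z4 c24),
    z4 c34,
    assoc_rule (z4 c34),
    z4 e1,
    assoc_rule (z4 e1),
    z4 e2,
    assoc_rule (z4 e2),
    z4 e3,
    assoc_rule (z4 e3)]

end Collect

theorem P_in_terms_of_e :
    P 0 = (e 0)⁻¹ ∧ P 1 = e 0 * e 1 ∧ P 2 = e 0 * (e 1)⁻¹ * (e 2)⁻¹ ∧
    P 3 = e 0 * (e 1)⁻¹ * e 2 * e 3 := by
  have cube := B43_cube
  have hx : ∀ a b : B43, b * a = a * (b * (⁅a, b⁆ * ⁅a, b⁆)) := fun a b => by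
    rw [← inv_sq cube, commutatorElement_inv]; exact swap_rule cube b a
  have hl : ∀ a b : B43, ⁅a, b⁆ * a = a * ⁅a, b⁆ := fun a b => (comm_self_left cube a b).eq.symm
  have hr : ∀ a b : B43, ⁅a, b⁆ * b = b * ⁅a, b⁆ := fun a b => (comm_self_right cube a b).eq.symm
  have h3 : ∀ a b c : B43, ⁅a, b⁆ * c = c * (⁅a, b⁆ * ⁅⁅a, b⁆, c⁆) := fun a b c =>
    swap_rule cube _ _
  have h1 : ∀ a b c : B43, ⁅b, c⁆ * a = a * (⁅b, c⁆ * ⁅⁅a, b⁆, c⁆) := fun a b c => by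
    rw [← triple_cyc cube a b c]; exact swap_rule cube _ _
  have h2 : ∀ a b c : B43, ⁅a, c⁆ * b = b * (⁅a, c⁆ * (⁅⁅a, b⁆, c⁆ * ⁅⁅a, b⁆, c⁆)) :=
    fun a b c => by
    rw [← inv_sq cube, ← triple_swap cube a b c]; exact swap_rule cube _ _
  have hc : ∀ a b c d : B43, ⁅c, d⁆ * ⁅a, b⁆ = ⁅a, b⁆ * ⁅c, d⁆ := fun a b c d => by
    rw [← commutatorElement_eq_one_iff_mul_comm, comm_comm cube]
  have hq : ∀ a b c g : B43, ⁅⁅a, b⁆, c⁆ * g = g * ⁅⁅a, b⁆, c⁆ := quad cube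
  exact collect cube (x 0) (x 1) (x 2) (x 3) ⁅x 0, x 1⁆ ⁅x 0, x 2⁆ ⁅x 0, x 3⁆ ⁅x 1, x 2⁆
    ⁅x 1, x 3⁆ ⁅x 2, x 3⁆ (e 0) (e 1) (e 2) (e 3)
    (hx _ _) (hx _ _) (hx _ _) (hx _ _) (hx _ _) (hx _ _)
    (hl _ _) (hr _ _) (h3 _ _ _) (h3 _ _ _)
    (hl _ _) (h2 _ _ _) (hr _ _) (h3 _ _ _)
    (hl _ _) (h2 _ _ _) (h2 _ _ _) (hr _ _)
    (h1 _ _ _) (hl _ _) (hr _ _) (h3 _ _ _)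
    (h1 _ _ _) (hl _ _) (h2 _ _ _) (hr _ _)
    (h1 _ _ _) (h1 _ _ _) (hl _ _) (hr _ _)
    (hc _ _ _ _) (hc _ _ _ _) (hc _ _ _ _) (hc _ _ _ _) (hc _ _ _ _)
    (hc _ _ _ _) (hc _ _ _ _) (hc _ _ _ _) (hc _ _ _ _) (hc _ _ _ _)
    (hc _ _ _ _) (hc _ _ _ _) (hc _ _ _ _) (hc _ _ _ _) (hc _ _ _ _)
    (hq _ _ _) (hq _ _ _) (hq _ _ _) (hq _ _ _)
end

section
/- The normal closure in B(4,3) of the set {P₁, P₂, P₃, P₄} equals the third term γ₃(B(4,3)) of the lower central series of B(4,3). -/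
namespace B43Aux
theorem ring_anti {R : Type*} [Ring R] (y z : R) (hy : (1 - y) * (1 - y) = 0)
    (hz : (1 - z) * (1 - z) = 0) (hyz : (1 - y * z) * (1 - y * z) = 0) :
    (1 - y) * (1 - z) = - ((1 - z) * (1 - y)) := by
  obtain ⟨Y, rfl⟩ : ∃ Y, y = 1 - Y := ⟨1 - y, by abel⟩
  obtain ⟨Z, rfl⟩ : ∃ Z, z = 1 - Z := ⟨1 - z, by abel⟩
  simp only [sub_sub_cancel] at *
  have e : 1 - (1 - Y) * (1 - Z) = Y + Z - Y * Z := by noncomm_ring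
  rw [e] at hyz
  have hy' : ∀ W, Y * (Y * W) = 0 := fun W => by rw [← mul_assoc, hy, zero_mul]
  have hz' : ∀ W, Z * (Z * W) = 0 := fun W => by rw [← mul_assoc, hz, zero_mul]
  have e1 : Y * Z + Z * Y - Z * (Y * Z) - Y * (Z * Y) + Y * (Z * (Y * Z)) = 0 := by
    simp only [mul_add, add_mul, mul_sub, sub_mul, mul_assoc, hy, hz, hy', mul_zero] at hyz
    rw [← hyz]; abel
  have e2 : Y * (Z * (Y * Z)) = 0 := by
    have := congrArg (fun t => Y * t * Z) e1
    simpa only [mul_add, add_mul, mul_sub, sub_mul, mul_assoc, hy, hz, hy', hz', mul_zero,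
      zero_mul, zero_add, add_zero, sub_zero] using this
  have e3 : Y * (Z * Y) = 0 := by
    have := congrArg (fun t => Y * t) e1
    simpa only [mul_add, add_mul, mul_sub, sub_mul, mul_assoc, hy, hz, hy', hz', mul_zero,
      zero_mul, zero_add, add_zero, sub_zero, e2] using this
  have e4 : Z * (Y * Z) = 0 := by
    have := congrArg (fun t => t * Z) e1
    simpa only [mul_add, add_mul, mul_sub, sub_mul, mul_assoc, hy, hz, hy', hz', mul_zero,
      zero_mul, zero_add, add_zero, sub_zero, zero_sub, neg_eq_zero, e2] using this
  rw [e2, e3, e4] at e1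
  simp only [sub_zero, add_zero] at e1
  exact eq_neg_of_add_eq_zero_left e1

open scoped commutatorElement IsMulCommutative
variable {G : Type*} [Group G]

theorem conj_comm_self (h : ∀ g : G, g ^ 3 = 1) (x y : G) : Commute x (y * x * y⁻¹) := by
  have key : ∀ y : G, x * (y * x * y⁻¹) * (y * y * x * y⁻¹ * y⁻¹) = 1 := fun y => by
    have h1 := h (x * y)
    have h2 := h y
    calc _ = (x * y) ^ 3 * (y ^ 3)⁻¹ := by simp only [pow_succ, pow_zero]; group
      _ = 1 := by rw [h1, h2]; group
  have hyy : y⁻¹ = y * y := by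
    have h2 := h y
    rw [inv_eq_iff_mul_eq_one, ← h2]; simp only [pow_succ, pow_zero]; group
  have k1 := key y⁻¹
  have e : y⁻¹ * y⁻¹ * x * y⁻¹⁻¹ * y⁻¹⁻¹ = y * x * y⁻¹ := by
    have h2 := h y
    calc _ = (y ^ 3)⁻¹ * (y * x * y⁻¹) * y ^ 3 := by simp only [pow_succ, pow_zero]; group
      _ = _ := by rw [h2]; group
  rw [e] at k1
  have k2 := key y
  have e' : y * y * x * y⁻¹ * y⁻¹ = y⁻¹ * x * y⁻¹⁻¹ := by
    rw [← hyy, mul_assoc, ← mul_inv_rev, ← hyy]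
  rw [e'] at k2
  set u := y * x * y⁻¹
  set v := y⁻¹ * x * y⁻¹⁻¹
  have hv : v = x⁻¹ * u⁻¹ := by
    rw [mul_assoc] at k1; have := eq_inv_of_mul_eq_one_right k1
    rw [← mul_left_inj u, this]; group
  rw [hv] at k2
  have : x * u * (u * x)⁻¹ = 1 := by rw [← k2]; group
  exact mul_inv_eq_one.mp this

theorem engel (h : ∀ g : G, g ^ 3 = 1) (x y : G) : ⁅⁅x, y⁆, y⁆ = 1 := by
  rw [commutatorElement_eq_one_iff_commute, commutatorElement_def]
  have := conj_comm_self h y x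
  exact this.symm.mul_left (Commute.refl y).inv_left

theorem anti23 (h : ∀ g : G, g ^ 3 = 1) (x y z : G) : ⁅⁅x, y⁆, z⁆ = ⁅⁅x, z⁆, y⁆⁻¹ := by
  let N := Subgroup.normalClosure ({x} : Set G)
  have hN : IsMulCommutative N := by
    refine Subgroup.isMulCommutative_closure ?_
    intro a ha b hb
    rw [Group.mem_conjugatesOfSet_iff] at ha hb
    obtain ⟨x₁, hx₁, ha⟩ := ha
    obtain ⟨x₂, hx₂, hb⟩ := hb
    rw [Set.mem_singleton_iff] at hx₁ hx₂
    rw [hx₁, isConj_iff] at ha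
    rw [hx₂, isConj_iff] at hb
    obtain ⟨c, rfl⟩ := ha
    obtain ⟨d, rfl⟩ := hb
    have := conj_comm_self h x (c⁻¹ * d)
    have h2 := congrArg (fun t => c * t * c⁻¹) this.eq
    calc _ = c * (x * (c⁻¹ * d * x * (c⁻¹ * d)⁻¹)) * c⁻¹ := by group
      _ = _ := by rw [h2]; group
  let ρ : G → AddMonoid.End (Additive N) := fun g =>
    MonoidHom.toAdditive (MulAut.conjNormal (H := N) g).toMonoidHom
  have hρ : ∀ g k, ρ (g * k) = ρ g * ρ k := by
    intro g k
    ext u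
    simp only [ρ, map_mul]; rfl
  have hD : ∀ g (u : N), (((1 - ρ g) (Additive.ofMul u)).toMul : G) = ⁅(u : G), g⁆ := by
    intro g u
    have : (((1 - ρ g) (Additive.ofMul u)).toMul : G) = u * (g * u * g⁻¹)⁻¹ := by
      have e : (1 - ρ g) (Additive.ofMul u)
          = Additive.ofMul (u * (MulAut.conjNormal g u)⁻¹) := by
        rw [sub_eq_add_neg]; rfl
      rw [e]; simp
    rw [this, commutatorElement_def]; group
  have hDD : ∀ g k (u : N), ((((1 - ρ g) * (1 - ρ k)) (Additive.ofMul u)).toMul : G)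
      = ⁅⁅(u : G), k⁆, g⁆ := by
    intro g k u
    rw [← hD k u, ← hD g]; rfl
  have hsq : ∀ g, (1 - ρ g) * (1 - ρ g) = 0 := by
    intro g
    ext u
    have := hDD g g u.toMul
    rw [engel h] at this
    exact this
  have key := ring_anti (ρ z) (ρ y) (hsq z) (hsq y) (by rw [← hρ]; exact hsq _)
  have hx : x ∈ N := Subgroup.subset_normalClosure rfl
  have k2 := hDD z y ⟨x, hx⟩
  rw [key] at k2
  have k3 := hDD y z ⟨x, hx⟩
  simp only at k2 k3
  rw [← k2, ← k3]; rfl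

theorem inv_comm (h : ∀ g : G, g ^ 3 = 1) (u z : G) : ⁅u⁻¹, z⁆ = ⁅u, z⁆⁻¹ := by
  have h1 := conj_comm_self h u z
  have : ⁅u⁻¹, z⁆ = u⁻¹ * (z * u * z⁻¹) := by rw [commutatorElement_def]; group
  rw [this, h1.inv_left.eq, commutatorElement_def]; group

theorem anti12 (h : ∀ g : G, g ^ 3 = 1) (x y z : G) : ⁅⁅x, y⁆, z⁆ = ⁅⁅y, x⁆, z⁆⁻¹ := by
  rw [← commutatorElement_inv y x, inv_comm h]

theorem cyc (h : ∀ g : G, g ^ 3 = 1) (x y z : G) : ⁅⁅x, y⁆, z⁆ = ⁅⁅z, x⁆, y⁆ := by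
  rw [anti23 h, anti12 h, inv_inv]

theorem four (h : ∀ g : G, g ^ 3 = 1) (x y z w : G) : ⁅⁅⁅x, y⁆, z⁆, w⁆ = 1 := by
  have s12 : ∀ x y z w : G, ⁅⁅⁅x, y⁆, z⁆, w⁆ = ⁅⁅⁅y, x⁆, z⁆, w⁆⁻¹ := fun x y z w => by
    rw [anti12 h x, inv_comm h]
  have s23 : ∀ x y z w : G, ⁅⁅⁅x, y⁆, z⁆, w⁆ = ⁅⁅⁅x, z⁆, y⁆, w⁆⁻¹ := fun x y z w => by
    rw [anti23 h x, inv_comm h]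
  have s34 : ∀ x y z w : G, ⁅⁅⁅x, y⁆, z⁆, w⁆ = ⁅⁅⁅x, y⁆, w⁆, z⁆⁻¹ := fun x y z w => anti23 h _ _ _
  have e1 : ⁅⁅x, y⁆, ⁅z, w⁆⁆ = ⁅⁅⁅x, y⁆, z⁆, w⁆ := by
    rw [cyc h x y, s23 z w x y, s12 z x w y, s34 x z w y, s23 x z y w, inv_inv, inv_inv]
  have e2 : ⁅⁅z, w⁆, ⁅x, y⁆⁆ = ⁅⁅⁅x, y⁆, z⁆, w⁆ := cyc h _ _ _
  rw [← commutatorElement_inv, e1] at e2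
  have h3 := h ⁅⁅⁅x, y⁆, z⁆, w⁆
  rw [pow_succ, pow_two] at h3
  have : ⁅⁅⁅x, y⁆, z⁆, w⁆ * ⁅⁅⁅x, y⁆, z⁆, w⁆ = 1 := by
    nth_rw 1 [← e2]; group
  rwa [this, one_mul] at h3

theorem mem_center (h : ∀ g : G, g ^ 3 = 1) (x y z : G) : ⁅⁅x, y⁆, z⁆ ∈ Subgroup.center G := by
  rw [Subgroup.mem_center_iff]
  intro g
  exact (commutatorElement_eq_one_iff_commute.mp (four h x y z g)).eq.symm

/-- The triple commutator as an element of the centre, written additively. -/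
def tau (h : ∀ g : G, g ^ 3 = 1) (x y z : G) : Additive (Subgroup.center G) :=
  Additive.ofMul ⟨⁅⁅x, y⁆, z⁆, mem_center h x y z⟩

theorem tau_ext {s t : Additive (Subgroup.center G)} (e : (s.toMul : G) = t.toMul) : s = t :=
  Additive.toMul.injective (Subtype.ext e)

theorem tau_swap12 (h : ∀ g : G, g ^ 3 = 1) (x y z : G) : tau h x y z = - tau h y x z :=
  tau_ext (anti12 h x y z)

theorem tau_swap23 (h : ∀ g : G, g ^ 3 = 1) (x y z : G) : tau h x y z = - tau h x z y :=
  tau_ext (anti23 h x y z)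

theorem tau_mul3 (h : ∀ g : G, g ^ 3 = 1) (x y z w : G) :
    tau h x y (z * w) = tau h x y z + tau h x y w := by
  apply tau_ext
  change ⁅⁅x, y⁆, z * w⁆ = ⁅⁅x, y⁆, z⁆ * ⁅⁅x, y⁆, w⁆
  have hc := Subgroup.mem_center_iff.mp (mem_center h x y w) z
  generalize ⁅x, y⁆ = u at *
  calc ⁅u, z * w⁆ = ⁅u, z⁆ * (z * ⁅u, w⁆) * z⁻¹ := by simp only [commutatorElement_def]; group
    _ = _ := by rw [hc]; group

theorem tau_mul2 (h : ∀ g : G, g ^ 3 = 1) (x y z w : G) :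
    tau h x (y * w) z = tau h x y z + tau h x w z := by
  rw [tau_swap23, tau_mul3, tau_swap23 h x y, tau_swap23 h x w]; abel

theorem tau_mul1 (h : ∀ g : G, g ^ 3 = 1) (x y z w : G) :
    tau h (x * w) y z = tau h x y z + tau h w y z := by
  rw [tau_swap12, tau_mul2, tau_swap12 h x y, tau_swap12 h w y]; abel

theorem tau_inv1 (h : ∀ g : G, g ^ 3 = 1) (x y z : G) : tau h x⁻¹ y z = - tau h x y z := by
  have h1 := tau_mul1 h x y z x⁻¹
  have h2 := tau_mul1 h 1 y z 1
  rw [mul_one] at h2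
  rw [mul_inv_cancel, left_eq_add.mp h2] at h1
  exact eq_neg_of_add_eq_zero_right h1.symm

theorem tau_inv2 (h : ∀ g : G, g ^ 3 = 1) (x y z : G) : tau h x y⁻¹ z = - tau h x y z := by
  rw [tau_swap12, tau_inv1, tau_swap12 h x y]

theorem tau_inv3 (h : ∀ g : G, g ^ 3 = 1) (x y z : G) : tau h x y z⁻¹ = - tau h x y z := by
  rw [tau_swap23, tau_inv2, tau_swap23 h x y]

theorem tau_self12 (h : ∀ g : G, g ^ 3 = 1) (x z : G) : tau h x x z = 0 :=
  tau_ext (by change ⁅⁅x, x⁆, z⁆ = 1; simp)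

theorem tau_self23 (h : ∀ g : G, g ^ 3 = 1) (x z : G) : tau h x z z = 0 :=
  tau_ext (engel h x z)

theorem tau_self13 (h : ∀ g : G, g ^ 3 = 1) (x z : G) : tau h x z x = 0 := by
  rw [tau_swap23, tau_self12, neg_zero]

/-- `[v, g]` for the element `v = Y⁻¹ X`. -/
def lam (h : ∀ g : G, g ^ 3 = 1) (a b c d g : G) : Additive (Subgroup.center G) :=
  tau h a⁻¹ b⁻¹ g + tau h (a * b)⁻¹ c⁻¹ g + tau h (a * b * c)⁻¹ d⁻¹ g

theorem comm_mul_left_central {u v g : G} (hc : ⁅v, g⁆ ∈ Subgroup.center G) :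
    ⁅u * v, g⁆ = ⁅u, g⁆ * ⁅v, g⁆ := by
  have h1 := Subgroup.mem_center_iff.mp hc u
  have h2 := Subgroup.mem_center_iff.mp hc ⁅u, g⁆
  calc ⁅u * v, g⁆ = (u * ⁅v, g⁆) * u⁻¹ * ⁅u, g⁆ := by simp only [commutatorElement_def]; group
    _ = ⁅v, g⁆ * ⁅u, g⁆ := by rw [h1]; group
    _ = _ := h2.symm

theorem lam_eq (h : ∀ g : G, g ^ 3 = 1) (a b c d g : G) :
    ((lam h a b c d g).toMul : G) = ⁅(d * c * b * a)⁻¹ * (a * b * c * d), g⁆ := by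
  have e : (d * c * b * a)⁻¹ * (a * b * c * d)
      = ⁅a⁻¹, b⁻¹⁆ * ⁅(a * b)⁻¹, c⁻¹⁆ * ⁅(a * b * c)⁻¹, d⁻¹⁆ := by
    simp only [commutatorElement_def]; group
  rw [e, comm_mul_left_central (mem_center h _ _ _), comm_mul_left_central (mem_center h _ _ _)]
  rfl

theorem P_general (h : ∀ g : G, g ^ 3 = 1) (a b c d g : G) :
    (a * b * c * d) * (d * c * b * a)⁻¹ * g * ((a * b * c * d)⁻¹ * (d * c * b * a)) * g⁻¹ =
      ((lam h a b c d g - lam h a b c d (d * c * b * a)).toMul : G) := by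
  have e : ((lam h a b c d g - lam h a b c d (d * c * b * a)).toMul : G) =
      ((lam h a b c d (d * c * b * a)).toMul : G)⁻¹ * ((lam h a b c d g).toMul : G) := by
    rw [sub_eq_neg_add]; rfl
  rw [e, lam_eq, lam_eq]
  simp only [commutatorElement_def]; group

theorem tau_cyc (h : ∀ g : G, g ^ 3 = 1) (x y z : G) : tau h x y z = tau h z x y := by
  rw [tau_swap23, tau_swap12, neg_neg]

theorem lam_mul (h : ∀ g : G, g ^ 3 = 1) (a b c d g k : G) :
    lam h a b c d (g * k) = lam h a b c d g + lam h a b c d k := by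
  simp only [lam, tau_mul3]; abel

theorem lam_inv (h : ∀ g : G, g ^ 3 = 1) (a b c d g : G) :
    lam h a b c d g⁻¹ = - lam h a b c d g := by
  simp only [lam, tau_inv3]; abel

theorem lam_expand (h : ∀ g : G, g ^ 3 = 1) (a b c d g : G) :
    lam h a b c d g = tau h a b g + tau h a c g + tau h b c g + tau h a d g + tau h b d g
      + tau h c d g := by
  simp only [lam, mul_inv_rev, tau_mul1, tau_inv1, tau_inv2]; abel

theorem lam_a (h : ∀ g : G, g ^ 3 = 1) (a b c d : G) :
    lam h a b c d a = tau h a b c + tau h a b d + tau h a c d := by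
  rw [lam_expand, tau_self13, tau_self13, tau_self13, tau_cyc h b c a, tau_cyc h b d a,
    tau_cyc h c d a]
  abel

theorem lam_b (h : ∀ g : G, g ^ 3 = 1) (a b c d : G) :
    lam h a b c d b = - tau h a b c - tau h a b d + tau h b c d := by
  rw [lam_expand, tau_self23, tau_self13, tau_self13, tau_swap23 h a c b, tau_swap23 h a d b,
    tau_cyc h c d b]
  abel

theorem lam_c (h : ∀ g : G, g ^ 3 = 1) (a b c d : G) :
    lam h a b c d c = tau h a b c - tau h a c d - tau h b c d := by
  rw [lam_expand, tau_self23, tau_self13, tau_self23, tau_swap23 h a d c, tau_swap23 h b d c]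
  abel

theorem lam_d (h : ∀ g : G, g ^ 3 = 1) (a b c d : G) :
    lam h a b c d d = tau h a b d + tau h a c d + tau h b c d := by
  rw [lam_expand, tau_self23, tau_self23, tau_self23]
  abel

theorem lam_Y (h : ∀ g : G, g ^ 3 = 1) (a b c d : G) :
    lam h a b c d (d * c * b * a) = tau h a b c + tau h a b d + tau h a c d + tau h b c d := by
  rw [lam_mul, lam_mul, lam_mul, lam_a, lam_b, lam_c, lam_d]
  abel

/-- Elements of the centre lying in a given subgroup, written additively. -/
def cen (N : Subgroup G) : AddSubgroup (Additive (Subgroup.center G)) :=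
  Subgroup.toAddSubgroup (N.comap (Subgroup.center G).subtype)

theorem mem_cen (N : Subgroup G) (t : Additive (Subgroup.center G)) :
    t ∈ cen N ↔ (t.toMul : G) ∈ N := Iff.rfl

theorem gamma3_le (h : ∀ g : G, g ^ 3 = 1) (N : Subgroup G) [hN : N.Normal]
    (hT : ∀ x y z, tau h x y z ∈ cen N) :
    Subgroup.lowerCentralSeries (⊤ : Subgroup G) 2 ≤ N := by
  have hT' : ∀ x y z : G, ⁅⁅x, y⁆, z⁆ ∈ N := hT
  change ⁅Subgroup.lowerCentralSeries (⊤ : Subgroup G) 1, ⊤⁆ ≤ N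
  rw [Subgroup.commutator_le]
  intro p hp q _
  rw [Subgroup.mem_lowerCentralSeries_succ_iff] at hp
  induction hp using Subgroup.closure_induction with
  | mem p hp =>
    obtain ⟨u, _, v, _, rfl⟩ := hp
    exact hT' u v q
  | one => simp
  | mul u v _ _ hu hv =>
    have : ⁅u * v, q⁆ = (u * ⁅v, q⁆ * u⁻¹) * ⁅u, q⁆ := by simp only [commutatorElement_def]; group
    rw [this]
    exact N.mul_mem (hN.conj_mem _ hv u) hu
  | inv u _ hu => rw [inv_comm h]; exact N.inv_mem hu

theorem tau_mem_gamma3 (h : ∀ g : G, g ^ 3 = 1) (x y z : G) :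
    tau h x y z ∈ cen (Subgroup.lowerCentralSeries (⊤ : Subgroup G) 2) := by
  rw [mem_cen]
  exact Subgroup.commutator_mem_commutator
    (Subgroup.commutator_mem_commutator (Subgroup.mem_top x) (Subgroup.mem_top y))
    (Subgroup.mem_top z)

theorem tau_mem_of_gen (h : ∀ g : G, g ^ 3 = 1) (M : AddSubgroup (Additive (Subgroup.center G)))
    (S : Set G) (hS : Subgroup.closure S = ⊤)
    (hM : ∀ x ∈ S, ∀ y ∈ S, ∀ z ∈ S, tau h x y z ∈ M) (x y z : G) : tau h x y z ∈ M := by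
  -- a triple commutator which is in `M` for `z ∈ S` is so for all `z`
  have step : ∀ x y : G, (∀ z ∈ S, tau h x y z ∈ M) → ∀ z, tau h x y z ∈ M := by
    intro x y hxy z
    have hz : z ∈ Subgroup.closure S := hS ▸ Subgroup.mem_top z
    induction hz using Subgroup.closure_induction with
    | mem z hz => exact hxy z hz
    | one =>
      have h2 := tau_mul3 h x y 1 1
      rw [mul_one] at h2
      rw [left_eq_add.mp h2]; exact M.zero_mem
    | mul u v _ _ hu hv => rw [tau_mul3]; exact M.add_mem hu hv
    | inv u _ hu => rw [tau_inv3]; exact M.neg_mem hu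
  have s1 : ∀ x ∈ S, ∀ y ∈ S, ∀ z, tau h x y z ∈ M := fun x hx y hy =>
    step x y (hM x hx y hy)
  have s2 : ∀ x ∈ S, ∀ z y, tau h z x y ∈ M := fun x hx z =>
    step z x (fun y hy => by rw [← tau_cyc h x y z]; exact s1 x hx y hy z)
  refine step x y (fun w hw => ?_) z
  rw [tau_cyc, tau_cyc]
  exact s2 _ hw _ _

theorem main_gen (h : ∀ g : G, g ^ 3 = 1) (a b c d : G)
    (hS : Subgroup.closure ({a, b, c, d} : Set G) = ⊤) (p₀ p₁ p₂ p₃ : G)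
    (h₀ : p₀ = (a * b * c * d) * (d * c * b * a)⁻¹ * a *
      ((a * b * c * d)⁻¹ * (d * c * b * a)) * a⁻¹)
    (h₁ : p₁ = (a * b * c * d) * (d * c * b * a)⁻¹ * b⁻¹ *
      ((a * b * c * d)⁻¹ * (d * c * b * a)) * b⁻¹⁻¹)
    (h₂ : p₂ = (a * b * c * d) * (d * c * b * a)⁻¹ * c *
      ((a * b * c * d)⁻¹ * (d * c * b * a)) * c⁻¹)
    (h₃ : p₃ = (a * b * c * d) * (d * c * b * a)⁻¹ * d⁻¹ *
      ((a * b * c * d)⁻¹ * (d * c * b * a)) * d⁻¹⁻¹) :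
    Subgroup.normalClosure ({p₀, p₁, p₂, p₃} : Set G) =
      Subgroup.lowerCentralSeries (⊤ : Subgroup G) 2 := by
  rw [P_general h] at h₀ h₁ h₂ h₃
  rw [lam_Y] at h₀ h₁ h₂ h₃
  rw [lam_a] at h₀
  rw [lam_inv, lam_b] at h₁
  rw [lam_c] at h₂
  rw [lam_inv, lam_d] at h₃
  have hg := tau_mem_gamma3 h
  set γ := Subgroup.lowerCentralSeries (⊤ : Subgroup G) 2 with hγ
  have hγn : γ.Normal := by rw [hγ]; infer_instance
  apply le_antisymm
  · apply Subgroup.normalClosure_le_normal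
    have hA := hg b c d
    have hB := hg a c d
    have hC := hg a b d
    have hD := hg a b c
    rintro p (rfl | rfl | rfl | rfl)
    · rw [h₀, SetLike.mem_coe, ← mem_cen]
      exact sub_mem (add_mem (add_mem hD hC) hB) (add_mem (add_mem (add_mem hD hC) hB) hA)
    · rw [h₁, SetLike.mem_coe, ← mem_cen]
      exact sub_mem (neg_mem (add_mem (sub_mem (neg_mem hD) hC) hA))
        (add_mem (add_mem (add_mem hD hC) hB) hA)
    · rw [h₂, SetLike.mem_coe, ← mem_cen]
      exact sub_mem (sub_mem (sub_mem hD hB) hA) (add_mem (add_mem (add_mem hD hC) hB) hA)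
    · rw [h₃, SetLike.mem_coe, ← mem_cen]
      exact sub_mem (neg_mem (add_mem (add_mem hC hB) hA))
        (add_mem (add_mem (add_mem hD hC) hB) hA)
  · set N := Subgroup.normalClosure ({p₀, p₁, p₂, p₃} : Set G) with hNdef
    have m₀ : p₀ ∈ N := Subgroup.subset_normalClosure (by simp)
    have m₁ : p₁ ∈ N := Subgroup.subset_normalClosure (by simp)
    have m₂ : p₂ ∈ N := Subgroup.subset_normalClosure (by simp)
    have m₃ : p₃ ∈ N := Subgroup.subset_normalClosure (by simp)
    rw [h₀, ← mem_cen] at m₀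
    rw [h₁, ← mem_cen] at m₁
    rw [h₂, ← mem_cen] at m₂
    rw [h₃, ← mem_cen] at m₃
    clear_value N
    clear h₀ h₁ h₂ h₃
    have hA : tau h b c d ∈ cen N := by
      convert neg_mem m₀ using 1; abel
    have hB : tau h a c d ∈ cen N := by
      convert sub_mem (sub_mem (neg_mem m₁) hA) hA using 1; abel
    have hC : tau h a b d ∈ cen N := by
      convert sub_mem (sub_mem (sub_mem (sub_mem (neg_mem m₂) hA) hA) hB) hB using 1; abel
    have hD : tau h a b c ∈ cen N := by
      convert sub_mem (sub_mem (sub_mem (sub_mem (sub_mem (sub_mem (neg_mem m₃) hA) hA) hB) hB)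
        hC) hC using 1; abel
    have hNn : N.Normal := by rw [hNdef]; infer_instance
    refine gamma3_le h N (tau_mem_of_gen h (cen N) _ hS ?_)
    have e1 : ∀ {x y z : G}, tau h x y z ∈ cen N → tau h y x z ∈ cen N := fun {x y z} hm => by
      rw [tau_swap12]; exact neg_mem hm
    have e2 : ∀ {x y z : G}, tau h x y z ∈ cen N → tau h x z y ∈ cen N := fun {x y z} hm => by
      rw [tau_swap23]; exact neg_mem hm
    have s1 : ∀ x z : G, tau h x x z ∈ cen N := fun x z => by
      rw [tau_self12]; exact zero_mem _
    have s2 : ∀ x z : G, tau h x z z ∈ cen N := fun x z => by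
      rw [tau_self23]; exact zero_mem _
    have s3 : ∀ x z : G, tau h x z x ∈ cen N := fun x z => by
      rw [tau_self13]; exact zero_mem _
    rintro x (rfl | rfl | rfl | rfl) y (rfl | rfl | rfl | rfl) z (rfl | rfl | rfl | rfl) <;>
    first
    | with_reducible exact s1 _ _
    | with_reducible exact s2 _ _
    | with_reducible exact s3 _ _
    | with_reducible assumption
    | with_reducible exact e1 (by assumption)
    | with_reducible exact e2 (by assumption)
    | with_reducible exact e1 (e2 (by assumption))
    | with_reducible exact e2 (e1 (by assumption))
    | with_reducible exact e1 (e2 (e1 (by assumption)))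

end B43Aux

theorem normalClosure_P_eq_gamma3 :
    Subgroup.normalClosure ({P 0, P 1, P 2, P 3} : Set B43) =
      Subgroup.lowerCentralSeries (⊤ : Subgroup B43) 2 := by
  have h : ∀ g : B43, g ^ 3 = 1 := by
    intro g
    induction g using QuotientGroup.induction_on with
    | H g =>
      rw [← QuotientGroup.mk_pow, QuotientGroup.eq_one_iff]
      exact Subgroup.subset_normalClosure ⟨g, rfl⟩
  have hS : Subgroup.closure ({x 0, (x 1)⁻¹, x 2, (x 3)⁻¹} : Set B43) = ⊤ := by
    rw [eq_top_iff]
    intro g _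
    set S := Subgroup.closure ({x 0, (x 1)⁻¹, x 2, (x 3)⁻¹} : Set B43)
    have hx : ∀ i, x i ∈ S := by
      intro i
      fin_cases i
      · exact Subgroup.subset_closure (by simp)
      · exact (inv_mem_iff (H := S)).mp (Subgroup.subset_closure (by simp))
      · exact Subgroup.subset_closure (by simp)
      · exact (inv_mem_iff (H := S)).mp (Subgroup.subset_closure (by simp))
    induction g using QuotientGroup.induction_on with
    | H g =>
      induction g using FreeGroup.induction_on with
      | C1 => exact S.one_mem
      | of i => exact hx i
      | inv_of i _ => exact S.inv_mem (hx i)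
      | mul u v hu hv => exact S.mul_mem (hu trivial) (hv trivial)
  refine B43Aux.main_gen h (x 0) (x 1)⁻¹ (x 2) (x 3)⁻¹ hS _ _ _ _ ?_ ?_ ?_ ?_ <;>
  · simp only [P, mul_inv_rev, inv_inv, mul_assoc]
end

section
/- The quotient of B(4,3) by the normal closure of {P₁, P₂, P₃, P₄} (that is, the third Burnside group B_γ̂(3) of the closure of the 5-braid (σ₁σ₂σ₃σ₄)¹⁰) is a finite group of cardinality exactly 3¹⁰. -/
/-- The third Burnside group of the closure of the 5-braid `(σ₁σ₂σ₃σ₄)¹⁰`: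
the quotient of `B(4,3)` by the normal closure of `{P₁, P₂, P₃, P₄}`. -/
abbrev BurnsideGammaHat : Type :=
  B43 ⧸ Subgroup.normalClosure ({P 0, P 1, P 2, P 3} : Set B43)


namespace Exp3
open scoped commutatorElement
variable {G : Type*} [Group G]

lemma conj_comm (h3 : ∀ g : G, g ^ 3 = 1) (x y : G) : Commute x (y * x * y⁻¹) := by
  have h1 : ∀ g : G, g * g = g⁻¹ := fun g => by
    rw [eq_inv_iff_mul_eq_one, ← h3 g, pow_succ, pow_two]
  have e1 : x * y * (x * y) = y⁻¹ * x⁻¹ := by rw [h1, mul_inv_rev]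
  have e2 : x * y⁻¹ * (x * y⁻¹) = y * x⁻¹ := by rw [h1, mul_inv_rev, inv_inv]
  have e3 := h1 y
  show x * (y * x * y⁻¹) = y * x * y⁻¹ * x
  calc x * (y * x * y⁻¹) = x * y * (x * y) * (y * y)⁻¹ := by group
    _ = y⁻¹ * x⁻¹ * y := by rw [e1, e3]; group
    _ = (y * y) * x⁻¹ * y := by rw [e3]
    _ = y * (x * y⁻¹ * (x * y⁻¹)) * y := by rw [e2]; group
    _ = _ := by group

lemma engel (h3 : ∀ g : G, g ^ 3 = 1) (x y : G) : ⁅⁅x, y⁆, y⁆ = 1 := by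
  rw [commutatorElement_eq_one_iff_commute, commutatorElement_def]
  exact (conj_comm h3 y x).symm.mul_left (Commute.refl y).inv_left

lemma engel' (h3 : ∀ g : G, g ^ 3 = 1) (x y : G) : Commute ⁅x, y⁆ x := by
  rw [← commutatorElement_inv y x]
  exact (commutatorElement_eq_one_iff_commute.1 (engel h3 y x)).inv_left

lemma comm_inv_left (h3 : ∀ g : G, g ^ 3 = 1) (u z : G) : ⁅u⁻¹, z⁆ = ⁅u, z⁆⁻¹ := by
  have h := (engel' h3 u z).eq
  have : ⁅u⁻¹, z⁆ = u⁻¹ * (⁅u, z⁆⁻¹) * u := by simp only [commutatorElement_def]; group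
  rw [this, mul_assoc, ((engel' h3 u z).inv_left).eq]; group

lemma ring_fact {R : Type*} [Ring R] (y z : R) (hy : (1-y)*(1-y) = 0) (hz : (1-z)*(1-z)=0)
    (hyz : (1-y*z)*(1-y*z) = 0) : (1-z)*(1-y) + (1-y)*(1-z) = 0 := by
  obtain ⟨Y, rfl⟩ : ∃ Y, y = 1 - Y := ⟨1 - y, by abel⟩
  obtain ⟨Z, rfl⟩ : ∃ Z, z = 1 - Z := ⟨1 - z, by abel⟩
  simp only [sub_sub_cancel] at *
  have e : 1 - (1-Y)*(1-Z) = Y + Z - Y*Z := by noncomm_ring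
  rw [e] at hyz
  have hy' : ∀ w, Y * (Y * w) = 0 := fun w => by rw [← mul_assoc, hy, zero_mul]
  have hz' : ∀ w, Z * (Z * w) = 0 := fun w => by rw [← mul_assoc, hz, zero_mul]
  have e0 : Y*Z + Z*Y - Y*(Z*Y) - Z*(Y*Z) + Y*(Z*(Y*Z)) = 0 := by
    rw [← hyz]
    simp only [mul_add, mul_sub, add_mul, sub_mul, mul_assoc, hy, hz, hy', mul_zero]
    abel
  have e1 : Y*(Z*(Y*Z)) = 0 := by
    have := congrArg (fun t => Y * t * Z) e0
    simpa [mul_add, mul_sub, add_mul, sub_mul, mul_assoc, hy, hz, hy', hz'] using this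
  have e2 : Y*(Z*Y) = 0 := by
    have := congrArg (fun t => Y * t) e0
    simpa [mul_add, mul_sub, add_mul, sub_mul, mul_assoc, hy, hz, hy', hz', e1] using this
  have e3 : Z*(Y*Z) = 0 := by
    have := congrArg (fun t => t * Z) e0
    simpa [mul_add, mul_sub, add_mul, sub_mul, mul_assoc, hy, hz, hy', hz', e1] using this
  rw [e1, e2, e3] at e0
  simpa [add_comm] using e0

lemma swap23 (h3 : ∀ g : G, g ^ 3 = 1) (x y z : G) : ⁅⁅x, y⁆, z⁆ = ⁅⁅x, z⁆, y⁆⁻¹ := by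
  let N := Subgroup.normalClosure ({x} : Set G)
  have hN : ∀ a ∈ N, ∀ b ∈ N, a * b = b * a := by
    have hc : ∀ a ∈ Group.conjugatesOfSet ({x} : Set G),
        ∀ b ∈ Group.conjugatesOfSet ({x} : Set G), a * b = b * a := by
      intro a ha b hb
      simp only [Group.mem_conjugatesOfSet_iff, Set.mem_singleton_iff, exists_eq_left,
        isConj_iff] at ha hb
      obtain ⟨g, rfl⟩ := ha
      obtain ⟨h, rfl⟩ := hb
      have := conj_comm h3 (g * x * g⁻¹) (h * g⁻¹)
      have e : h * g⁻¹ * (g * x * g⁻¹) * (h * g⁻¹)⁻¹ = h * x * h⁻¹ := by group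
      rw [e] at this
      exact this.eq
    have := Subgroup.isMulCommutative_closure hc
    intro a ha b hb
    exact congrArg Subtype.val (this.is_comm.comm (⟨a, ha⟩ : N) ⟨b, hb⟩)
  let _ : CommGroup N := { (inferInstance : Group N) with
    mul_comm := fun a b => Subtype.ext (hN _ a.2 _ b.2) }
  let φ : G → AddMonoid.End (Additive N) := fun g =>
    MonoidHom.toAdditive (MulAut.conjNormal (H := N) g).toMonoidHom
  have hφ : ∀ g (n : Additive N), ((Additive.toMul ((1 - φ g) n) : N) : G)
      = ⁅((Additive.toMul n : N) : G), g⁆ := by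
    intro g n
    have : (((Additive.toMul n : N) * (MulAut.conjNormal (H := N) g (Additive.toMul n))⁻¹ : N) : G)
      = ⁅((Additive.toMul n : N) : G), g⁆ := by
      simp only [Subgroup.coe_mul, Subgroup.coe_inv, MulAut.conjNormal_apply, commutatorElement_def]
      group
    rw [← this]
    show ((Additive.toMul (n - φ g n) : N) : G) = _
    rw [sub_eq_add_neg]
    rfl
  have hmul : ∀ g h, φ (g * h) = φ g * φ h := by
    intro g h
    ext n
    simp [φ]; rfl
  have hsq : ∀ g, (1 - φ g) * (1 - φ g) = 0 := by
    intro g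
    apply AddMonoidHom.ext
    intro n
    apply Additive.toMul.injective
    apply Subtype.ext
    have := hφ g ((1 - φ g) n)
    rw [hφ g n, engel h3] at this
    exact this
  have key := ring_fact (φ y) (φ z) (hsq y) (hsq z) (by rw [← hmul]; exact hsq _)
  have hx : x ∈ N := Subgroup.subset_normalClosure rfl
  have k2 := DFunLike.congr_fun key (Additive.ofMul (⟨x, hx⟩ : N))
  have k3 := congrArg (fun t => ((Additive.toMul t : N) : G)) k2
  have k4 : ((Additive.toMul ((1 - φ z) ((1 - φ y) (Additive.ofMul (⟨x, hx⟩ : N)))) : N) : G)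
    * ((Additive.toMul ((1 - φ y) ((1 - φ z) (Additive.ofMul (⟨x, hx⟩ : N)))) : N) : G) = 1 := k3
  simp only [hφ] at k4
  exact eq_inv_of_mul_eq_one_left k4

lemma swap12 (h3 : ∀ g : G, g ^ 3 = 1) (x y z : G) : ⁅⁅x, y⁆, z⁆ = ⁅⁅y, x⁆, z⁆⁻¹ := by
  rw [← commutatorElement_inv y x, comm_inv_left h3]

lemma class3 (h3 : ∀ g : G, g ^ 3 = 1) (x y z w : G) : ⁅⁅⁅x, y⁆, z⁆, w⁆ = 1 := by
  have s1 : ∀ x y z w : G, ⁅⁅⁅x, y⁆, z⁆, w⁆ = ⁅⁅⁅y, x⁆, z⁆, w⁆⁻¹ := fun x y z w => by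
    rw [swap12 h3 x y z, comm_inv_left h3]
  have s2 : ∀ x y z w : G, ⁅⁅⁅x, y⁆, z⁆, w⁆ = ⁅⁅⁅x, z⁆, y⁆, w⁆⁻¹ := fun x y z w => by
    rw [swap23 h3 x y z, comm_inv_left h3]
  have s3 : ∀ x y z w : G, ⁅⁅⁅x, y⁆, z⁆, w⁆ = ⁅⁅⁅x, y⁆, w⁆, z⁆⁻¹ := fun x y z w => swap23 h3 _ z w
  have t1 : ∀ x y z w : G, ⁅⁅⁅x, y⁆, z⁆, w⁆ = ⁅⁅z, w⁆, ⁅x, y⁆⁆ := fun x y z w => by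
    rw [swap12 h3 ⁅x, y⁆ z w, swap23 h3 z _ w, inv_inv]
  have a : ⁅⁅⁅x, y⁆, z⁆, w⁆ = ⁅⁅⁅z, w⁆, x⁆, y⁆ := by
    rw [s2 x y z w, s1 x z y w, s3 z x y w, s2 z x w y]; simp
  have b : ⁅⁅⁅x, y⁆, z⁆, w⁆ = (⁅⁅⁅z, w⁆, x⁆, y⁆)⁻¹ := by
    rw [t1, t1, commutatorElement_inv]
  rw [← a] at b
  have h := h3 ⁅⁅⁅x, y⁆, z⁆, w⁆
  rw [pow_succ, pow_two] at h
  rw [eq_inv_iff_mul_eq_one] at b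
  rwa [b, one_mul] at h


/-- commutators with `g` are central -/
def C (g : G) : Prop := ∀ h w : G, Commute ⁅g, h⁆ w

lemma C_comm (h3 : ∀ g : G, g ^ 3 = 1) (x y : G) : C ⁅x, y⁆ := fun h w =>
  commutatorElement_eq_one_iff_commute.1 (class3 h3 x y h w)

lemma C.mul_right {g : G} (hg : C g) (h k : G) : ⁅g, h * k⁆ = ⁅g, h⁆ * ⁅g, k⁆ := by
  have : ⁅g, h * k⁆ = ⁅g, h⁆ * (h * ⁅g, k⁆ * h⁻¹) := by simp only [commutatorElement_def]; group
  rw [this, ← (hg k h).eq, mul_inv_cancel_right]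

lemma C.inv_right {g : G} (hg : C g) (h : G) : ⁅g, h⁻¹⁆ = ⁅g, h⁆⁻¹ := by
  rw [eq_inv_iff_mul_eq_one, ← hg.mul_right]; simp

lemma C.mul_left {g' : G} (hg : C g') (g h : G) : ⁅g * g', h⁆ = ⁅g, h⁆ * ⁅g', h⁆ := by
  have : ⁅g * g', h⁆ = (g * ⁅g', h⁆ * g⁻¹) * ⁅g, h⁆ := by
    simp only [commutatorElement_def]; group
  rw [this, ← (hg h g).eq, mul_inv_cancel_right, (hg h _).eq]

lemma C.conj {u : G} (hu : C u) (y z : G) : ⁅y * u * y⁻¹, z⁆ = ⁅u, z⁆ := by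
  have e : y * u * y⁻¹ = ⁅u, y⁆⁻¹ * u := by simp only [commutatorElement_def]; group
  have h1 : Commute ⁅u, y⁆⁻¹ z := (hu y z).inv_left
  rw [e, hu.mul_left, commutatorElement_eq_one_iff_commute.2 h1, one_mul]

lemma C.mulC {u v : G} (hu : C u) (hv : C v) : C (u * v) := fun h w => by
  rw [hv.mul_left]; exact (hu h w).mul_left (hv h w)

lemma C.conjC {u : G} (hu : C u) (y : G) : C (y * u * y⁻¹) := fun h w => by
  rw [hu.conj]; exact hu h w

section
lemma T_mul (x y y' z : G) (h3 : ∀ g : G, g ^ 3 = 1) :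
    ⁅⁅x, y * y'⁆, z⁆ = ⁅⁅x, y⁆, z⁆ * ⁅⁅x, y'⁆, z⁆ := by
  have : ⁅x, y * y'⁆ = ⁅x, y⁆ * (y * ⁅x, y'⁆ * y⁻¹) := by
    simp only [commutatorElement_def]; group
  rw [this, ((C_comm h3 x y').conjC y).mul_left, (C_comm h3 x y').conj]

lemma T_inv (x y z : G) (h3 : ∀ g : G, g ^ 3 = 1) :
    ⁅⁅x⁻¹, y⁻¹⁆, z⁆ = ⁅⁅x, y⁆, z⁆ := by
  rw [comm_inv_left h3, comm_inv_left h3, ← commutatorElement_inv y⁻¹ x, comm_inv_left h3,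
    comm_inv_left h3, swap12 h3 x y, comm_inv_left h3, inv_inv]

lemma T_rev (x y z : G) (h3 : ∀ g : G, g ^ 3 = 1) : ⁅⁅z, y⁆, x⁆ = ⁅⁅x, y⁆, z⁆⁻¹ := by
  rw [swap12 h3 z y, swap23 h3 y z x, swap12 h3 y x]; simp

lemma T_cyc (x y z : G) (h3 : ∀ g : G, g ^ 3 = 1) : ⁅⁅z, x⁆, y⁆ = ⁅⁅x, y⁆, z⁆ := by
  rw [swap12 h3 z x, swap23 h3 x z y]; simp

lemma lin {H : Type*} [CommGroup H] (e1 e2 e3 e4 : H) (q1 : e2⁻¹ * e3⁻¹ * e4⁻¹ = 1)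
    (q2 : e1⁻¹ * e3 * e4 = 1) (q3 : e1 * e2 * e4⁻¹ = 1) (q4 : e1⁻¹ * e2⁻¹ * e3⁻¹ = 1) :
    e1 = 1 ∧ e2 = 1 ∧ e3 = 1 ∧ e4 = 1 := by
  have k : e1 * e2 = 1 := by
    have : e1 * e2 = (e2⁻¹ * e3⁻¹ * e4⁻¹)⁻¹ * (e1⁻¹ * e3 * e4)⁻¹ := by
      simp only [mul_inv, inv_inv]
      rw [show e2 * e3 * e4 * (e1 * e3⁻¹ * e4⁻¹) = e1 * e2 * (e3 * e3⁻¹) * (e4 * e4⁻¹) by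
        simp only [mul_assoc, mul_left_comm, mul_comm]]
      simp
    rw [this, q1, q2]; simp
  have h4 : e4 = 1 := by simpa [k] using q3
  have h3 : e3 = 1 := by
    rw [← mul_inv, k] at q4; simpa using q4
  subst h4; subst h3
  simp at q1 q2
  exact ⟨q2, q1, rfl, rfl⟩

lemma lin' {H : Type*} [hH : Group H] (hc : ∀ u v : H, u * v = v * u)
    (e1 e2 e3 e4 : H) (q1 : e2⁻¹ * e3⁻¹ * e4⁻¹ = 1)
    (q2 : e1⁻¹ * e3 * e4 = 1) (q3 : e1 * e2 * e4⁻¹ = 1) (q4 : e1⁻¹ * e2⁻¹ * e3⁻¹ = 1) :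
    e1 = 1 ∧ e2 = 1 ∧ e3 = 1 ∧ e4 = 1 :=
  @lin H { hH with mul_comm := hc } e1 e2 e3 e4 q1 q2 q3 q4

lemma relations (h3 : ∀ g : G, g ^ 3 = 1) (a b c d : G)
    (hB : ∀ y ∈ ({a, b⁻¹, c, d⁻¹} : Set G), (a * b * c * d) * (d * c * b * a)⁻¹ * y *
      ((a * b * c * d)⁻¹ * (d * c * b * a)) * y⁻¹ = 1) :
    ⁅⁅b, c⁆, d⁆ = 1 ∧ ⁅⁅a, c⁆, d⁆ = 1 ∧ ⁅⁅a, b⁆, d⁆ = 1 ∧ ⁅⁅a, b⁆, c⁆ = 1 := by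
  obtain ⟨U, hU⟩ : ∃ U, U = a * b * c * d := ⟨_, rfl⟩
  obtain ⟨V, hV⟩ : ∃ V, V = d * c * b * a := ⟨_, rfl⟩
  obtain ⟨B, hBd⟩ : ∃ B, B = U⁻¹ * V := ⟨_, rfl⟩
  have dec : B = (d⁻¹ * ((c⁻¹ * ⁅b⁻¹, a⁻¹⁆ * c⁻¹⁻¹) * ⁅c⁻¹, (b * a)⁻¹⁆) * d⁻¹⁻¹)
      * ⁅d⁻¹, (c * (b * a))⁻¹⁆ := by
    rw [hBd, hU, hV]; simp only [commutatorElement_def]; group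
  have c1 := (C_comm h3 b⁻¹ a⁻¹).conjC c⁻¹
  have c2 := c1.mulC (C_comm h3 c⁻¹ (b * a)⁻¹)
  have CB : C B := by
    rw [dec]
    exact (c2.conjC _).mulC (C_comm h3 _ _)
  have form : ∀ y : G, ⁅B, y⁆ = ⁅⁅b, a⁆, y⁆ * (⁅⁅c, b⁆, y⁆ * ⁅⁅c, a⁆, y⁆) *
      (⁅⁅d, c⁆, y⁆ * (⁅⁅d, b⁆, y⁆ * ⁅⁅d, a⁆, y⁆)) := by
    intro y
    rw [dec, (C_comm h3 _ _).mul_left, c2.conj, (C_comm h3 _ _).mul_left, (C_comm h3 _ _).conj]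
    simp only [T_inv _ _ _ h3, T_mul _ _ _ _ h3]
  rw [← hU, ← hV, ← hBd] at hB
  have hy : ∀ y ∈ ({a, b⁻¹, c, d⁻¹} : Set G), ⁅B, y⁆ = B * (U * V⁻¹) := by
    intro y hy
    have h := hB y hy
    have : ⁅B, y⁆ = B * (U * V⁻¹ * y * B * y⁻¹)⁻¹ * (U * V⁻¹) := by
      simp only [commutatorElement_def]; group
    rw [this, h]; simp
  have hUB : ⁅B, U⁆ = B * (U * V⁻¹) := by
    rw [hBd]; simp only [commutatorElement_def]; group
  have ha := hy a (by simp)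
  have hb := hy b⁻¹ (by simp)
  have hc := hy c (by simp)
  have hd := hy d⁻¹ (by simp)
  rw [CB.inv_right, inv_eq_iff_eq_inv] at hb hd
  have hU1 : ⁅B, U⁆ = 1 := by
    rw [hU, CB.mul_right, CB.mul_right, CB.mul_right, ha, hb, hc, hd]; group
  rw [← hUB, hU1] at ha hb hc hd
  rw [inv_one] at hb hd
  have g1 : ∀ x y : G, ⁅⁅x, y⁆, y⁆ = 1 := engel h3
  have g2 : ∀ x y : G, ⁅⁅x, y⁆, x⁆ = 1 := fun x y =>
    commutatorElement_eq_one_iff_commute.2 (engel' h3 x y)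
  rw [form] at ha hb hc hd
  simp only [g1, g2, one_mul, mul_one] at ha hb hc hd
  rw [T_rev a b c h3, T_rev a c d h3, T_rev a b d h3] at ha
  rw [T_cyc a b c h3, T_rev b c d h3, T_cyc a b d h3] at hb
  rw [swap12 h3 b a c, T_cyc b c d h3, T_cyc a c d h3] at hc
  rw [swap12 h3 b a d, swap12 h3 c b d, swap12 h3 c a d] at hd
  have cen : ∀ x y z : G, ⁅⁅x, y⁆, z⁆ ∈ Subgroup.center G := fun x y z =>
    Subgroup.mem_center_iff.2 fun w => ((C_comm h3 x y z w).eq).symm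
  obtain ⟨e1, h1⟩ : ∃ e : Subgroup.center G, (e : G) = ⁅⁅b, c⁆, d⁆ := ⟨⟨_, cen _ _ _⟩, rfl⟩
  obtain ⟨e2, h2⟩ : ∃ e : Subgroup.center G, (e : G) = ⁅⁅a, c⁆, d⁆ := ⟨⟨_, cen _ _ _⟩, rfl⟩
  obtain ⟨e3, h3⟩ : ∃ e : Subgroup.center G, (e : G) = ⁅⁅a, b⁆, d⁆ := ⟨⟨_, cen _ _ _⟩, rfl⟩
  obtain ⟨e4, h4⟩ : ∃ e : Subgroup.center G, (e : G) = ⁅⁅a, b⁆, c⁆ := ⟨⟨_, cen _ _ _⟩, rfl⟩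
  rw [← h1, ← h2, ← h3, ← h4]
  simp only [← h1, ← h2, ← h3, ← h4] at ha hb hc hd
  have z1 : e2⁻¹ * e3⁻¹ * e4⁻¹ = 1 := by
    rw [mul_eq_one_comm]; exact Subtype.ext ha
  have z2 : e1⁻¹ * e3 * e4 = 1 := by
    rw [mul_eq_one_comm]; exact Subtype.ext hb
  have z3 : e1 * e2 * e4⁻¹ = 1 := by
    rw [mul_eq_one_comm]; exact Subtype.ext hc
  have z4 : e1⁻¹ * e2⁻¹ * e3⁻¹ = 1 := by
    rw [mul_eq_one_comm]; exact Subtype.ext hd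
  obtain ⟨k1, k2, k3, k4⟩ := lin' (fun u v => Subtype.ext (Subgroup.mem_center_iff.1 v.2 u)) e1 e2 e3 e4 z1 z2 z3 z4
  rw [k1, k2, k3, k4]
  exact ⟨rfl, rfl, rfl, rfl⟩
end

open scoped Pointwise in
lemma bound_step (h3 : ∀ g : G, g ^ 3 = 1) (H : Subgroup G) (g : G) {n : ℕ}
    (hn : H.Normal ∨ (Subgroup.zpowers g).Normal)
    (hH : (H : Set G).Finite ∧ (H : Set G).ncard ≤ n) :
    ((H ⊔ Subgroup.zpowers g : Subgroup G) : Set G).Finite ∧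
      ((H ⊔ Subgroup.zpowers g : Subgroup G) : Set G).ncard ≤ n * 3 := by
  have e : ((H ⊔ Subgroup.zpowers g : Subgroup G) : Set G)
      = (H : Set G) * (Subgroup.zpowers g : Set G) := by
    rcases hn with hn | hn
    · exact Subgroup.normal_mul _ _
    · exact Subgroup.mul_normal _ _
  have hz : (Subgroup.zpowers g : Set G).Finite ∧ (Subgroup.zpowers g : Set G).ncard ≤ 3 := by
    have : orderOf g ∣ 3 := orderOf_dvd_of_pow_eq_one (h3 g)
    constructor
    · exact (isOfFinOrder_iff_pow_eq_one.2 ⟨3, by norm_num, h3 g⟩).finite_zpowers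
    · show Nat.card (Subgroup.zpowers g) ≤ 3
      rw [Nat.card_zpowers]; exact Nat.le_of_dvd (by norm_num) this
  rw [e]
  refine ⟨hH.1.mul hz.1, ?_⟩
  calc _ ≤ (H : Set G).ncard * (Subgroup.zpowers g : Set G).ncard := Set.natCard_mul_le
    _ ≤ _ := Nat.mul_le_mul hH.2 hz.2

lemma upper (h3 : ∀ g : G, g ^ 3 = 1) (a b c d : G)
    (hgen : Subgroup.closure ({a, b, c, d} : Set G) = ⊤)
    (hc : ∀ p ∈ ({a, b, c, d} : Set G), ∀ q ∈ ({a, b, c, d} : Set G),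
      ∀ r ∈ ({a, b, c, d} : Set G), ⁅⁅p, q⁆, r⁆ = 1) :
    Finite G ∧ Nat.card G ≤ 3 ^ 10 := by
  have cen : ∀ p ∈ ({a, b, c, d} : Set G), ∀ q ∈ ({a, b, c, d} : Set G),
      ⁅p, q⁆ ∈ Subgroup.center G := by
    intro p hp q hq
    have : Subgroup.closure ({a, b, c, d} : Set G) ≤ Subgroup.centralizer {⁅p, q⁆} := by
      rw [Subgroup.closure_le]
      intro r hr
      rw [SetLike.mem_coe, Subgroup.mem_centralizer_singleton_iff]
      exact (commutatorElement_eq_one_iff_commute.1 (hc p hp q hq r hr)).symm.eq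
    rw [hgen] at this
    rw [Subgroup.mem_center_iff]
    intro g
    exact Subgroup.mem_centralizer_singleton_iff.1 (this (Subgroup.mem_top g))
  have zn : ∀ p ∈ ({a, b, c, d} : Set G), ∀ q ∈ ({a, b, c, d} : Set G),
      (Subgroup.zpowers ⁅p, q⁆).Normal := by
    intro p hp q hq
    have : Subgroup.zpowers ⁅p, q⁆ ≤ Subgroup.center G := by simpa using cen p hp q hq
    refine ⟨fun n hn g => ?_⟩
    rw [Subgroup.mem_center_iff.1 (this hn) g, mul_inv_cancel_right]; exact hn
  have Dn : ∀ H : Subgroup G, (∀ p ∈ ({a, b, c, d} : Set G), ∀ q ∈ ({a, b, c, d} : Set G),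
      ⁅p, q⁆ ∈ H) → H.Normal := by
    intro H hH
    let S : Set G := {g | ∃ p ∈ ({a, b, c, d} : Set G), ∃ q ∈ ({a, b, c, d} : Set G), g = ⁅p, q⁆}
    let D : Subgroup G := Subgroup.closure S
    have hDH : D ≤ H := by
      rw [Subgroup.closure_le]; rintro _ ⟨p, hp, q, hq, rfl⟩; exact hH p hp q hq
    have hDc : D ≤ Subgroup.center G := by
      rw [Subgroup.closure_le]; rintro _ ⟨p, hp, q, hq, rfl⟩; exact cen p hp q hq
    have key : ∀ g h : G, ⁅g, h⁆ ∈ D := by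
      have k1 : ∀ p ∈ ({a, b, c, d} : Set G), ∀ h : G, ⁅p, h⁆ ∈ D := by
        intro p hp h
        have hh : h ∈ Subgroup.closure ({a, b, c, d} : Set G) := hgen ▸ Subgroup.mem_top h
        induction hh using Subgroup.closure_induction with
        | mem q hq => exact Subgroup.subset_closure ⟨p, hp, q, hq, rfl⟩
        | one => simp
        | mul u v _ _ hu hv =>
          have : ⁅p, u * v⁆ = ⁅p, u⁆ * (u * ⁅p, v⁆ * u⁻¹) := by
            simp only [commutatorElement_def]; group
          rw [this, Subgroup.mem_center_iff.1 (hDc hv) u, mul_inv_cancel_right]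
          exact mul_mem hu hv
        | inv u _ hu =>
          have : ⁅p, u⁻¹⁆ = u⁻¹ * ⁅p, u⁆⁻¹ * u := by
            simp only [commutatorElement_def]; group
          rw [this, Subgroup.mem_center_iff.1 (hDc (inv_mem hu)) u⁻¹, inv_mul_cancel_right]
          exact inv_mem hu
      intro g h
      have hg : g ∈ Subgroup.closure ({a, b, c, d} : Set G) := hgen ▸ Subgroup.mem_top g
      induction hg using Subgroup.closure_induction with
      | mem q hq => exact k1 q hq h
      | one => simp
      | mul u v _ _ hu hv =>
        have : ⁅u * v, h⁆ = (u * ⁅v, h⁆ * u⁻¹) * ⁅u, h⁆ := by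
          simp only [commutatorElement_def]; group
        rw [this, Subgroup.mem_center_iff.1 (hDc hv) u, mul_inv_cancel_right]
        exact mul_mem hv hu
      | inv u _ hu =>
        have : ⁅u⁻¹, h⁆ = u⁻¹ * ⁅u, h⁆⁻¹ * u := by
          simp only [commutatorElement_def]; group
        rw [this, Subgroup.mem_center_iff.1 (hDc (inv_mem hu)) u⁻¹, inv_mul_cancel_right]
        exact inv_mem hu
    refine ⟨fun n hn g => ?_⟩
    have : g * n * g⁻¹ = ⁅g, n⁆ * n := by simp only [commutatorElement_def]; group
    rw [this]
    exact mul_mem (hDH (key g n)) hn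
  have b0 : ((⊥ : Subgroup G) : Set G).Finite ∧ ((⊥ : Subgroup G) : Set G).ncard ≤ 1 := by simp
  have b1 := bound_step h3 _ ⁅a, b⁆ (Or.inr (zn _ (by simp) _ (by simp))) b0
  have b2 := bound_step h3 _ ⁅a, c⁆ (Or.inr (zn _ (by simp) _ (by simp))) b1
  have b3 := bound_step h3 _ ⁅a, d⁆ (Or.inr (zn _ (by simp) _ (by simp))) b2
  have b4 := bound_step h3 _ ⁅b, c⁆ (Or.inr (zn _ (by simp) _ (by simp))) b3
  have b5 := bound_step h3 _ ⁅b, d⁆ (Or.inr (zn _ (by simp) _ (by simp))) b4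
  have b6 := bound_step h3 _ ⁅c, d⁆ (Or.inr (zn _ (by simp) _ (by simp))) b5
  obtain ⟨K, hK⟩ : ∃ K : Subgroup G, K = (⊥ ⊔ Subgroup.zpowers ⁅a, b⁆ ⊔ Subgroup.zpowers ⁅a, c⁆
    ⊔ Subgroup.zpowers ⁅a, d⁆ ⊔ Subgroup.zpowers ⁅b, c⁆ ⊔ Subgroup.zpowers ⁅b, d⁆
    ⊔ Subgroup.zpowers ⁅c, d⁆ : Subgroup G) := ⟨_, rfl⟩
  rw [← hK] at b6
  have mm : ∀ g : G, Subgroup.zpowers g ≤ K → g ∈ K := fun g h => by simpa using h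
  have m1 : ⁅a, b⁆ ∈ K := mm _ (hK ▸ by order)
  have m2 : ⁅a, c⁆ ∈ K := mm _ (hK ▸ by order)
  have m3 : ⁅a, d⁆ ∈ K := mm _ (hK ▸ by order)
  have m4 : ⁅b, c⁆ ∈ K := mm _ (hK ▸ by order)
  have m5 : ⁅b, d⁆ ∈ K := mm _ (hK ▸ by order)
  have m6 : ⁅c, d⁆ ∈ K := mm _ (hK ▸ by order)
  have sw : ∀ p q : G, ⁅p, q⁆ ∈ K → ⁅q, p⁆ ∈ K := fun p q h => by
    rw [← commutatorElement_inv]; exact inv_mem h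
  have nK : ∀ H : Subgroup G, K ≤ H → H.Normal := by
    intro H hKH
    apply Dn
    intro p hp q hq
    apply hKH
    rcases hp with rfl | rfl | rfl | rfl <;> rcases hq with rfl | rfl | rfl | rfl <;>
      first
      | assumption
      | (apply sw; assumption)
      | (rw [commutatorElement_self]; exact one_mem K)
  have b7 := bound_step h3 _ a (Or.inl (nK _ le_rfl)) b6
  have b8 := bound_step h3 _ b (Or.inl (nK _ (by order))) b7
  have b9 := bound_step h3 _ c (Or.inl (nK _ (by order))) b8
  have b10 := bound_step h3 _ d (Or.inl (nK _ (by order))) b9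
  have top : (K ⊔ Subgroup.zpowers a ⊔ Subgroup.zpowers b ⊔ Subgroup.zpowers c
      ⊔ Subgroup.zpowers d : Subgroup G) = ⊤ := by
    rw [eq_top_iff, ← hgen, Subgroup.closure_le]
    have mm : ∀ (g : G) (L : Subgroup G), Subgroup.zpowers g ≤ L → g ∈ L :=
      fun g L h => by simpa using h
    rintro p (rfl | rfl | rfl | rfl) <;> exact mm _ _ (by order)
  rw [top] at b10
  refine ⟨Set.finite_univ_iff.1 (by simpa using b10.1), ?_⟩
  have := b10.2
  rw [Subgroup.coe_top, Set.ncard_univ] at this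
  exact this.trans (by norm_num)

lemma allT (h3 : ∀ g : G, g ^ 3 = 1) (a b c d : G) (r1 : ⁅⁅b, c⁆, d⁆ = 1)
    (r2 : ⁅⁅a, c⁆, d⁆ = 1) (r3 : ⁅⁅a, b⁆, d⁆ = 1) (r4 : ⁅⁅a, b⁆, c⁆ = 1) :
    ∀ p ∈ ({a, b, c, d} : Set G), ∀ q ∈ ({a, b, c, d} : Set G),
      ∀ r ∈ ({a, b, c, d} : Set G), ⁅⁅p, q⁆, r⁆ = 1 := by
  have g1 : ∀ x y : G, ⁅⁅x, y⁆, y⁆ = 1 := engel h3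
  have g2 : ∀ x y : G, ⁅⁅x, y⁆, x⁆ = 1 := fun x y =>
    commutatorElement_eq_one_iff_commute.2 (engel' h3 x y)
  have g3 : ∀ x y : G, ⁅⁅x, x⁆, y⁆ = 1 := fun x y => by simp
  have p1 : ∀ x y z : G, ⁅⁅x, y⁆, z⁆ = 1 → ⁅⁅y, x⁆, z⁆ = 1 := fun x y z h => by
    rw [swap12 h3, h, inv_one]
  have p2 : ∀ x y z : G, ⁅⁅x, y⁆, z⁆ = 1 → ⁅⁅z, x⁆, y⁆ = 1 := fun x y z h => by
    rw [T_cyc _ _ _ h3, h]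
  clear h3
  rintro p (rfl | rfl | rfl | rfl) q (rfl | rfl | rfl | rfl) r (rfl | rfl | rfl | rfl) <;>
    first
    | exact g1 _ _
    | exact g2 _ _
    | exact g3 _ _
    | assumption
    | (apply p1; assumption)
    | (apply p2; assumption)
    | (apply p2; apply p2; assumption)
    | (apply p1; apply p2; assumption)
    | (apply p1; apply p2; apply p2; assumption)


end Exp3

/-- The free class-2 exponent-3 group on four generators. -/
@[ext]
structure Mdl where
  v : Fin 4 → ZMod 3
  c : Fin 6 → ZMod 3

namespace Mdl

def I : Fin 6 → Fin 4 := ![0, 0, 0, 1, 1, 2]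
def J : Fin 6 → Fin 4 := ![1, 2, 3, 2, 3, 3]

instance : Mul Mdl := ⟨fun a b => ⟨a.v + b.v, fun p => a.c p + b.c p + a.v (I p) * b.v (J p)⟩⟩
instance : One Mdl := ⟨⟨0, 0⟩⟩
instance : Inv Mdl := ⟨fun a => ⟨-a.v, fun p => -a.c p + a.v (I p) * a.v (J p)⟩⟩

@[simp] lemma mul_v (a b : Mdl) : (a * b).v = a.v + b.v := rfl
@[simp] lemma mul_c (a b : Mdl) (p) :
    (a * b).c p = a.c p + b.c p + a.v (I p) * b.v (J p) := rfl
@[simp] lemma one_v : (1 : Mdl).v = 0 := rfl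
@[simp] lemma one_c : (1 : Mdl).c = 0 := rfl
@[simp] lemma inv_v (a : Mdl) : (a⁻¹).v = -a.v := rfl
@[simp] lemma inv_c (a : Mdl) (p) : (a⁻¹).c p = -a.c p + a.v (I p) * a.v (J p) := rfl

instance : Group Mdl := Group.ofLeftAxioms
  (fun a b c => by
    ext p
    · simp [add_assoc]
    · simp; ring)
  (fun a => by ext p <;> simp)
  (fun a => by ext p <;> simp)

lemma cube (a : Mdl) : a ^ 3 = 1 := by
  have h : (3 : ZMod 3) = 0 := rfl
  rw [pow_succ, pow_two]
  ext p
  · simp only [mul_v, one_v, Pi.add_apply, Pi.zero_apply]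
    linear_combination (a.v p) * h
  · simp only [mul_c, mul_v, one_c, Pi.add_apply, Pi.zero_apply]
    linear_combination (a.c p + a.v (I p) * a.v (J p)) * h

def e (i : Fin 4) : Mdl := ⟨Pi.single i 1, 0⟩
def f (p : Fin 6) : Mdl := ⟨0, Pi.single p 1⟩

def equiv : Mdl ≃ (Fin 4 → ZMod 3) × (Fin 6 → ZMod 3) where
  toFun a := (a.v, a.c)
  invFun a := ⟨a.1, a.2⟩
  left_inv _ := rfl
  right_inv _ := rfl

lemma card : Nat.card Mdl = 3 ^ 10 := by
  rw [Nat.card_congr equiv]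
  simp [Nat.card_eq_fintype_card]

lemma IJ (p : Fin 6) : I p ≠ J p := by revert p; decide

lemma e_pow (i : Fin 4) (n : ℕ) : e i ^ n = ⟨Pi.single i (n : ZMod 3), 0⟩ := by
  induction n with
  | zero => ext p <;> simp
  | succ n ih =>
    rw [pow_succ, ih]
    ext p
    · by_cases h : p = i
      · subst h; simp [e]
      · simp [e, h]
    · have := IJ p
      simp only [mul_c, e, Pi.zero_apply, add_zero, zero_add]
      by_cases h : I p = i
      · have : J p ≠ i := fun h' => this (h.trans h'.symm)
        simp [this]
      · simp [h]

lemma f_pow (i : Fin 6) (n : ℕ) : f i ^ n = ⟨0, Pi.single i (n : ZMod 3)⟩ := by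
  induction n with
  | zero => ext p <;> simp
  | succ n ih =>
    rw [pow_succ, ih]
    ext p
    · simp [f]
    · by_cases h : p = i
      · subst h; simp [f]
      · simp [f, h]

lemma f_eq (p : Fin 6) : f p = e (I p) * e (J p) * (e (J p) * e (I p))⁻¹ := by
  revert p
  have : ∀ p, (f p).v = (e (I p) * e (J p) * (e (J p) * e (I p))⁻¹).v ∧
    (f p).c = (e (I p) * e (J p) * (e (J p) * e (I p))⁻¹).c := by decide
  intro p
  exact Mdl.ext (this p).1 (this p).2

lemma gen (H : Subgroup Mdl) (h : ∀ i, e i ∈ H) : H = ⊤ := by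
  have hf : ∀ p, f p ∈ H := fun p => by
    rw [f_eq]
    exact mul_mem (mul_mem (h _) (h _)) (inv_mem (mul_mem (h _) (h _)))
  have hc : ∀ c : Fin 6 → ZMod 3, (⟨0, c⟩ : Mdl) ∈ H := by
    intro c
    have : (⟨0, c⟩ : Mdl) = f 0 ^ (c 0).val * f 1 ^ (c 1).val * f 2 ^ (c 2).val *
        f 3 ^ (c 3).val * f 4 ^ (c 4).val * f 5 ^ (c 5).val := by
      simp only [f_pow]
      ext p
      · simp
      · fin_cases p <;> simp
    rw [this]
    repeat' first | apply mul_mem | exact pow_mem (hf _) _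
  rw [eq_top_iff]
  intro a _
  let b : Mdl := e 3 ^ (a.v 3).val * e 2 ^ (a.v 2).val * e 1 ^ (a.v 1).val * e 0 ^ (a.v 0).val
  have hb : b ∈ H := by
    repeat' first | apply mul_mem | exact pow_mem (h _) _
  have hv : b.v = a.v := by
    simp only [b, e_pow]
    ext p
    fin_cases p <;> simp
  have : a = b * ⟨0, fun p => a.c p - b.c p⟩ := by
    ext p
    · simp [hv]
    · simp
  rw [this]
  exact mul_mem hb (hc _)

end Mdl

namespace Gam

lemma B43_cube (g : B43) : g ^ 3 = 1 := by
  induction g using QuotientGroup.induction_on with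
  | H w =>
    rw [← QuotientGroup.mk_pow, QuotientGroup.eq_one_iff]
    exact Subgroup.subset_normalClosure ⟨w, rfl⟩

/-- the generators of the quotient -/
def y (i : Fin 4) : BurnsideGammaHat := QuotientGroup.mk (x i)

lemma cube (g : BurnsideGammaHat) : g ^ 3 = 1 := by
  induction g using QuotientGroup.induction_on with
  | H w => rw [← QuotientGroup.mk_pow, B43_cube]; rfl

lemma rel (i : Fin 4) :
    y 0 * (y 1)⁻¹ * y 2 * (y 3)⁻¹ * (y 0)⁻¹ * y 1 * (y 2)⁻¹ * y 3 * y i *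
    (y 3 * (y 2)⁻¹ * y 1 * (y 0)⁻¹ * (y 3)⁻¹ * y 2 * (y 1)⁻¹ * y 0) * (y i)⁻¹ = 1 := by
  have : (QuotientGroup.mk (P i) : BurnsideGammaHat) = 1 := by
    rw [QuotientGroup.eq_one_iff]
    apply Subgroup.subset_normalClosure
    fin_cases i <;> simp
  exact this

lemma gen (H : Subgroup BurnsideGammaHat) (h : ∀ i, y i ∈ H) : H = ⊤ := by
  rw [eq_top_iff]
  intro g _
  induction g using QuotientGroup.induction_on with
  | H g =>
    induction g using QuotientGroup.induction_on with
    | H w =>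
      induction w using FreeGroup.induction_on with
      | C1 => exact one_mem H
      | of i => exact h i
      | inv_of i _ => exact inv_mem (h i)
      | mul u v hu hv => exact mul_mem (hu trivial) (hv trivial)

open scoped commutatorElement in
lemma upper : Finite BurnsideGammaHat ∧ Nat.card BurnsideGammaHat ≤ 3 ^ 10 := by
  obtain ⟨r1, r2, r3, r4⟩ := Exp3.relations cube (y 0) (y 1)⁻¹ (y 2) (y 3)⁻¹ (by
    intro z hz
    have : ∃ i, z = y i := by
      simp only [inv_inv] at hz
      rcases hz with rfl | rfl | rfl | rfl <;> exact ⟨_, rfl⟩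
    obtain ⟨i, rfl⟩ := this
    rw [← rel i]
    simp only [mul_inv_rev, inv_inv, mul_assoc])
  refine Exp3.upper cube (y 0) (y 1)⁻¹ (y 2) (y 3)⁻¹ ?_ ?_
  · apply gen
    intro i
    have hs : ∀ z ∈ ({y 0, (y 1)⁻¹, y 2, (y 3)⁻¹} : Set BurnsideGammaHat),
      z ∈ Subgroup.closure ({y 0, (y 1)⁻¹, y 2, (y 3)⁻¹} : Set BurnsideGammaHat) :=
        fun z hz => Subgroup.subset_closure hz
    fin_cases i
    · exact hs _ (by simp)
    · exact (inv_mem_iff (x := y 1)).1 (hs _ (by simp))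
    · exact hs _ (by simp)
    · exact (inv_mem_iff (x := y 3)).1 (hs _ (by simp))
  · exact Exp3.allT cube _ _ _ _ r1 r2 r3 r4

def toMod0 : B43 →* Mdl :=
  QuotientGroup.lift _ (FreeGroup.lift Mdl.e) (by
    intro w hw
    have : Subgroup.normalClosure {w : FreeGroup (Fin 4) | ∃ v, w = v ^ 3}
        ≤ (FreeGroup.lift Mdl.e).ker := by
      apply Subgroup.normalClosure_le_normal
      rintro _ ⟨v, rfl⟩
      rw [SetLike.mem_coe, MonoidHom.mem_ker, map_pow, Mdl.cube]
    exact this hw)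

lemma toMod0_x (i : Fin 4) : toMod0 (x i) = Mdl.e i := by
  simp [toMod0, x]

lemma toMod0_P (i : Fin 4) : toMod0 (P i) = 1 := by
  simp only [P, map_mul, map_inv, toMod0_x]
  revert i
  have : ∀ i : Fin 4, (Mdl.e 0 * (Mdl.e 1)⁻¹ * Mdl.e 2 * (Mdl.e 3)⁻¹ * (Mdl.e 0)⁻¹ * Mdl.e 1 * (Mdl.e 2)⁻¹ * Mdl.e 3 * Mdl.e i *
    (Mdl.e 3 * (Mdl.e 2)⁻¹ * Mdl.e 1 * (Mdl.e 0)⁻¹ * (Mdl.e 3)⁻¹ * Mdl.e 2 * (Mdl.e 1)⁻¹ * Mdl.e 0) * (Mdl.e i)⁻¹).v = 0 := by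
    intro i
    simp only [Mdl.mul_v, Mdl.inv_v]; abel
  intro i
  ext p
  · rw [this]; rfl
  · simp only [Mdl.mul_c, Mdl.mul_v, Mdl.inv_c, Mdl.inv_v, Pi.add_apply, Pi.neg_apply, Mdl.e,
      Mdl.one_c]
    revert i p
    decide

def toMod : BurnsideGammaHat →* Mdl :=
  QuotientGroup.lift _ toMod0 (by
    intro w hw
    have : Subgroup.normalClosure ({P 0, P 1, P 2, P 3} : Set B43) ≤ toMod0.ker := by
      apply Subgroup.normalClosure_le_normal
      rintro _ (rfl | rfl | rfl | rfl) <;> exact toMod0_P _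
    exact this hw)

lemma toMod_surj : Function.Surjective toMod := by
  rw [← MonoidHom.range_eq_top]
  apply Mdl.gen
  intro i
  exact ⟨y i, toMod0_x i⟩

end Gam

/-- The group `B_γ̂(3)` is finite, of cardinality exactly `3¹⁰`. -/
theorem card_BurnsideGammaHat :
    Finite BurnsideGammaHat ∧ Nat.card BurnsideGammaHat = 3 ^ 10 := by
  obtain ⟨hf, hc⟩ := Gam.upper
  refine ⟨hf, le_antisymm hc ?_⟩
  rw [← Mdl.card]
  exact Nat.card_le_card_of_surjective _ Gam.toMod_surj
end

section
/- The quotient of B(4,3) by the normal closure of {P₁, P₂, P₃, P₄} is not isomorphic to B(4,3); in particular these two groups have different cardinalities (3¹⁰ versus 3¹⁴). -/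
namespace Ex3
open scoped commutatorElement

theorem ring_lem {G R : Type*} [Group G] [Ring R] (ρ : G →* R)
    (h : ∀ g, (ρ g - 1) * (ρ g - 1) = 0) (c d : G) :
    ρ ⁅c, d⁆ - 1 = 2 * ((ρ c - 1) * (ρ d - 1)) ∧ (ρ c - 1) * (ρ d - 1) = -((ρ d - 1) * (ρ c - 1)) := by
  obtain ⟨C, hC⟩ : ∃ C, C = ρ c - 1 := ⟨_, rfl⟩
  obtain ⟨D, hD⟩ : ∃ D, D = ρ d - 1 := ⟨_, rfl⟩
  have hc : ρ c = 1 + C := by rw [hC]; abel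
  have hd : ρ d = 1 + D := by rw [hD]; abel
  have C2 : C * C = 0 := by rw [hC]; exact h c
  have D2 : D * D = 0 := by rw [hD]; exact h d
  have ci : ρ c⁻¹ = 1 - C := by
    have h1 : ρ c⁻¹ * ρ c = 1 := by rw [← map_mul]; simp
    calc ρ c⁻¹ = ρ c⁻¹ * ((1 + C) * (1 - C)) := by
          rw [show (1 + C) * (1 - C) = 1 - C * C by noncomm_ring, C2]; simp
      _ = 1 - C := by rw [← mul_assoc, ← hc, h1, one_mul]
  have di : ρ d⁻¹ = 1 - D := by
    have h1 : ρ d⁻¹ * ρ d = 1 := by rw [← map_mul]; simp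
    calc ρ d⁻¹ = ρ d⁻¹ * ((1 + D) * (1 - D)) := by
          rw [show (1 + D) * (1 - D) = 1 - D * D by noncomm_ring, D2]; simp
      _ = 1 - D := by rw [← mul_assoc, ← hd, h1, one_mul]
  have key : C * D + D * C + D * C * D + C * D * C + C * D * C * D = 0 := by
    have := h (c * d)
    rw [map_mul, hc, hd] at this
    have e : ((1 + C) * (1 + D) - 1) * ((1 + C) * (1 + D) - 1) =
      C * D + D * C + D * C * D + C * D * C + C * D * C * D + C * C * (1 + D) + D * D
       + C * (D * D) := by noncomm_ring
    rw [e, C2, D2] at this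
    simpa using this
  have CDC : C * D * C = 0 := by
    have h1 : C * D * C * (1 + D) = 0 := by
      have : C * (C * D + D * C + D * C * D + C * D * C + C * D * C * D) = C * D * C * (1 + D)
         + C * C * (D + D * C + D * C * D) := by noncomm_ring
      rw [key, C2] at this
      simpa using this.symm
    calc C * D * C = C * D * C * ((1 + D) * (1 - D)) := by
          rw [show (1 + D) * (1 - D) = 1 - D * D by noncomm_ring, D2]; simp
      _ = 0 := by rw [← mul_assoc, h1, zero_mul]
  have DCD : D * C * D = 0 := by
    have := key
    have e : (C * D + D * C + D * C * D + C * D * C + C * D * C * D) * D =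
      C * (D * D) + D * C * D + D * C * (D * D) + C * D * C * D + C * D * C * (D * D) := by
      noncomm_ring
    rw [key, CDC, D2] at e
    simpa using e.symm
  have anti : C * D = -(D * C) := by
    rw [DCD, CDC] at key
    simp at key
    exact eq_neg_of_add_eq_zero_left key
  rw [← hC, ← hD]
  refine ⟨?_, anti⟩
  rw [commutatorElement_def, map_mul, map_mul, map_mul, ci, di, hc, hd]
  have e : (1 + C) * (1 + D) * (1 - C) * (1 - D) - 1 = C * D - D * C + D * C * D - C * D * C
     + C * D * C * D - C * C * (1 - D) - D * D - C * (D * D) := by noncomm_ring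
  rw [e, C2, D2, CDC, DCD]
  have e2 : D * C = - (C * D) := by rw [anti]; simp
  rw [e2]; noncomm_ring

variable {G : Type*} [Group G]

theorem comm_conj (h : ∀ g : G, g ^ 3 = 1) (a b : G) : a * (b * a * b⁻¹) = (b * a * b⁻¹) * a := by
  have inv2 : ∀ g : G, g * g = g⁻¹ := fun g => by
    have := h g
    rw [pow_succ, pow_two] at this
    exact eq_inv_of_mul_eq_one_left this
  have h3 : ∀ g : G, g * g * g = 1 := fun g => by rw [inv2]; simp
  have h1 : a * (b * a * b⁻¹) = (b⁻¹ * a * b)⁻¹ := by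
    apply eq_inv_of_mul_eq_one_left
    calc a * (b * a * b⁻¹) * (b⁻¹ * a * b) = a * b * a * (b⁻¹ * b⁻¹) * a * b := by group
      _ = (a * b) * (a * b) * (a * b) := by rw [inv2 b⁻¹]; group
      _ = 1 := h3 _
  have h2 : (b * a * b⁻¹) * a = (b⁻¹ * a * b)⁻¹ := by
    apply eq_inv_of_mul_eq_one_left
    calc (b * a * b⁻¹) * a * (b⁻¹ * a * b) = b * ((a * b⁻¹) * (a * b⁻¹) * (a * b⁻¹)) * (b * b) := by group
      _ = b * (b * b) := by rw [h3, mul_one]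
      _ = 1 := by rw [← mul_assoc, h3]
  rw [h1, h2]

theorem conj_comm (h : ∀ g : G, g ^ 3 = 1) (a u v : G) :
    Commute (u * a * u⁻¹) (v * a * v⁻¹) := by
  have := comm_conj h a (u⁻¹ * v)
  have h2 := congrArg (fun z => u * z * u⁻¹) this

  show _ * _ = _ * _
  calc _ = u * (a * (u⁻¹ * v * a * (u⁻¹ * v)⁻¹)) * u⁻¹ := by group
    _ = _ := h2
    _ = _ := by group

theorem engel (h : ∀ g : G, g ^ 3 = 1) (g u : G) : ⁅g, ⁅g, u⁆⁆ = 1 := by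
  rw [commutatorElement_eq_one_iff_commute, commutatorElement_def]
  have : Commute g (u * g * u⁻¹) := by simpa using conj_comm h g 1 u
  have h2 : g * u * g⁻¹ * u⁻¹ = g * (u * g * u⁻¹)⁻¹ := by group
  rw [h2]
  exact (Commute.refl g).mul_right this.inv_right

theorem cyc_aux (h : ∀ g : G, g ^ 3 = 1) (A : Subgroup G) [A.Normal] 
    (hA : ∀ u v : A, u * v = v * u) (c d u : G) (hu : u ∈ A) :
    ⁅⁅c, d⁆, u⁆ = ⁅c, ⁅d, u⁆⁆ ^ 2 := by
  let _ : CommGroup A := { (inferInstance : Group A) with mul_comm := hA }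
  let ρ : G →* AddMonoid.End (Additive A) :=
    { toFun := fun g => MonoidHom.toAdditive (MulAut.conjNormal g : A ≃* A).toMonoidHom
      map_one' := by rw [map_one]; rfl
      map_mul' := by intro x y; rw [map_mul]; rfl }
  have hρ : ∀ g (x : A), (((ρ g - 1) (Additive.ofMul x)).toMul : G) = ⁅g, (x : G)⁆ := by
    intro g x
    rw [commutatorElement_def, ← div_eq_mul_inv]
    rfl
  have hs : ∀ g, (ρ g - 1) * (ρ g - 1) = 0 := by
    intro g
    ext x
    have h1 := hρ g ((ρ g - 1) x).toMul
    have h2 := hρ g x.toMul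
    have h3 := engel h g (x.toMul : G)
    rw [← h2] at h3
    exact h1.trans h3
  have := (ring_lem ρ hs c d).1
  have t := DFunLike.congr_fun this (Additive.ofMul ⟨u, hu⟩)
  have t2 := congrArg (fun z => (z.toMul : G)) t
  simp only [hρ] at t2
  rw [t2]
  have h1 := hρ c ((ρ d - 1) (Additive.ofMul ⟨u, hu⟩)).toMul
  have h2 := hρ d ⟨u, hu⟩
  rw [h2] at h1
  simp only at h1
  rw [← h1]
  rw [two_mul, pow_two]
  rfl

theorem cyc (h : ∀ g : G, g ^ 3 = 1) (c d u : G) :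
    ⁅u, ⁅c, d⁆⁆ = ⁅c, ⁅d, u⁆⁆ := by
  have h1 := cyc_aux h (Subgroup.normalClosure {u}) (by
    have hc : ∀ x ∈ Group.conjugatesOfSet {u}, ∀ y ∈ Group.conjugatesOfSet {u}, x * y = y * x := by
      intro x hx y hy
      simp only [Group.mem_conjugatesOfSet_iff, Set.mem_singleton_iff, exists_eq_left, isConj_iff] at hx hy
      obtain ⟨s, rfl⟩ := hx
      obtain ⟨t, rfl⟩ := hy
      exact conj_comm h u s t
    exact (Subgroup.isMulCommutative_closure hc).is_comm.comm) c d u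
     (Subgroup.subset_normalClosure rfl)
  have h2 := h ⁅c, ⁅d, u⁆⁆
  rw [pow_succ, ← h1, ← commutatorElement_inv] at h2
  exact (inv_mul_eq_one.mp h2)

theorem comm_inv (h : ∀ g : G, g ^ 3 = 1) (b w : G) : ⁅b, w⁻¹⁆ = ⁅b, w⁆⁻¹ := by
  have e := engel h w b
  rw [commutatorElement_eq_one_iff_commute] at e
  have h1 : ⁅b, w⁻¹⁆ = w⁻¹ * ⁅w, b⁆ * w := by simp only [commutatorElement_def]; group
  rw [h1, commutatorElement_inv, mul_assoc, ← e.eq]; group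

theorem swap (h : ∀ g : G, g ^ 3 = 1) (a b c : G) : ⁅a, ⁅b, c⁆⁆ = ⁅a, ⁅c, b⁆⁆⁻¹ := by
  rw [← commutatorElement_inv c b, comm_inv h]

theorem swap2 (h : ∀ g : G, g ^ 3 = 1) (a b c : G) : ⁅a, ⁅b, c⁆⁆ = ⁅b, ⁅a, c⁆⁆⁻¹ := by
  rw [cyc h, swap h]

theorem four (h : ∀ g : G, g ^ 3 = 1) (a b c d : G) : ⁅a, ⁅b, ⁅c, d⁆⁆⁆ = 1 := by
  have inv2 : ∀ g : G, g * g = g⁻¹ := fun g => by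
    have := h g
    rw [pow_succ, pow_two] at this
    exact eq_inv_of_mul_eq_one_left this
  -- `⁅⁅a,b⁆,⁅c,d⁆⁆`
  have k : ∀ a b c d : G, ⁅a, ⁅b, ⁅c, d⁆⁆⁆ = ⁅⁅c, d⁆, ⁅a, b⁆⁆ := by
    intro a b c d
    rw [cyc h a b ⁅c, d⁆]
  have sw1 : ∀ a b c d : G, ⁅a, ⁅b, ⁅c, d⁆⁆⁆ = ⁅b, ⁅a, ⁅c, d⁆⁆⁆⁻¹ := fun a b c d => swap2 h _ _ _
  have sw2 : ∀ a b c d : G, ⁅a, ⁅b, ⁅c, d⁆⁆⁆ = ⁅a, ⁅c, ⁅b, d⁆⁆⁆⁻¹ := fun a b c d => by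
    rw [swap2 h b c d, comm_inv h]
  have sw3 : ∀ a b c d : G, ⁅a, ⁅b, ⁅c, d⁆⁆⁆ = ⁅a, ⁅b, ⁅d, c⁆⁆⁆⁻¹ := fun a b c d => by
    rw [swap h b c d, comm_inv h]
  have e1 : ⁅a, ⁅b, ⁅c, d⁆⁆⁆ = ⁅c, ⁅d, ⁅a, b⁆⁆⁆ := by
    rw [sw2, sw1, sw3, sw2, inv_inv, inv_inv]
  have e2 : ⁅a, ⁅b, ⁅c, d⁆⁆⁆ = ⁅c, ⁅d, ⁅a, b⁆⁆⁆⁻¹ := by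
    rw [k a b c d, k c d a b, commutatorElement_inv]
  rw [← e1] at e2
  have e3 := h ⁅a, ⁅b, ⁅c, d⁆⁆⁆
  rw [pow_succ, pow_two, inv2, ← e2] at e3
  rw [e2, ← inv2]; exact e3

theorem comm_comm (h : ∀ g : G, g ^ 3 = 1) (a b c d : G) : Commute ⁅a, b⁆ ⁅c, d⁆ := by
  rw [← commutatorElement_eq_one_iff_commute, ← cyc h, ← cyc h] 
  exact four h _ _ _ _

theorem card_le_of_closure (h : ∀ g : G, g ^ 3 = 1) (S : Finset G)
    (hc : ∀ x ∈ S, ∀ y ∈ S, x * y = y * x) :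
    Nat.card (Subgroup.closure (S : Set G)) ∣ 3 ^ S.card := by
  have := Subgroup.isMulCommutative_closure (k := (S : Set G)) hc
  let _ : CommGroup (Subgroup.closure (S : Set G)) :=
    { (inferInstance : Group (Subgroup.closure (S : Set G))) with mul_comm := this.is_comm.comm }
  have : Group.FG (Subgroup.closure (S : Set G)) := Group.closure_finset_fg S
  refine (card_dvd_exponent_pow_rank' (n := 3) (Subgroup.closure (S : Set G)) ?_).trans ?_
  · intro g; ext; simpa using h g
  · exact pow_dvd_pow _ (Subgroup.rank_closure_finset_le_card S)

theorem card_dvd (h : ∀ g : G, g ^ 3 = 1) (x : Fin 4 → G)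
    (hx : Subgroup.closure (Set.range x) = ⊤) : Nat.card G ∣ 3 ^ 14 := by
  classical
  let S : Finset G := {⁅x 0, x 1⁆, ⁅x 0, x 2⁆, ⁅x 0, x 3⁆, ⁅x 1, x 2⁆, ⁅x 1, x 3⁆, ⁅x 2, x 3⁆,
    ⁅x 0, ⁅x 1, x 2⁆⁆, ⁅x 0, ⁅x 1, x 3⁆⁆, ⁅x 0, ⁅x 2, x 3⁆⁆, ⁅x 1, ⁅x 2, x 3⁆⁆}
  have hS : S.card ≤ 10 := by
    iterate 9 refine (Finset.card_insert_le _ _).trans (Nat.succ_le_succ ?_)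
    simp
  obtain ⟨K, hK⟩ : ∃ K, K = Subgroup.closure (S : Set G) := ⟨_, rfl⟩
  have h2 : ∀ i j, ⁅x i, x j⁆ ∈ K := by
    have base : ∀ i j, i < j → ⁅x i, x j⁆ ∈ K := by
      intro i j hij
      rw [hK]
      apply Subgroup.subset_closure
      fin_cases i <;> fin_cases j <;> first | (exfalso; revert hij; decide) | simp [S]
    intro i j
    rcases lt_trichotomy i j with hij | hij | hij
    · exact base i j hij
    · subst hij; simp
    · rw [← commutatorElement_inv]; exact K.inv_mem (base j i hij)
  have h3 : ∀ i j k, ⁅x i, ⁅x j, x k⁆⁆ ∈ K := by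
    have base : ∀ i j k, i < j → j < k → ⁅x i, ⁅x j, x k⁆⁆ ∈ K := by
      intro i j k hij hjk
      rw [hK]
      apply Subgroup.subset_closure
      fin_cases i <;> fin_cases j <;> fin_cases k <;>
        first | (exfalso; revert hij hjk; decide) | simp [S]
    have b2 : ∀ i j k, j < k → ⁅x i, ⁅x j, x k⁆⁆ ∈ K := by
      intro i j k hjk
      rcases lt_trichotomy i j with hij | hij | hij
      · exact base i j k hij hjk
      · subst hij; rw [engel h]; exact K.one_mem
      · rcases lt_trichotomy i k with hik | hik | hik
        · rw [swap2 h]; exact K.inv_mem (base j i k hij hik)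
        · subst hik; rw [swap h, engel h]; simp
        · rw [cyc h]; exact base j k i hjk hik
    intro i j k
    rcases lt_trichotomy j k with hij | hij | hij
    · exact b2 i j k hij
    · subst hij; simp
    · rw [swap h]; exact K.inv_mem (b2 i k j hij)
  have hSc : ∀ s ∈ S, (∃ a b, s = ⁅x a, x b⁆) ∨ ∃ a b c, s = ⁅x a, ⁅x b, x c⁆⁆ := by
    intro s hs
    simp only [S, Finset.mem_insert, Finset.mem_singleton] at hs
    rcases hs with rfl | rfl | rfl | rfl | rfl | rfl | rfl | rfl | rfl | rfl
    all_goals first | exact Or.inl ⟨_, _, rfl⟩ | exact Or.inr ⟨_, _, _, rfl⟩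
  have hcomm : ∀ s ∈ S, ∀ t ∈ S, s * t = t * s := by
    intro s hs t ht
    rcases hSc s hs with ⟨a, b, rfl⟩ | ⟨a, b, c, rfl⟩ <;>
    rcases hSc t ht with ⟨a, b, rfl⟩ | ⟨a, b, c, rfl⟩ <;> exact comm_comm h _ _ _ _
  have hconj : ∀ i, ∀ s ∈ K, x i * s * (x i)⁻¹ ∈ K := by
    intro i s hs
    rw [hK] at hs
    induction hs using Subgroup.closure_induction with
    | mem s hs =>
      have e : x i * s * (x i)⁻¹ = ⁅x i, s⁆ * s := by simp [commutatorElement_def]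
      rw [e]
      refine K.mul_mem ?_ (by rw [hK]; exact Subgroup.subset_closure hs)
      rcases hSc s hs with ⟨a, b, rfl⟩ | ⟨a, b, c, rfl⟩
      · exact h3 _ _ _
      · rw [four h]; exact K.one_mem
    | one => simp
    | mul a b _ _ ha hb =>
      have := K.mul_mem ha hb
      convert this using 1; group
    | inv a _ ha =>
      have := K.inv_mem ha
      convert this using 1; group
  have hN : K.Normal := by
    have : ∀ g : G, ∀ s ∈ K, g * s * g⁻¹ ∈ K := by
      intro g
      have hg : g ∈ Subgroup.closure (Set.range x) := by rw [hx]; trivial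
      induction hg using Subgroup.closure_induction with
      | mem g hg => obtain ⟨i, rfl⟩ := hg; exact hconj i
      | one => simp
      | mul a b _ _ ha hb =>
        intro s hs
        have := ha _ (hb s hs)
        convert this using 1; group
      | inv a _ ha =>
        intro s hs
        have e : a⁻¹ = a * a := by
          have := h a
          rw [pow_succ, pow_two] at this
          exact (eq_inv_of_mul_eq_one_left this).symm
        rw [e]
        have := ha _ (ha s hs)
        convert this using 1; group
    exact ⟨fun s hs g => this g s hs⟩
  have c1 : Nat.card K ∣ 3 ^ 10 := by
    rw [hK]; exact (card_le_of_closure h S hcomm).trans (pow_dvd_pow _ hS)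
  have c2 : Nat.card (G ⧸ K) ∣ 3 ^ 4 := by
    let T : Finset (G ⧸ K) := Finset.univ.image fun i => (x i : G ⧸ K)
    have hT : T.card ≤ 4 := Finset.card_image_le
    have hq : ∀ g : G ⧸ K, g ^ 3 = 1 := by
      intro g
      obtain ⟨g, rfl⟩ := QuotientGroup.mk_surjective g
      rw [← QuotientGroup.mk_pow, h]; rfl
    have hTc : ∀ s ∈ T, ∀ t ∈ T, s * t = t * s := by
      intro s hs t ht
      simp only [T, Finset.mem_image, Finset.mem_univ, true_and] at hs ht
      obtain ⟨i, rfl⟩ := hs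
      obtain ⟨j, rfl⟩ := ht
      have := h2 i j
      rw [← QuotientGroup.eq_one_iff] at this
      exact commutatorElement_eq_one_iff_mul_comm.mp this
    have hTt : Subgroup.closure (T : Set (G ⧸ K)) = ⊤ := by
      have := congrArg (Subgroup.map (QuotientGroup.mk' K)) hx
      rw [MonoidHom.map_closure, Subgroup.map_top_of_surjective _ (QuotientGroup.mk'_surjective K)] at this
      rw [← this]
      congr 1
      ext y; simp [T]
    have := card_le_of_closure hq T hTc
    rw [hTt, Subgroup.card_top] at this
    exact this.trans (pow_dvd_pow _ hT)
  rw [Subgroup.card_eq_card_quotient_mul_card_subgroup K]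
  exact (mul_dvd_mul c2 c1).trans (by norm_num)

end Ex3

@[ext] structure M where
  a0 : ZMod 3
  a1 : ZMod 3
  a2 : ZMod 3
  a3 : ZMod 3
  c01 : ZMod 3
  c02 : ZMod 3
  c03 : ZMod 3
  c12 : ZMod 3
  c13 : ZMod 3
  c23 : ZMod 3
  t012 : ZMod 3
  t013 : ZMod 3
  t023 : ZMod 3
  t123 : ZMod 3
  deriving DecidableEq

namespace M

instance : Mul M where
  mul u v := {
    a0 := u.a0 + v.a0
    a1 := u.a1 + v.a1
    a2 := u.a2 + v.a2
    a3 := u.a3 + v.a3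
    c01 := u.c01 - u.a1 * v.a0 + v.c01
    c02 := u.c02 - u.a2 * v.a0 + v.c02
    c03 := u.c03 - u.a3 * v.a0 + v.c03
    c12 := u.c12 - u.a2 * v.a1 + v.c12
    c13 := u.c13 - u.a3 * v.a1 + v.c13
    c23 := u.c23 - u.a3 * v.a2 + v.c23
    t012 := u.t012 + u.c12 * v.a0 - u.a1 * u.a2 * v.a0 - u.c02 * v.a1 + u.a2 * v.a0 * v.a1 + u.c01 * v.a2 - u.a1 * v.a0 * v.a2 + v.t012
    t013 := u.t013 + u.c13 * v.a0 - u.a1 * u.a3 * v.a0 - u.c03 * v.a1 + u.a3 * v.a0 * v.a1 + u.c01 * v.a3 - u.a1 * v.a0 * v.a3 + v.t013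
    t023 := u.t023 + u.c23 * v.a0 - u.a2 * u.a3 * v.a0 - u.c03 * v.a2 + u.a3 * v.a0 * v.a2 + u.c02 * v.a3 - u.a2 * v.a0 * v.a3 + v.t023
    t123 := u.t123 + u.c23 * v.a1 - u.a2 * u.a3 * v.a1 - u.c13 * v.a2 + u.a3 * v.a1 * v.a2 + u.c12 * v.a3 - u.a2 * v.a1 * v.a3 + v.t123 }

instance : One M := ⟨⟨0, 0, 0, 0, 0, 0, 0, 0, 0, 0, 0, 0, 0, 0⟩⟩

theorem mul_a0 (u v : M) : (u * v).a0 = u.a0 + v.a0 := rfl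
theorem mul_a1 (u v : M) : (u * v).a1 = u.a1 + v.a1 := rfl
theorem mul_a2 (u v : M) : (u * v).a2 = u.a2 + v.a2 := rfl
theorem mul_a3 (u v : M) : (u * v).a3 = u.a3 + v.a3 := rfl
theorem mul_c01 (u v : M) : (u * v).c01 = u.c01 - u.a1 * v.a0 + v.c01 := rfl
theorem mul_c02 (u v : M) : (u * v).c02 = u.c02 - u.a2 * v.a0 + v.c02 := rfl
theorem mul_c03 (u v : M) : (u * v).c03 = u.c03 - u.a3 * v.a0 + v.c03 := rfl
theorem mul_c12 (u v : M) : (u * v).c12 = u.c12 - u.a2 * v.a1 + v.c12 := rfl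
theorem mul_c13 (u v : M) : (u * v).c13 = u.c13 - u.a3 * v.a1 + v.c13 := rfl
theorem mul_c23 (u v : M) : (u * v).c23 = u.c23 - u.a3 * v.a2 + v.c23 := rfl
theorem mul_t012 (u v : M) : (u * v).t012 = u.t012 + u.c12 * v.a0 - u.a1 * u.a2 * v.a0 - u.c02 * v.a1 + u.a2 * v.a0 * v.a1 + u.c01 * v.a2 - u.a1 * v.a0 * v.a2 + v.t012 := rfl
theorem mul_t013 (u v : M) : (u * v).t013 = u.t013 + u.c13 * v.a0 - u.a1 * u.a3 * v.a0 - u.c03 * v.a1 + u.a3 * v.a0 * v.a1 + u.c01 * v.a3 - u.a1 * v.a0 * v.a3 + v.t013 := rfl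
theorem mul_t023 (u v : M) : (u * v).t023 = u.t023 + u.c23 * v.a0 - u.a2 * u.a3 * v.a0 - u.c03 * v.a2 + u.a3 * v.a0 * v.a2 + u.c02 * v.a3 - u.a2 * v.a0 * v.a3 + v.t023 := rfl
theorem mul_t123 (u v : M) : (u * v).t123 = u.t123 + u.c23 * v.a1 - u.a2 * u.a3 * v.a1 - u.c13 * v.a2 + u.a3 * v.a1 * v.a2 + u.c12 * v.a3 - u.a2 * v.a1 * v.a3 + v.t123 := rfl
theorem one_a0 : (1 : M).a0 = 0 := rfl
theorem one_a1 : (1 : M).a1 = 0 := rfl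
theorem one_a2 : (1 : M).a2 = 0 := rfl
theorem one_a3 : (1 : M).a3 = 0 := rfl
theorem one_c01 : (1 : M).c01 = 0 := rfl
theorem one_c02 : (1 : M).c02 = 0 := rfl
theorem one_c03 : (1 : M).c03 = 0 := rfl
theorem one_c12 : (1 : M).c12 = 0 := rfl
theorem one_c13 : (1 : M).c13 = 0 := rfl
theorem one_c23 : (1 : M).c23 = 0 := rfl
theorem one_t012 : (1 : M).t012 = 0 := rfl
theorem one_t013 : (1 : M).t013 = 0 := rfl
theorem one_t023 : (1 : M).t023 = 0 := rfl
theorem one_t123 : (1 : M).t123 = 0 := rfl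

theorem assoc (u v w : M) : u * v * w = u * (v * w) := by
  have h3 : (3 : ZMod 3) = 0 := rfl
  ext <;> simp only [mul_a0, mul_a1, mul_a2, mul_a3, mul_c01, mul_c02, mul_c03, mul_c12, mul_c13, mul_c23, mul_t012, mul_t013, mul_t023, mul_t123] 
  all_goals first
    | ring1
    | linear_combination (-(u.a2 * v.a1 * w.a0)) * h3
    | linear_combination (-(u.a3 * v.a1 * w.a0)) * h3
    | linear_combination (-(u.a3 * v.a2 * w.a0)) * h3
    | linear_combination (-(u.a3 * v.a2 * w.a1)) * h3

theorem one_mul' (u : M) : 1 * u = u := by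
  ext <;> simp [mul_a0, mul_a1, mul_a2, mul_a3, mul_c01, mul_c02, mul_c03, mul_c12, mul_c13, mul_c23, mul_t012, mul_t013, mul_t023, mul_t123, one_a0, one_a1, one_a2, one_a3, one_c01, one_c02, one_c03, one_c12, one_c13, one_c23, one_t012, one_t013, one_t023, one_t123]

theorem cube (u : M) : u * u * u = 1 := by
  have h3 : (3 : ZMod 3) = 0 := rfl
  ext <;> simp only [mul_a0, mul_a1, mul_a2, mul_a3, mul_c01, mul_c02, mul_c03, mul_c12, mul_c13, mul_c23, mul_t012, mul_t013, mul_t023, mul_t123, one_a0, one_a1, one_a2, one_a3, one_c01, one_c02, one_c03, one_c12, one_c13, one_c23, one_t012, one_t013, one_t023, one_t123] <;> ring_nf <;> reduce_mod_char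

instance : Inv M := ⟨fun u => u * u⟩

instance : Group M := Group.ofLeftAxioms assoc one_mul' cube

theorem inv_def (u : M) : u⁻¹ = u * u := rfl

theorem pow3 (u : M) : u ^ 3 = 1 := by rw [pow_succ, pow_two]; exact cube u

def equiv : M ≃ (Fin 14 → ZMod 3) where
  toFun u := ![u.a0, u.a1, u.a2, u.a3, u.c01, u.c02, u.c03, u.c12, u.c13, u.c23, u.t012, u.t013, u.t023, u.t123]
  invFun f := ⟨f 0, f 1, f 2, f 3, f 4, f 5, f 6, f 7, f 8, f 9, f 10, f 11, f 12, f 13⟩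
  left_inv u := rfl
  right_inv f := by ext i; fin_cases i <;> rfl

theorem card : Nat.card M = 3 ^ 14 := by
  rw [Nat.card_congr equiv]; simp

theorem z3 (H : Subgroup M) (f : ZMod 3 → M) (h0 : f 0 = 1) (h1 : f 1 ∈ H) (h2 : f 2 = f 1 * f 1)
    (a : ZMod 3) : f a ∈ H := by
  have : a = 0 ∨ a = 1 ∨ a = 2 := by revert a; decide
  rcases this with rfl | rfl | rfl
  · rw [h0]; exact H.one_mem
  · exact h1
  · rw [h2]; exact H.mul_mem h1 h1

abbrev e_a0 (a : ZMod 3) : M := ⟨a, 0, 0, 0, 0, 0, 0, 0, 0, 0, 0, 0, 0, 0⟩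
abbrev e_a1 (a : ZMod 3) : M := ⟨0, a, 0, 0, 0, 0, 0, 0, 0, 0, 0, 0, 0, 0⟩
abbrev e_a2 (a : ZMod 3) : M := ⟨0, 0, a, 0, 0, 0, 0, 0, 0, 0, 0, 0, 0, 0⟩
abbrev e_a3 (a : ZMod 3) : M := ⟨0, 0, 0, a, 0, 0, 0, 0, 0, 0, 0, 0, 0, 0⟩
abbrev e_c01 (a : ZMod 3) : M := ⟨0, 0, 0, 0, a, 0, 0, 0, 0, 0, 0, 0, 0, 0⟩
abbrev e_c02 (a : ZMod 3) : M := ⟨0, 0, 0, 0, 0, a, 0, 0, 0, 0, 0, 0, 0, 0⟩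
abbrev e_c03 (a : ZMod 3) : M := ⟨0, 0, 0, 0, 0, 0, a, 0, 0, 0, 0, 0, 0, 0⟩
abbrev e_c12 (a : ZMod 3) : M := ⟨0, 0, 0, 0, 0, 0, 0, a, 0, 0, 0, 0, 0, 0⟩
abbrev e_c13 (a : ZMod 3) : M := ⟨0, 0, 0, 0, 0, 0, 0, 0, a, 0, 0, 0, 0, 0⟩
abbrev e_c23 (a : ZMod 3) : M := ⟨0, 0, 0, 0, 0, 0, 0, 0, 0, a, 0, 0, 0, 0⟩
abbrev e_t012 (a : ZMod 3) : M := ⟨0, 0, 0, 0, 0, 0, 0, 0, 0, 0, a, 0, 0, 0⟩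
abbrev e_t013 (a : ZMod 3) : M := ⟨0, 0, 0, 0, 0, 0, 0, 0, 0, 0, 0, a, 0, 0⟩
abbrev e_t023 (a : ZMod 3) : M := ⟨0, 0, 0, 0, 0, 0, 0, 0, 0, 0, 0, 0, a, 0⟩
abbrev e_t123 (a : ZMod 3) : M := ⟨0, 0, 0, 0, 0, 0, 0, 0, 0, 0, 0, 0, 0, a⟩

theorem decomp (u : M) : u = e_a0 u.a0 * e_a1 u.a1 * e_a2 u.a2 * e_a3 u.a3 * e_c01 u.c01 * e_c02 u.c02 * e_c03 u.c03 * e_c12 u.c12 * e_c13 u.c13 * e_c23 u.c23 * e_t012 u.t012 * e_t013 u.t013 * e_t023 u.t023 * e_t123 u.t123 := by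
  ext <;> simp [mul_a0, mul_a1, mul_a2, mul_a3, mul_c01, mul_c02, mul_c03, mul_c12, mul_c13, mul_c23, mul_t012, mul_t013, mul_t023, mul_t123]

theorem gen_top (H : Subgroup M) (h0 : e_a0 1 ∈ H) (h1 : e_a1 1 ∈ H) (h2 : e_a2 1 ∈ H)
    (h3 : e_a3 1 ∈ H) (u : M) : u ∈ H := by
  have hc : ∀ {a b}, a ∈ H → b ∈ H → a⁻¹ * b⁻¹ * a * b ∈ H := fun ha hb =>
    H.mul_mem (H.mul_mem (H.mul_mem (H.inv_mem ha) (H.inv_mem hb)) ha) hb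
  have c01 : e_c01 1 ∈ H := hc h0 h1
  have c02 : e_c02 1 ∈ H := hc h0 h2
  have c03 : e_c03 1 ∈ H := hc h0 h3
  have c12 : e_c12 1 ∈ H := hc h1 h2
  have c13 : e_c13 1 ∈ H := hc h1 h3
  have c23 : e_c23 1 ∈ H := hc h2 h3
  have t012 : e_t012 1 ∈ H := hc c01 h2
  have t013 : e_t013 1 ∈ H := hc c01 h3
  have t023 : e_t023 1 ∈ H := hc c02 h3
  have t123 : e_t123 1 ∈ H := hc c12 h3
  rw [decomp u]
  refine (H.mul_mem (H.mul_mem (H.mul_mem (H.mul_mem (H.mul_mem (H.mul_mem (H.mul_mem (H.mul_mem (H.mul_mem (H.mul_mem (H.mul_mem (H.mul_mem (H.mul_mem (z3 H e_a0 rfl h0 rfl _) (z3 H e_a1 rfl h1 rfl _)) (z3 H e_a2 rfl h2 rfl _)) (z3 H e_a3 rfl h3 rfl _)) (z3 H e_c01 rfl c01 rfl _)) (z3 H e_c02 rfl c02 rfl _)) (z3 H e_c03 rfl c03 rfl _)) (z3 H e_c12 rfl c12 rfl _)) (z3 H e_c13 rfl c13 rfl _)) (z3 H e_c23 rfl c23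 rfl _)) (z3 H e_t012 rfl t012 rfl _)) (z3 H e_t013 rfl t013 rfl _)) (z3 H e_t023 rfl t023 rfl _)) (z3 H e_t123 rfl t123 rfl _))

/-- The subgroup of elements with only the last four coordinates. -/
def Z : Subgroup M where
  carrier := {u | u = ⟨0, 0, 0, 0, 0, 0, 0, 0, 0, 0, u.t012, u.t013, u.t023, u.t123⟩}
  one_mem' := rfl
  mul_mem' := by
    intro u v hu hv
    rw [Set.mem_ofPred_eq] at hu hv ⊢
    rw [hu, hv]
    ext <;> simp [mul_a0, mul_a1, mul_a2, mul_a3, mul_c01, mul_c02, mul_c03, mul_c12, mul_c13, mul_c23, mul_t012, mul_t013, mul_t023, mul_t123]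
  inv_mem' := by
    intro u hu
    rw [Set.mem_ofPred_eq] at hu ⊢
    rw [hu]
    ext <;> simp [inv_def, mul_a0, mul_a1, mul_a2, mul_a3, mul_c01, mul_c02, mul_c03, mul_c12, mul_c13, mul_c23, mul_t012, mul_t013, mul_t023, mul_t123]

theorem Z_comm (u v : M) (hu : u ∈ Z) : v * u = u * v := by
  have hu : u = ⟨0, 0, 0, 0, 0, 0, 0, 0, 0, 0, u.t012, u.t013, u.t023, u.t123⟩ := hu
  rw [hu]
  ext <;> simp [mul_a0, mul_a1, mul_a2, mul_a3, mul_c01, mul_c02, mul_c03, mul_c12, mul_c13, mul_c23, mul_t012, mul_t013, mul_t023, mul_t123, add_comm]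

instance : Z.Normal := ⟨fun u hu v => by rw [Z_comm u v hu]; simpa using hu⟩

def Zequiv : Z ≃ (Fin 4 → ZMod 3) where
  toFun u := ![u.1.t012, u.1.t013, u.1.t023, u.1.t123]
  invFun f := ⟨⟨0, 0, 0, 0, 0, 0, 0, 0, 0, 0, f 0, f 1, f 2, f 3⟩, rfl⟩
  left_inv u := Subtype.ext u.2.symm
  right_inv f := by ext i; fin_cases i <;> rfl

theorem Z_card : Nat.card Z = 3 ^ 4 := by
  rw [Nat.card_congr Zequiv]; simp

def g : Fin 4 → M := ![e_a0 1, e_a1 1, e_a2 1, e_a3 1]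

def Q (i : Fin 4) : M :=
  g 0 * (g 1)⁻¹ * g 2 * (g 3)⁻¹ * (g 0)⁻¹ * g 1 * (g 2)⁻¹ * g 3 * g i *
    (g 3 * (g 2)⁻¹ * g 1 * (g 0)⁻¹ * (g 3)⁻¹ * g 2 * (g 1)⁻¹ * g 0) * (g i)⁻¹

theorem Q0 : Q 0 = ⟨0, 0, 0, 0, 0, 0, 0, 0, 0, 0, 0, 0, 0, 2⟩ := by decide
theorem Q1 : Q 1 = ⟨0, 0, 0, 0, 0, 0, 0, 0, 0, 0, 0, 0, 1, 1⟩ := by decide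
theorem Q2 : Q 2 = ⟨0, 0, 0, 0, 0, 0, 0, 0, 0, 0, 0, 2, 2, 1⟩ := by decide
theorem Q3 : Q 3 = ⟨0, 0, 0, 0, 0, 0, 0, 0, 0, 0, 1, 1, 2, 1⟩ := by decide

theorem Q_mem (i : Fin 4) : Q i ∈ Z := by
  fin_cases i
  · show Q 0 ∈ Z
    rw [Q0]; rfl
  · show Q 1 ∈ Z
    rw [Q1]; rfl
  · show Q 2 ∈ Z
    rw [Q2]; rfl
  · show Q 3 ∈ Z
    rw [Q3]; rfl

theorem Z_le (H : Subgroup M) (h : ∀ i, Q i ∈ H) : Z ≤ H := by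
  have h0 := h 0
  have h1 := h 1
  have h2 := h 2
  have h3 := h 3
  rw [Q0] at h0
  rw [Q1] at h1
  rw [Q2] at h2
  rw [Q3] at h3
  have t123 : e_t123 1 ∈ H := H.mul_mem h0 h0
  have t023 : e_t023 1 ∈ H := H.mul_mem h1 h0
  have t013 : e_t013 1 ∈ H := H.mul_mem (H.mul_mem h2 h2) (H.mul_mem (H.mul_mem t023 t023) t123)
  have t012 : e_t012 1 ∈ H := H.mul_mem h3 (H.mul_mem (H.mul_mem t013 t013) h1 |> fun w => H.mul_mem w t123)
  intro u hu
  have hu : u = ⟨0, 0, 0, 0, 0, 0, 0, 0, 0, 0, u.t012, u.t013, u.t023, u.t123⟩ := hu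
  have e : u = e_t012 u.t012 * e_t013 u.t013 * e_t023 u.t023 * e_t123 u.t123 := by
    conv_lhs => rw [hu]
    ext <;> simp [mul_a0, mul_a1, mul_a2, mul_a3, mul_c01, mul_c02, mul_c03, mul_c12, mul_c13, mul_c23, mul_t012, mul_t013, mul_t023, mul_t123]
  rw [e]
  exact H.mul_mem (H.mul_mem (H.mul_mem (z3 H e_t012 rfl t012 rfl _) (z3 H e_t013 rfl t013 rfl _))
    (z3 H e_t023 rfl t023 rfl _)) (z3 H e_t123 rfl t123 rfl _)

end M

namespace Main

theorem exp3 (g : B43) : g ^ 3 = 1 := by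
  obtain ⟨w, rfl⟩ := QuotientGroup.mk_surjective g
  rw [← QuotientGroup.mk_pow, QuotientGroup.eq_one_iff]
  exact Subgroup.subset_normalClosure ⟨w, rfl⟩

theorem gen : Subgroup.closure (Set.range x) = ⊤ := by
  have := congrArg (Subgroup.map (QuotientGroup.mk' 
    (Subgroup.normalClosure {w : FreeGroup (Fin 4) | ∃ v, w = v ^ 3}))) (FreeGroup.closure_range_of (Fin 4))
  rw [MonoidHom.map_closure, Subgroup.map_top_of_surjective _ (QuotientGroup.mk'_surjective _),
    ← Set.range_comp] at this
  exact this

theorem dvd14 : Nat.card B43 ∣ 3 ^ 14 := Ex3.card_dvd exp3 x gen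

def φ : B43 →* M := QuotientGroup.lift _ (FreeGroup.lift M.g) (by
  intro w hw
  refine Subgroup.normalClosure_le_normal ?_ hw
  rintro _ ⟨v, rfl⟩
  show _ ∈ MonoidHom.ker _
  rw [MonoidHom.mem_ker, map_pow, M.pow3])

theorem φx (i : Fin 4) : φ (x i) = M.g i := by
  show FreeGroup.lift M.g (FreeGroup.of i) = _
  simp

theorem φP (i : Fin 4) : φ (P i) = M.Q i := by
  simp only [P, M.Q, map_mul, map_inv, φx]

theorem φ_surj : Function.Surjective φ := by
  intro u
  exact M.gen_top φ.range ⟨x 0, φx 0⟩ ⟨x 1, φx 1⟩ ⟨x 2, φx 2⟩ ⟨x 3, φx 3⟩ u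

instance : Finite B43 := Nat.finite_of_card_ne_zero (fun h => by
  have := dvd14
  rw [h] at this
  revert this; norm_num)

theorem cardB : Nat.card B43 = 3 ^ 14 := by
  apply le_antisymm (Nat.le_of_dvd (by norm_num) dvd14)
  rw [← M.card]
  exact Nat.card_le_card_of_surjective φ φ_surj

theorem φ_bij : Function.Bijective φ := by
  rw [Nat.bijective_iff_surjective_and_card]
  exact ⟨φ_surj, by rw [cardB, M.card]⟩

theorem N_map : (Subgroup.normalClosure ({P 0, P 1, P 2, P 3} : Set B43)).map φ = M.Z := by
  apply le_antisymm
  · rw [Subgroup.map_le_iff_le_comap]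
    apply Subgroup.normalClosure_le_normal
    rintro _ (rfl | rfl | rfl | rfl) <;>
    · show φ _ ∈ M.Z
      rw [φP]; exact M.Q_mem _
  · apply M.Z_le
    intro i
    refine ⟨P i, Subgroup.subset_normalClosure ?_, φP i⟩
    fin_cases i <;> simp

theorem cardN : Nat.card (Subgroup.normalClosure ({P 0, P 1, P 2, P 3} : Set B43)) = 3 ^ 4 := by
  rw [← M.Z_card, ← N_map]
  exact (Subgroup.card_map_of_injective φ_bij.1).symm

theorem cardΓ : Nat.card BurnsideGammaHat = 3 ^ 10 := by
  have := Subgroup.card_eq_card_quotient_mul_card_subgroup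
    (Subgroup.normalClosure ({P 0, P 1, P 2, P 3} : Set B43))
  rw [cardB, cardN] at this
  have h : Nat.card BurnsideGammaHat * 3 ^ 4 = 3 ^ 10 * 3 ^ 4 := by rw [← this]; norm_num
  exact Nat.eq_of_mul_eq_mul_right (by norm_num) h

end Main

/-- The quotient is not isomorphic to `B(4,3)`; in particular the two groups have
different cardinalities: `3¹⁰` versus `3¹⁴`. -/
theorem BurnsideGammaHat_not_iso_B43 :
    IsEmpty (BurnsideGammaHat ≃* B43) ∧
    Nat.card BurnsideGammaHat = 3 ^ 10 ∧ Nat.card B43 = 3 ^ 14 := by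
  refine ⟨⟨fun e => ?_⟩, Main.cardΓ, Main.cardB⟩
  have := Nat.card_congr e.toEquiv
  rw [Main.cardΓ, Main.cardB] at this
  revert this
  norm_num
end

section
/- The quotient of B(4,3) by the normal closure of {P₁, P₂, P₃, P₄} is isomorphic to the quotient of B(4,3) by the third term γ₃(B(4,3)) of its lower central series. -/
open scoped commutatorElement

namespace Burn

section Exp3
variable {G : Type*} [Group G]

/-- In a group of exponent 3, each element commutes with its conjugates. -/
lemma commute_conj (h : ∀ g : G, g ^ 3 = 1) (g y : G) : Commute g (y * g * y⁻¹) := by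
  have hy : y⁻¹ = y * y := by
    have := h y
    rw [pow_three] at this
    exact inv_eq_of_mul_eq_one_right this
  have h1 : g * (y * g * y⁻¹) * (y⁻¹ * g * y) = 1 := by
    have := h (g * y)
    rw [pow_three] at this
    rw [← this, hy]
    have h3 : y * y * y = 1 := by rw [← hy]; group
    calc g * (y * g * (y * y)) * (y * y * g * y) = g * y * g * (y * y * y) * y * g * y := by group
      _ = _ := by rw [h3]; group
  have h2 : g * (y⁻¹ * g * y) * (y * g * y⁻¹) = 1 := by
    have h0 := h (g * y⁻¹)
    rw [pow_three] at h0
    rw [← h0]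
    have h3 : y * y = y⁻¹ := hy.symm
    have h4 : y⁻¹ * y⁻¹ = y := by rw [hy]; have := h y; rw [pow_three] at this; simp [mul_assoc, this]
    calc g * (y⁻¹ * g * y) * (y * g * y⁻¹) = g * y⁻¹ * g * (y * y) * g * y⁻¹ := by group
      _ = _ := by rw [h3]; group
  -- g * p * q = 1, g * q * p = 1
  set p := y * g * y⁻¹
  set q := y⁻¹ * g * y
  have e1 : p = g⁻¹ * q⁻¹ := by
    rw [← mul_inv_rev, eq_inv_iff_mul_eq_one]
    have : g * (p * q) * g⁻¹ = 1 * g⁻¹ := by rw [← mul_assoc, h1]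
    have h5 : p * q = g⁻¹ := by
      rw [eq_comm, inv_eq_iff_mul_eq_one, ← mul_assoc, h1]
    rw [← mul_assoc, h5]; group
  have e2 : p = q⁻¹ * g⁻¹ := by
    rw [← mul_inv_rev, eq_comm, inv_eq_iff_mul_eq_one, h2]
  have : Commute g⁻¹ q⁻¹ := by
    show g⁻¹ * q⁻¹ = q⁻¹ * g⁻¹
    rw [← e1, ← e2]
  rw [e1]
  exact (Commute.refl g).inv_right.mul_right (Commute.inv_inv_iff.mp this).inv_right

lemma normalClosure_comm (h : ∀ g : G, g ^ 3 = 1) (x : G) :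
    IsMulCommutative (Subgroup.normalClosure {x} : Subgroup G) := by
  apply Subgroup.isMulCommutative_closure
  intro a ha b hb
  rw [Group.mem_conjugatesOfSet_iff] at ha hb
  obtain ⟨_, rfl, ha⟩ := ha
  obtain ⟨_, rfl, hb⟩ := hb
  have : IsConj a b := ha.symm.trans hb
  obtain ⟨c, hc⟩ := isConj_iff.mp this
  rw [← hc]
  exact commute_conj h a c

/-- ring computation -/
lemma ring_alt {R : Type*} [Ring R] (Y Z : R) (hY : Y * Y = 0) (hZ : Z * Z = 0)
    (h : (Y + Z + Y * Z) * (Y + Z + Y * Z) = 0) : Y * Z + Z * Y = 0 := by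
  have E : Y * Z + Z * Y + Y * Z * Y + Z * Y * Z + Y * Z * Y * Z = 0 := by
    rw [← h]
    have a1 : Y * Y * Z = 0 := by rw [hY, zero_mul]
    have a2 : Y * Z * Z = 0 := by rw [mul_assoc, hZ, mul_zero]
    have : (Y + Z + Y * Z) * (Y + Z + Y * Z) = Y * Y + Z * Z + Y * Y * Z + Y * Z * Z +
      (Y * Z + Z * Y + Y * Z * Y + Z * Y * Z + Y * Z * Y * Z) := by noncomm_ring
    rw [this, a1, a2, hY, hZ]; simp
  have b1 : Y * Z * Y * Z = 0 := by
    have : Y * (Y * Z + Z * Y + Y * Z * Y + Z * Y * Z + Y * Z * Y * Z) * Z =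
      (Y * Y) * (Z * Z + Z * Y * Z + Z * Y * Z * Z) + Y * Z * Y * Z + Y * Z * Y * (Z * Z) := by
        noncomm_ring
    rw [E, hY, hZ] at this
    simpa using this.symm
  have b2 : Y * Z * Y = 0 := by
    have : Y * (Y * Z + Z * Y + Y * Z * Y + Z * Y * Z + Y * Z * Y * Z) =
      (Y * Y) * (Z + Z * Y + Z * Y * Z) + Y * Z * Y + Y * Z * Y * Z := by
        noncomm_ring
    rw [E, hY, b1] at this
    simpa using this.symm
  have b3 : Z * Y * Z = 0 := by
    have : (Y * Z + Z * Y + Y * Z * Y + Z * Y * Z + Y * Z * Y * Z) * Z =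
      (Y + Z * Y + Y * Z * Y) * (Z * Z) + Z * Y * Z + Y * Z * Y * Z := by
        noncomm_ring
    rw [E, hZ, b1] at this
    simpa using this.symm
  rw [b1, b2, b3] at E
  simpa using E

/-- rewriting of the square -/
lemma ring_sq {R : Type*} [Ring R] (p : R) : (p - 1) * (p - 1) = p * p - p - p + 1 := by
  rw [mul_sub, sub_mul]; simp; abel

lemma ring_prod {R : Type*} [Ring R] (p q : R) :
    (p - 1) + (q - 1) + (p - 1) * (q - 1) = p * q - 1 := by
  rw [mul_sub, sub_mul]; simp; abel

/-- conjugation action on an abelian normal subgroup, minus the identity -/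
lemma comm_swap (h : ∀ g : G, g ^ 3 = 1) (x y z : G) :
    ⁅⁅x, y⁆, z⁆ * ⁅⁅x, z⁆, y⁆ = 1 := by
  set N : Subgroup G := Subgroup.normalClosure {x} with hN
  have hc : IsMulCommutative N := normalClosure_comm h x
  let : CommGroup N := { (inferInstance : Group N) with mul_comm := hc.is_comm.comm }
  let ρ : G → AddMonoid.End (Additive N) := fun g =>
    MonoidHom.toAdditive (MulAut.conjNormal (H := N) g).toMonoidHom
  have hval : ∀ g (n : N), ((ρ g (Additive.ofMul n)).toMul : G) = g * n * g⁻¹ := by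
    intro g n; rfl
  have hρ : ∀ g k, ρ (g * k) = ρ g * ρ k := by
    intro g k
    apply AddMonoidHom.ext
    intro n
    apply Additive.toMul.injective
    apply Subtype.ext
    obtain ⟨n, rfl⟩ := Additive.ofMul.surjective n
    change (g * k) * (n : G) * (g * k)⁻¹ = g * (k * (n : G) * k⁻¹) * g⁻¹
    group
  have hD : ∀ g (n : N), (((ρ g - 1) (Additive.ofMul n)).toMul : G) = ⁅g, (n : G)⁆ := by
    intro g n
    change (g * n * g⁻¹) / (n : G) = _
    rw [commutatorElement_def, div_eq_mul_inv]
  have hD2 : ∀ g k (n : N), ((((ρ g - 1) * (ρ k - 1)) (Additive.ofMul n)).toMul : G)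
      = ⁅g, ⁅k, (n : G)⁆⁆ := by
    intro g k n
    rw [← hD k n, ← hD]; rfl
  have hsq : ∀ g, (ρ g - 1) * (ρ g - 1) = 0 := by
    intro g
    apply AddMonoidHom.ext
    intro n
    apply Additive.toMul.injective
    apply Subtype.ext
    obtain ⟨n, rfl⟩ := Additive.ofMul.surjective n
    refine (hD2 g g n).trans ?_
    change _ = (1 : G)
    rw [commutatorElement_eq_one_iff_commute]
    have c1 := (commute_conj h g n).inv_right
    have : ⁅g, (n : G)⁆ = g * (n * g * (n : G)⁻¹)⁻¹ := by rw [commutatorElement_def]; group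
    rw [this]
    exact (Commute.refl g).mul_right c1
  have key : (ρ y - 1) * (ρ z - 1) + (ρ z - 1) * (ρ y - 1) = 0 := by
    apply ring_alt _ _ (hsq y) (hsq z)
    rw [ring_prod, ← hρ]; exact hsq _
  have hx : x ∈ N := Subgroup.subset_normalClosure rfl
  have k2 := congrArg (fun f => ((f (Additive.ofMul (⟨x, hx⟩ : N))).toMul : G)) key
  have k3 : ⁅y, ⁅z, x⁆⁆ * ⁅z, ⁅y, x⁆⁆ = 1 := by
    rw [← hD2 y z ⟨x, hx⟩, ← hD2 z y ⟨x, hx⟩]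
    exact k2
  have k4 : ∀ a b : G, ⁅⁅x, a⁆, b⁆ = ⁅b, ⁅a, x⁆⁆ := by
    intro a b
    have : ⁅x, a⁆ = ⁅a, x⁆⁻¹ := (commutatorElement_inv a x).symm
    rw [this]
    generalize ⁅a, x⁆ = c
    rw [commutatorElement_def, commutatorElement_def]
    have h2 : c⁻¹ * (b * c * b⁻¹) = (b * c * b⁻¹) * c⁻¹ :=
      ((commute_conj h c b).inv_left).eq
    calc _ = c⁻¹ * (b * c * b⁻¹) := by group
      _ = _ := h2
  rw [k4, k4, ← k3]
  exact mul_eq_one_comm.mp k3 |>.trans k3.symm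

lemma comm_flip (h : ∀ g : G, g ^ 3 = 1) (x y z : G) :
    ⁅⁅x, y⁆, z⁆ * ⁅⁅y, x⁆, z⁆ = 1 := by
  rw [← commutatorElement_inv x y]
  generalize ⁅x, y⁆ = c
  have h2 : c⁻¹ * (z * c * z⁻¹) = (z * c * z⁻¹) * c⁻¹ :=
      ((commute_conj h c z).inv_left).eq
  rw [commutatorElement_def, commutatorElement_def]
  calc _ = c * (z * c⁻¹ * z⁻¹) * (c⁻¹ * (z * c * z⁻¹)) := by group
    _ = 1 := by rw [h2]; group

/-- groups of exponent three have class at most three -/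
lemma class3 (h : ∀ g : G, g ^ 3 = 1) (x y z w : G) : ⁅⁅⁅x, y⁆, z⁆, w⁆ = 1 := by
  -- basic moves
  have inv1 : ∀ c w : G, ⁅c⁻¹, w⁆ = ⁅c, w⁆⁻¹ := by
    intro c w
    have h2 : c⁻¹ * (w * c * w⁻¹) = (w * c * w⁻¹) * c⁻¹ :=
      ((commute_conj h c w).inv_left).eq
    rw [commutatorElement_def, commutatorElement_def]
    calc _ = c⁻¹ * (w * c * w⁻¹) := by group
      _ = _ := by rw [h2]; group
  have s3 : ∀ x y z : G, ⁅⁅x, y⁆, z⁆ = ⁅⁅x, z⁆, y⁆⁻¹ := fun x y z =>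
    eq_inv_of_mul_eq_one_left (comm_swap h x y z)
  have f3 : ∀ x y z : G, ⁅⁅x, y⁆, z⁆ = ⁅⁅y, x⁆, z⁆⁻¹ := fun x y z =>
    eq_inv_of_mul_eq_one_left (comm_flip h x y z)
  have cyc : ∀ x y z : G, ⁅⁅x, y⁆, z⁆ = ⁅⁅y, z⁆, x⁆ := fun x y z => by
    rw [f3 x y z, s3 y x z, inv_inv]
  -- moves on four letters
  have t12 : ∀ x y z w : G, ⁅⁅⁅x, y⁆, z⁆, w⁆ = ⁅⁅⁅y, x⁆, z⁆, w⁆⁻¹ := fun x y z w => by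
    rw [f3 x y z, inv1]
  have t23 : ∀ x y z w : G, ⁅⁅⁅x, y⁆, z⁆, w⁆ = ⁅⁅⁅x, z⁆, y⁆, w⁆⁻¹ := fun x y z w => by
    rw [s3 x y z, inv1]
  have t34 : ∀ x y z w : G, ⁅⁅⁅x, y⁆, z⁆, w⁆ = ⁅⁅⁅x, y⁆, w⁆, z⁆⁻¹ := fun x y z w =>
    s3 _ _ _
  have g1 : ∀ x y z w : G, ⁅⁅⁅x, y⁆, z⁆, w⁆ = ⁅⁅z, w⁆, ⁅x, y⁆⁆ := fun x y z w => cyc _ _ _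
  have sym : ⁅⁅⁅x, y⁆, z⁆, w⁆ = ⁅⁅⁅z, w⁆, x⁆, y⁆ := by
    rw [t23 x y z w, t12 x z y w, t34 z x y w, t23 z x w y]
    simp
  have anti : ⁅⁅⁅x, y⁆, z⁆, w⁆ = ⁅⁅⁅z, w⁆, x⁆, y⁆⁻¹ := by
    rw [g1 x y z w, g1 z w x y, commutatorElement_inv]
  rw [← sym] at anti
  have h3 := h ⁅⁅⁅x, y⁆, z⁆, w⁆
  rw [pow_three] at h3
  generalize ⁅⁅⁅x, y⁆, z⁆, w⁆ = f at *
  have : f * f = 1 := by nth_rewrite 1 [anti]; simp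
  rw [this] at h3
  simpa using h3


lemma T_mem (h : ∀ g : G, g ^ 3 = 1) (x y z : G) : ⁅⁅x, y⁆, z⁆ ∈ Subgroup.center G := by
  rw [Subgroup.mem_center_iff]
  intro g
  have := class3 h x y z g
  rw [commutatorElement_eq_one_iff_commute] at this
  exact this.eq.symm

/-- The triple commutator with two entries fixed, as a homomorphism to the center. -/
def T (h : ∀ g : G, g ^ 3 = 1) (x y : G) : G →* Subgroup.center G where
  toFun z := ⟨⁅⁅x, y⁆, z⁆, T_mem h x y z⟩
  map_one' := by ext; simp
  map_mul' z w := by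
    ext
    change ⁅⁅x, y⁆, z * w⁆ = ⁅⁅x, y⁆, z⁆ * ⁅⁅x, y⁆, w⁆
    have := Subgroup.mem_center_iff.mp (T_mem h x y w) z
    have e : ⁅⁅x, y⁆, z * w⁆ = ⁅⁅x, y⁆, z⁆ * (z * ⁅⁅x, y⁆, w⁆ * z⁻¹) := by
      simp only [commutatorElement_def ⁅x, y⁆]; group
    rw [e, this]; group

lemma T_val (h : ∀ g : G, g ^ 3 = 1) (x y z : G) : (T h x y z : G) = ⁅⁅x, y⁆, z⁆ := rfl

lemma T_flip (h : ∀ g : G, g ^ 3 = 1) (x y z : G) : T h x y z = (T h y x z)⁻¹ :=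
  Subtype.ext (eq_inv_of_mul_eq_one_left (comm_flip h x y z))

lemma T_swap (h : ∀ g : G, g ^ 3 = 1) (x y z : G) : T h x y z = (T h x z y)⁻¹ :=
  Subtype.ext (eq_inv_of_mul_eq_one_left (comm_swap h x y z))

lemma T_cyc (h : ∀ g : G, g ^ 3 = 1) (x y z : G) : T h x y z = T h y z x := by
  rw [T_flip, T_swap, inv_inv]

lemma T_diag (h : ∀ g : G, g ^ 3 = 1) (x z : G) : T h x x z = 1 := by
  ext; rw [T_val]; simp

lemma T_diag' (h : ∀ g : G, g ^ 3 = 1) (x z : G) : T h x z x = 1 := by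
  rw [T_swap, T_diag, inv_one]

lemma T_diag'' (h : ∀ g : G, g ^ 3 = 1) (x z : G) : T h z x x = 1 := by
  rw [T_cyc, T_diag]

lemma F_eq (a b c d : G) : d * c * b * a * (d⁻¹ * c⁻¹ * b⁻¹ * a⁻¹) =
    ⁅d, c * b * a⁆ * ⁅c, b * a⁆ * ⁅b, a⁆ := by
  simp only [commutatorElement_def]; group

lemma F_T (h : ∀ g : G, g ^ 3 = 1) (a b c d z : G)
    (hF : ⁅d, c * b * a⁆ * ⁅c, b * a⁆ * ⁅b, a⁆ ∈ Subgroup.center G) :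
    T h z d c * T h z d b * T h z d a * (T h z c b * T h z c a) * T h z b a = 1 := by
  have e1 : ∀ k l : G, ⁅l, z⁆ ∈ Subgroup.center G → ⁅k * l, z⁆ = ⁅k, z⁆ * ⁅l, z⁆ := by
    intro k l hl
    have e : ⁅k * l, z⁆ = (k * ⁅l, z⁆ * k⁻¹) * ⁅k, z⁆ := by
      simp only [commutatorElement_def]; group
    rw [e, Subgroup.mem_center_iff.mp hl k, Subgroup.mem_center_iff.mp hl ⁅k, z⁆]
    group
  have e2 : ⁅⁅d, c * b * a⁆ * ⁅c, b * a⁆ * ⁅b, a⁆, z⁆ = 1 := by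
    rw [commutatorElement_eq_one_iff_commute]
    exact (Subgroup.mem_center_iff.mp hF z).symm
  rw [e1 _ _ (T_mem h _ _ _), e1 _ _ (T_mem h _ _ _)] at e2
  have e3 : T h d (c * b * a) z * T h c (b * a) z * T h b a z = 1 := Subtype.ext e2
  rw [← T_cyc h z d, ← T_cyc h z c, ← T_cyc h z b] at e3
  simpa only [map_mul] using e3

lemma solve {A : Type*} [AddCommGroup A] (t : Fin 4 → Fin 4 → Fin 4 → A)
    (tf : ∀ i j k, t i j k = - t j i k) (ts : ∀ i j k, t i j k = - t i k j)
    (d1 : ∀ i k, t i i k = 0) (d2 : ∀ i k, t i k i = 0) (d3 : ∀ i k, t k i i = 0)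
    (E : ∀ i, t i 3 2 + t i 3 1 + t i 3 0 + (t i 2 1 + t i 2 0) + t i 1 0 = 0)
    (i j k : Fin 4) : t i j k = 0 := by
  have q0 := E 0
  have q1 := E 1
  have q2 := E 2
  have q3 := E 3
  simp only [d1, d2] at q0 q1 q2 q3
  have s1 : t 0 1 2 = 0 := by grind
  have s2 : t 0 1 3 = 0 := by grind
  have s3 : t 0 2 3 = 0 := by grind
  have s4 : t 1 2 3 = 0 := by grind
  clear q0 q1 q2 q3 E
  fin_cases i <;> fin_cases j <;> fin_cases k <;>
    simp only [d1, d2, d3, Fin.zero_eta, Fin.mk_one, Fin.reduceFinMk] <;> grind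

lemma T_all (h : ∀ g : G, g ^ 3 = 1) (f : Fin 4 → G)
    (hF : ⁅f 3, f 2 * f 1 * f 0⁆ * ⁅f 2, f 1 * f 0⁆ * ⁅f 1, f 0⁆ ∈ Subgroup.center G)
    (i j k : Fin 4) : T h (f i) (f j) (f k) = 1 := by
  let : CommGroup (Subgroup.center G) :=
    { (inferInstance : Group (Subgroup.center G)) with
      mul_comm := fun a b => Subtype.ext (Subgroup.mem_center_iff.mp b.2 a) }
  exact solve (A := Additive (Subgroup.center G))
    (fun i j k => Additive.ofMul (T h (f i) (f j) (f k)))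
    (fun i j k => T_flip h _ _ _) (fun i j k => T_swap h _ _ _)
    (fun i k => T_diag h _ _) (fun i k => T_diag' h _ _) (fun i k => T_diag'' h _ _)
    (fun i => F_T h (f 0) (f 1) (f 2) (f 3) (f i) hF) i j k

lemma T_triv (h : ∀ g : G, g ^ 3 = 1) (f : Fin 4 → G)
    (hf : Subgroup.closure (Set.range f) = ⊤)
    (hF : ⁅f 3, f 2 * f 1 * f 0⁆ * ⁅f 2, f 1 * f 0⁆ * ⁅f 1, f 0⁆ ∈ Subgroup.center G) (x y z : G) :
    ⁅⁅x, y⁆, z⁆ = 1 := by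
  have step : ∀ p q, (∀ i, T h p q (f i) = 1) → ∀ z, T h p q z = 1 := by
    intro p q hpq z
    have : T h p q = 1 := MonoidHom.eq_of_eqOn_dense hf (by rintro _ ⟨i, rfl⟩; exact hpq i)
    rw [this]; rfl
  have a1 : ∀ i j z, T h (f i) (f j) z = 1 := fun i j => step _ _ fun k => T_all h f hF i j k
  have a2 : ∀ i y z, T h (f i) y z = 1 := fun i y => step _ _ fun k => by
    rw [T_swap, a1, inv_one]
  have a3 : ∀ x y z, T h x y z = 1 := fun x y => step _ _ fun k => by
    rw [← T_cyc, a2]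
  exact congrArg Subtype.val (a3 x y z)

/-- Centrality of the second half of the relator from the relations `P i = 1`. -/
lemma central_of_P (X : Fin 4 → G) (hX : Subgroup.closure (Set.range X) = ⊤) (u v : G)
    (hu : u = (X 3)⁻¹ * X 2 * (X 1)⁻¹ * X 0)
    (hP : ∀ i, X i * (v * u) * (X i)⁻¹ = u * v) : u * v ∈ Subgroup.center G := by
  have c1 : ∀ i j, Commute ((X i)⁻¹ * X j) (v * u) := by
    intro i j
    have e : X j * (v * u) * (X j)⁻¹ = X i * (v * u) * (X i)⁻¹ := by rw [hP, hP]
    have : X j * (v * u) = X i * (v * u) * (X i)⁻¹ * X j := by rw [← e]; group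
    calc (X i)⁻¹ * X j * (v * u) = (X i)⁻¹ * (X j * (v * u)) := by group
      _ = _ := by rw [this]; group
  have c2 : Commute u (v * u) := by
    have := (c1 3 2).mul_left (c1 1 0)
    have e : u = (X 3)⁻¹ * X 2 * ((X 1)⁻¹ * X 0) := by rw [hu]; group
    rwa [← e] at this
  have e : v * u = u * v := by
    have := c2.eq
    calc v * u = u⁻¹ * (u * (v * u)) := by group
      _ = u⁻¹ * (u * v * u) := by group
      _ = v * u := by group
      _ = (v * u * u) * u⁻¹ := by group
      _ = u * v := by rw [← this]; group
  rw [Subgroup.mem_center_iff]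
  have hle : Subgroup.closure (Set.range X) ≤ Subgroup.centralizer {u * v} := by
    rw [Subgroup.closure_le]
    rintro _ ⟨i, rfl⟩
    rw [SetLike.mem_coe, Subgroup.mem_centralizer_singleton_iff]
    have := hP i
    rw [e] at this
    exact mul_inv_eq_iff_eq_mul.mp this
  intro g
  have hg : g ∈ Subgroup.centralizer {u * v} := hle (hX ▸ Subgroup.mem_top g)
  rw [Subgroup.mem_centralizer_singleton_iff] at hg
  exact hg

end Exp3

lemma B43_exp (g : B43) : g ^ 3 = 1 := by
  obtain ⟨w, rfl⟩ := QuotientGroup.mk_surjective g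
  rw [← QuotientGroup.mk_pow, QuotientGroup.eq_one_iff]
  exact Subgroup.subset_normalClosure ⟨w, rfl⟩

lemma B43_closure : Subgroup.closure (Set.range x) = ⊤ := by
  have : Set.range x = QuotientGroup.mk' (Subgroup.normalClosure
      {w : FreeGroup (Fin 4) | ∃ v, w = v ^ 3}) '' Set.range FreeGroup.of := by
    rw [← Set.range_comp]; rfl
  rw [this, ← MonoidHom.map_closure, FreeGroup.closure_range_of,
    Subgroup.map_top_of_surjective _ (QuotientGroup.mk'_surjective _)]

lemma P_eq (i : Fin 4) : P i =
    (((x 3)⁻¹ * x 2 * (x 1)⁻¹ * x 0) * (x 3 * (x 2)⁻¹ * x 1 * (x 0)⁻¹))⁻¹ * (x i *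
      ((x 3 * (x 2)⁻¹ * x 1 * (x 0)⁻¹) * ((x 3)⁻¹ * x 2 * (x 1)⁻¹ * x 0)) * (x i)⁻¹) := by
  rw [P]; group

lemma le1 : Subgroup.normalClosure ({P 0, P 1, P 2, P 3} : Set B43) ≤
    (⊤ : Subgroup B43).lowerCentralSeries 2 := by
  set L := (⊤ : Subgroup B43).lowerCentralSeries 2 with hL
  have hn : L.Normal := inferInstance
  have hP : ∀ i, P i ∈ L := by
    intro i
    have hc : ∀ p q : B43, (QuotientGroup.mk ⁅p, q⁆ : B43 ⧸ L) ∈ Subgroup.center (B43 ⧸ L) := by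
      intro p q
      rw [Subgroup.mem_center_iff]
      intro g
      obtain ⟨g, rfl⟩ := QuotientGroup.mk_surjective g
      have : ⁅⁅p, q⁆, g⁆ ∈ L := Subgroup.commutator_mem_commutator
        (Subgroup.commutator_mem_commutator (Subgroup.mem_top p) (Subgroup.mem_top q))
        (Subgroup.mem_top g)
      rw [← QuotientGroup.eq_one_iff] at this
      have h2 : ⁅(QuotientGroup.mk ⁅p, q⁆ : B43 ⧸ L), (QuotientGroup.mk g : B43 ⧸ L)⁆ = 1 := this
      rw [commutatorElement_eq_one_iff_commute] at h2
      exact h2.eq.symm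
    rw [P_eq]
    set u := (x 3)⁻¹ * x 2 * (x 1)⁻¹ * x 0 with hu
    set v := x 3 * (x 2)⁻¹ * x 1 * (x 0)⁻¹ with hv
    have hF := F_eq (x 0) (x 1)⁻¹ (x 2) (x 3)⁻¹
    rw [inv_inv, inv_inv, ← hu, ← hv] at hF
    have hcen : (QuotientGroup.mk (u * v) : B43 ⧸ L) ∈ Subgroup.center (B43 ⧸ L) := by
      rw [hF]
      exact mul_mem (mul_mem (hc _ _) (hc _ _)) (hc _ _)
    rw [← QuotientGroup.eq_one_iff]
    have hc2 : ∀ g : B43 ⧸ L, g * (QuotientGroup.mk (u * v)) = QuotientGroup.mk (u * v) * g :=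
      Subgroup.mem_center_iff.mp hcen
    have e : (QuotientGroup.mk (v * u) : B43 ⧸ L) = QuotientGroup.mk (u * v) := by
      have := hc2 (QuotientGroup.mk u⁻¹)
      calc (QuotientGroup.mk (v * u) : B43 ⧸ L) =
          QuotientGroup.mk u⁻¹ * QuotientGroup.mk (u * v) * QuotientGroup.mk u := by
            rw [← QuotientGroup.mk_mul, ← QuotientGroup.mk_mul]; congr 1; group
        _ = _ := by
            rw [this, ← QuotientGroup.mk_mul, ← QuotientGroup.mk_mul]; congr 1; group
    rw [QuotientGroup.mk_mul, QuotientGroup.mk_mul, QuotientGroup.mk_mul, e, hc2,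
      QuotientGroup.mk_inv, QuotientGroup.mk_inv]
    group
  apply Subgroup.normalClosure_le_normal
  rintro _ (rfl | rfl | rfl | rfl) <;> exact hP _

lemma le2 : (⊤ : Subgroup B43).lowerCentralSeries 2 ≤
    Subgroup.normalClosure ({P 0, P 1, P 2, P 3} : Set B43) := by
  set N := Subgroup.normalClosure ({P 0, P 1, P 2, P 3} : Set B43) with hN
  have hP : ∀ i, P i ∈ N := by
    intro i
    apply Subgroup.subset_normalClosure
    fin_cases i <;> simp
  let π : B43 →* B43 ⧸ N := QuotientGroup.mk' N
  have hsurj : Function.Surjective π := QuotientGroup.mk'_surjective N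
  let X : Fin 4 → B43 ⧸ N := fun i => π (x i)
  have hX : Subgroup.closure (Set.range X) = ⊤ := by
    have : Set.range X = π '' Set.range x := by rw [← Set.range_comp]; rfl
    rw [this, ← MonoidHom.map_closure, B43_closure, Subgroup.map_top_of_surjective _ hsurj]
  have hexp : ∀ g : B43 ⧸ N, g ^ 3 = 1 := by
    intro g
    obtain ⟨g, rfl⟩ := hsurj g
    rw [← map_pow, B43_exp, map_one]
  have hcen := central_of_P X hX ((X 3)⁻¹ * X 2 * (X 1)⁻¹ * X 0)
    (X 3 * (X 2)⁻¹ * X 1 * (X 0)⁻¹) rfl (by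
      intro i
      have h1 : π (P i) = 1 := (QuotientGroup.eq_one_iff _).mpr (hP i)
      have h1 := (congrArg π (P_eq i)).symm.trans h1
      rw [map_mul, map_inv, inv_mul_eq_one] at h1
      simp only [map_mul, map_inv] at h1
      exact h1.symm)
  have hF := F_eq (X 0) (X 1)⁻¹ (X 2) (X 3)⁻¹
  rw [inv_inv, inv_inv] at hF
  rw [hF] at hcen
  let f : Fin 4 → B43 ⧸ N := ![X 0, (X 1)⁻¹, X 2, (X 3)⁻¹]
  have hf : Subgroup.closure (Set.range f) = ⊤ := by
    rw [eq_top_iff, ← hX, Subgroup.closure_le]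
    have m : ∀ i, f i ∈ Subgroup.closure (Set.range f) := fun i =>
      Subgroup.subset_closure ⟨i, rfl⟩
    rintro _ ⟨i, rfl⟩
    fin_cases i
    · exact m 0
    · exact inv_mem_iff.mp (m 1)
    · exact m 2
    · exact inv_mem_iff.mp (m 3)
  have hT := T_triv hexp f hf hcen
  have h1 : (⊤ : Subgroup B43).lowerCentralSeries 1 ≤ (Subgroup.center (B43 ⧸ N)).comap π := by
    change ⁅(⊤ : Subgroup B43), (⊤ : Subgroup B43)⁆ ≤ _
    rw [Subgroup.commutator_le]
    intro p _ q _
    rw [Subgroup.mem_comap, Subgroup.mem_center_iff]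
    intro g
    have := hT (π p) (π q) g
    rw [commutatorElement_eq_one_iff_commute] at this
    rw [map_commutatorElement]
    exact this.eq.symm
  change ⁅(⊤ : Subgroup B43).lowerCentralSeries 1, (⊤ : Subgroup B43)⁆ ≤ _
  rw [Subgroup.commutator_le]
  intro p hp q _
  rw [← QuotientGroup.eq_one_iff]
  change π ⁅p, q⁆ = 1
  rw [map_commutatorElement, commutatorElement_eq_one_iff_commute]
  exact (Subgroup.mem_center_iff.mp (h1 hp) (π q)).symm

end Burn

open Burn

/-- The quotient of `B(4,3)` by the normal closure of `{P₁, P₂, P₃, P₄}` is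
isomorphic to the quotient of `B(4,3)` by the third term `γ₃(B(4,3))` of its
lower central series (Mathlib: `lowerCentralSeries B43 2`). -/
theorem quotient_P_iso_quotient_gamma3 :
    Nonempty
      ((B43 ⧸ Subgroup.normalClosure ({P 0, P 1, P 2, P 3} : Set B43)) ≃*
        (B43 ⧸ (⊤ : Subgroup B43).lowerCentralSeries 2)) := by
  exact ⟨QuotientGroup.quotientMulEquivOfEq (le_antisymm le1 le2)⟩
end
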